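/- arXiv:1910.02781 — 4 statements merged into one kernel-verified Lean document; each statement's English description precedes it below -/
import Mathlib

section
/- For x ≥ 3, S_4(x) = (log log x + c_1)^4 − π² (log log x + c_1)^2 + 8ζ(3)(log log x + c_1) + π⁴/60 + O((log log x)^3 / log x), where ζ(3) is the value of the Riemann zeta function at 3. -/
/-!
Write `F k u = S_k(e^u)`, so that `F (k + 1)` is the convolution of `F k` with the measure
`∑_p (1/p) δ_{log p}`, and let `G k` be the primitive of `F k`. The main term of `F k` is a
polynomial in `log u`; it is found up to one constant by real-variable means, and the constant is
found from the behaviour of `ζ(1 + s)` as `s → 0+`.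

*Expansion up to a constant.* Weighting each tuple by the logarithm of its product and using
symmetry gives `u F_{k+1}(u) - G_{k+1}(u) = (k + 1) Y_k(u)` (`moment`), where `Y_k` carries the
weight `log p₀` on one extra prime `p₀`. Mertens' first theorem says that `Y_0(u) = u + O(1)`;
convolving, `Y_k = G_k + O(F_k)`. Hence the derivative of `G_{k+1}(u)/u`, which is
`(k + 1) Y_k(u)/u²`, is known from the expansion of `G_k(u)/u` up to `O((log u)^k/u²)`. Integrating
yields expansions of `G_{k+1}(u)/u` and of `F_{k+1}(u)` with error `O((log u)^k/u)`, up to one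
constant of integration (`step`). For `k + 1 = 4` this is the error term `(log log x)^3 / log x`.

*The constant.* The Laplace transform of `F k` is `W(s)^k / s` with `W(s) = ∑_p p^{-1-s}`
(`laplace`). If `F_k(u) = P(log u) + O(u^{-1/2})`, then
`W(s)^k = ∫₀^∞ e^{-v} P(log v - log s) dv + O(s^{1/2})` (`abel`). The integral is a
polynomial in `log s` whose coefficients involve the moments of `log v + γ` under `e^{-v} dv`; they
are read off from the Taylor expansion of `e^{γz} Γ(1 + z)` (`N_values`), which is where `π²`, `ζ(3)`
and `π⁴` come from. On the other hand the Euler product and the simple pole of `ζ` give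
`W(s) = log(1/s) + c₁ - γ + o(1)` (`W_tendsto`). This settles `k = 1`, and the case `k = 1` of `abel`
then improves `o(1)` to `O(s^{1/2})`, enough to compare `W(s)^k` with
`(log(1/s) + c₁ - γ)^k` for all `k ≤ 4`. The lemma `chain` combines the two halves.
-/

open Real Finset

/-- Mertens' constant `c₁ = γ - ∑ₚ (log(1/(1-1/p)) - 1/p)`. -/
noncomputable def mertensC1 : ℝ :=
  Real.eulerMascheroniConstant -
    ∑' p : Nat.Primes, (Real.log (1 / (1 - 1 / (p : ℝ))) - 1 / (p : ℝ))

/-- `S_k(x) = ∑_{p₁⋯p_k ≤ x} 1/(p₁⋯p_k)`, the sum over `k`-tuples of primes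
with product at most `x`. -/
noncomputable def mertensS (k : ℕ) (x : ℝ) : ℝ :=
  ∑' v : Fin k → Nat.Primes,
    if ((∏ i, ((v i : ℕ) : ℝ)) ≤ x) then 1 / ∏ i, ((v i : ℕ) : ℝ) else 0

/-! ### Convolution over the primes -/

namespace MertensAux

open Filter Topology MeasureTheory Set intervalIntegral

/-- The operator `h ↦ ∑_{p ≤ e^u} c(p) h(u - log p)`: convolution with the measure
`∑_p c(p) δ_{log p}`, for functions `h` vanishing on the negative half-line. -/
noncomputable def op (c : ℕ → ℝ) (h : ℝ → ℝ) (u : ℝ) : ℝ :=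
  ∑ p ∈ Nat.primesLE ⌊exp u⌋₊, c p * h (u - log p)

/-- The weight `1/p`. -/
noncomputable def wt (p : ℕ) : ℝ := 1 / p

/-- The weight `(log p)/p`. -/
noncomputable def wtlog (p : ℕ) : ℝ := 1 / p * log p

/-- `F k u = S_k(e^u)`, defined by convolution; `F 0` is the indicator of `[0, ∞)`. -/
noncomputable def F : ℕ → ℝ → ℝ
  | 0 => fun u => if 0 ≤ u then 1 else 0
  | k + 1 => op wt (F k)

/-- `Y k u = ∑_{p₀⋯p_k ≤ e^u} (log p₀)/(p₀⋯p_k)`. -/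
noncomputable def Y : ℕ → ℝ → ℝ
  | 0 => op wtlog (F 0)
  | k + 1 => op wt (Y k)

/-- The primitive of `F k`. -/
noncomputable def G (k : ℕ) (u : ℝ) : ℝ := ∫ t in (0 : ℝ)..u, F k t

/-- The cut-off `p ≤ e^u` may be enlarged, because `h` vanishes on the negative half-line. -/
lemma op_eq {c : ℕ → ℝ} {h : ℝ → ℝ} (hh : ∀ u < 0, h u = 0) {u : ℝ} {N : ℕ}
    (hN : ⌊exp u⌋₊ ≤ N) : op c h u = ∑ p ∈ Nat.primesLE N, c p * h (u - log p) := by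
  refine Finset.sum_subset (Nat.primesLE_mono hN) fun p hp hp' => ?_
  have hpp := Nat.prime_of_mem_primesLE hp
  have h1 : ⌊exp u⌋₊ < p := by
    by_contra hcon
    exact hp' (Nat.mem_primesLE.2 ⟨not_lt.1 hcon, hpp⟩)
  have h2 : exp u < p := (Nat.floor_lt (exp_pos u).le).1 h1
  have h3 : u < log p := (lt_log_iff_exp_lt (by exact_mod_cast hpp.pos)).2 h2
  rw [hh _ (by linarith), mul_zero]

lemma op_neg (c : ℕ → ℝ) (h : ℝ → ℝ) : ∀ u < 0, op c h u = 0 := by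
  intro u hu
  have : ⌊exp u⌋₊ = 0 := Nat.floor_eq_zero.2 (exp_lt_one_iff.2 hu)
  simp [op, this]

lemma op_comm (c d : ℕ → ℝ) {h : ℝ → ℝ} (hh : ∀ u < 0, h u = 0) :
    op c (op d h) = op d (op c h) := by
  funext u
  have key : ∀ (c d : ℕ → ℝ), op c (op d h) u = ∑ p ∈ Nat.primesLE ⌊exp u⌋₊,
      ∑ q ∈ Nat.primesLE ⌊exp u⌋₊, c p * d q * h (u - log p - log q) := by
    intro c d
    refine Finset.sum_congr rfl fun p hp => ?_
    rw [op_eq hh (N := ⌊exp u⌋₊), Finset.mul_sum]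
    · simp only [mul_assoc]
    · refine Nat.floor_le_floor (exp_le_exp.2 ?_)
      have : 0 ≤ log p := log_natCast_nonneg p
      linarith
  rw [key, key, Finset.sum_comm]
  refine Finset.sum_congr rfl fun p hp => Finset.sum_congr rfl fun q hq => ?_
  rw [mul_comm (c q), sub_right_comm]

lemma op_mono {c : ℕ → ℝ} (hc : ∀ p, 0 ≤ c p) {h g : ℝ → ℝ} (hg : ∀ u, h u ≤ g u) (u : ℝ) :
    op c h u ≤ op c g u :=
  Finset.sum_le_sum fun p _ => mul_le_mul_of_nonneg_left (hg _) (hc p)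

lemma op_sub (c : ℕ → ℝ) (h g : ℝ → ℝ) (u : ℝ) :
    op c (fun t => h t - g t) u = op c h u - op c g u := by
  simp [op, mul_sub, Finset.sum_sub_distrib]

lemma op_const_mul (c : ℕ → ℝ) (a : ℝ) (h : ℝ → ℝ) (u : ℝ) :
    op c (fun t => a * h t) u = a * op c h u := by
  simp only [op, Finset.mul_sum]
  exact Finset.sum_congr rfl fun p _ => by ring

lemma wt_nonneg (p : ℕ) : 0 ≤ wt p := by unfold wt; positivity

lemma F_neg (k : ℕ) : ∀ u < 0, F k u = 0 := by
  cases k with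
  | zero => intro u hu; simp [F, hu]
  | succ k => exact op_neg _ _

lemma Y_neg (k : ℕ) : ∀ u < 0, Y k u = 0 := by
  cases k with
  | zero => exact op_neg _ _
  | succ k => exact op_neg _ _

lemma F_nonneg (k : ℕ) (u : ℝ) : 0 ≤ F k u := by
  induction k generalizing u with
  | zero => simp only [F]; split_ifs <;> norm_num
  | succ k ih =>
    change 0 ≤ op wt (F k) u
    exact Finset.sum_nonneg fun p _ => mul_nonneg (wt_nonneg p) (ih _)

lemma F_mono (k : ℕ) : Monotone (F k) := by
  induction k with
  | zero =>
    intro u v huv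
    simp only [F]
    split_ifs <;> linarith
  | succ k ih =>
    intro u v huv
    change op wt (F k) u ≤ op wt (F k) v
    rw [op_eq (F_neg k) (Nat.floor_le_floor (exp_le_exp.2 huv)), op]
    exact Finset.sum_le_sum fun p _ => mul_le_mul_of_nonneg_left (ih (by linarith)) (wt_nonneg p)

/-- Right continuity: on a short interval to the right of `u` the range of summation is constant. -/
lemma F_right (k : ℕ) (u : ℝ) : ContinuousWithinAt (F k) (Ici u) u := by
  induction k generalizing u with
  | zero =>
    rcases lt_or_ge u 0 with h | h
    · have : F 0 =ᶠ[𝓝 u] fun _ => 0 := by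
        filter_upwards [Iio_mem_nhds h] with t ht using F_neg 0 t ht
      exact (continuousAt_const.congr this.symm).continuousWithinAt
    · refine (continuousWithinAt_const (b := (1 : ℝ))).congr (fun t ht => ?_) ?_
      · simp [F, h.trans ht]
      · simp [F, h]
  | succ k ih =>
    have h1 : ContinuousWithinAt
        (fun t => ∑ p ∈ Nat.primesLE ⌊exp (u + 1)⌋₊, wt p * F k (t - log p)) (Ici u) u := by
      refine tendsto_finsetSum _ fun p _ => ContinuousWithinAt.mul continuousWithinAt_const ?_
      refine ContinuousWithinAt.comp (t := Ici (u - log p)) (ih (u - log p))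
        (by fun_prop) fun t ht => ?_
      exact sub_le_sub_right (mem_Ici.1 ht) _
    refine h1.congr_of_eventuallyEq ?_ ?_
    · have : Iio (u + 1) ∈ 𝓝[≥] u := mem_nhdsWithin_of_mem_nhds (Iio_mem_nhds (by linarith))
      filter_upwards [this] with t ht
      exact op_eq (F_neg k) (Nat.floor_le_floor (exp_le_exp.2 (le_of_lt ht)))
    · exact op_eq (F_neg k) (Nat.floor_le_floor (exp_le_exp.2 (by linarith)))

lemma F_int (k : ℕ) (a b : ℝ) : IntervalIntegrable (F k) volume a b :=
  (F_mono k).intervalIntegrable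

lemma int_neg {h : ℝ → ℝ} (hh : ∀ u < 0, h u = 0) {u : ℝ} (hu : u ≤ 0) :
    ∫ t in (0 : ℝ)..u, h t = 0 := by
  rw [integral_symm, integral_of_le hu, integral_Ioc_eq_integral_Ioo,
    setIntegral_congr_fun (g := fun _ => 0) measurableSet_Ioo fun t ht => hh t ht.2]
  simp

lemma int_shift {h : ℝ → ℝ} (hh : ∀ u < 0, h u = 0)
    (hi : ∀ a b, IntervalIntegrable h volume a b) {a : ℝ} (ha : 0 ≤ a) (u : ℝ) :
    ∫ t in (0 : ℝ)..u, h (t - a) = ∫ t in (0 : ℝ)..(u - a), h t := by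
  rw [integral_comp_sub_right, ← integral_add_adjacent_intervals (hi (0 - a) 0) (hi 0 (u - a)),
    integral_symm, int_neg hh (by linarith)]
  simp

/-- Convolution commutes with taking primitives. -/
lemma int_op {h : ℝ → ℝ} (hh : ∀ u < 0, h u = 0)
    (hi : ∀ a b, IntervalIntegrable h volume a b) (c : ℕ → ℝ) (u : ℝ) :
    ∫ t in (0 : ℝ)..u, op c h t = op c (fun v => ∫ t in (0 : ℝ)..v, h t) u := by
  rcases le_total u 0 with hu | hu
  · rcases hu.lt_or_eq with hu' | rfl
    · rw [int_neg (op_neg c h) hu, op_neg _ _ _ hu']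
    · rw [int_neg (op_neg c h) le_rfl]
      simp [op]
  · have h1 : ∫ t in (0 : ℝ)..u, op c h t = ∫ t in (0 : ℝ)..u,
        ∑ p ∈ Nat.primesLE ⌊exp u⌋₊, c p * h (t - log p) := by
      refine integral_congr fun t ht => ?_
      rw [uIcc_of_le hu] at ht
      exact op_eq hh (Nat.floor_le_floor (exp_le_exp.2 ht.2))
    rw [h1, intervalIntegral.integral_finsetSum]
    · refine Finset.sum_congr rfl fun p _ => ?_
      rw [intervalIntegral.integral_const_mul, int_shift hh hi (log_natCast_nonneg p)]
    · intro p _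
      refine IntervalIntegrable.const_mul ?_ _
      have := (hi (0 - log p) (u - log p)).comp_sub_right (log p)
      simpa using this

lemma G_succ (k : ℕ) (u : ℝ) : G (k + 1) u = op wt (G k) u :=
  int_op (F_neg k) (F_int k) wt u

/-- The weight `log p` may be put on any one of the primes of a tuple. -/
lemma wtlog_F (k : ℕ) : op wtlog (F k) = Y k := by
  induction k with
  | zero => rfl
  | succ k ih =>
    change op wtlog (op wt (F k)) = op wt (Y k)
    rw [op_comm _ _ (F_neg k), ih]

/-- Weighting a tuple `(p₀, …, p_k)` by `log (p₀⋯p_k)` amounts, by symmetry, to `k + 1` times the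
weight `log p₀`. The left side is `∫_{[0,u]} t dF(t)`, integrated by parts. -/
lemma moment (k : ℕ) (u : ℝ) : u * F (k + 1) u - G (k + 1) u = (k + 1) * Y k u := by
  have key : ∀ k u, u * F (k + 1) u - G (k + 1) u
      = op wt (fun t => t * F k t - G k t) u + Y k u := by
    intro k u
    rw [G_succ, ← wtlog_F]
    simp only [F, op, wtlog, wt]
    rw [Finset.mul_sum, ← Finset.sum_sub_distrib, ← Finset.sum_add_distrib]
    exact Finset.sum_congr rfl fun p _ => by ring
  induction k generalizing u with
  | zero =>
    rw [key]
    have : (fun t => t * F 0 t - G 0 t) = fun _ => 0 := by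
      funext t
      rcases le_total t 0 with ht | ht
      · have h1 : G 0 t = 0 := int_neg (F_neg 0) ht
        rcases ht.lt_or_eq with ht' | rfl
        · rw [h1, F_neg 0 t ht']; ring
        · rw [h1]; ring
      · have h1 : G 0 t = ∫ s in (0 : ℝ)..t, 1 := by
          refine integral_congr fun s hs => ?_
          rw [uIcc_of_le ht] at hs
          simp [F, hs.1]
        rw [h1]
        simp [F, ht]
    rw [this]
    simp [op]
  | succ k ih =>
    rw [key]
    have : (fun t => t * F (k + 1) t - G (k + 1) t) = fun t => ((k : ℝ) + 1) * Y k t :=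
      funext ih
    rw [this, op_const_mul]
    change _ + Y (k + 1) u = _ * Y (k + 1) u
    change _ * Y (k + 1) u + Y (k + 1) u = _ * Y (k + 1) u
    push_cast; ring

lemma G_zero {u : ℝ} (hu : 0 ≤ u) : G 0 u = u := by
  have h1 : G 0 u = ∫ s in (0 : ℝ)..u, 1 := by
    refine integral_congr fun s hs => ?_
    rw [uIcc_of_le hu] at hs
    simp [F, hs.1]
  rw [h1]; simp

lemma G_neg (k : ℕ) {u : ℝ} (hu : u ≤ 0) : G k u = 0 := int_neg (F_neg k) hu

/-- The case `k = 0` (Mertens' first theorem) convolved `k` times with a positive measure. -/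
lemma Y_sub_G {C : ℝ} (hC : ∀ u, 0 ≤ u → |Y 0 u - u| ≤ C) (k : ℕ) (u : ℝ) :
    |Y k u - G k u| ≤ C * F k u := by
  induction k generalizing u with
  | zero =>
    rcases lt_or_ge u 0 with hu | hu
    · rw [Y_neg 0 u hu, G_neg 0 hu.le, F_neg 0 u hu]; simp
    · rw [G_zero hu]; simpa [F, hu] using hC u hu
  | succ k ih =>
    rw [G_succ]
    change |op wt (Y k) u - op wt (G k) u| ≤ C * op wt (F k) u
    rw [← op_sub, ← op_const_mul]
    rw [abs_le]
    constructor
    · rw [neg_le_iff_add_nonneg]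
      have : op wt (fun t => 0 * F 0 t) u ≤
          op wt (fun t => (Y k t - G k t) - (-1) * (C * F k t)) u :=
        op_mono wt_nonneg (fun t => by have := (abs_le.1 (ih t)).1; linarith) u
      rw [op_const_mul, op_sub, op_const_mul] at this
      linarith
    · exact op_mono wt_nonneg (fun t => (abs_le.1 (ih t)).2) u

/-- `G k u / u` is recovered from its right derivative `(u F - G)/u²`, which `moment` evaluates. -/
lemma G_div (k : ℕ) {u : ℝ} (hu : 1 ≤ u) :
    G (k + 1) u / u = G (k + 1) 1 + ∫ t in (1 : ℝ)..u, (k + 1) * Y k t / t ^ 2 := by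
  have hcont : Continuous (G (k + 1)) :=
    continuous_primitive (fun a b => F_int (k + 1) a b) 0
  have hpos : ∀ t ∈ uIcc 1 u, t ≠ 0 := by
    intro t ht
    rw [uIcc_of_le hu] at ht
    have := ht.1
    positivity
  have h2 : ∀ t, (k + 1) * Y k t / t ^ 2 = (t * F (k + 1) t - G (k + 1) t) * (t ^ 2)⁻¹ := by
    intro t; rw [moment]; rfl
  have := integral_eq_sub_of_hasDeriv_right (f := fun t => G (k + 1) t / t)
    (f' := fun t => (k + 1) * Y k t / t ^ 2) (a := 1) (b := u) ?_ ?_ ?_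
  · rw [this]; simp
  · exact hcont.continuousOn.div continuousOn_id hpos
  · intro t ht
    rw [min_eq_left hu, max_eq_right hu] at ht
    have ht0 : t ≠ 0 := by have := ht.1; positivity
    have hG : HasDerivWithinAt (G (k + 1)) (F (k + 1) t) (Ioi t) t := by
      refine (integral_hasDerivWithinAt_right (s := Ici t) (t := Ioi t) (F_int (k + 1) 0 t)
        ((F_mono (k + 1)).measurable.stronglyMeasurable.stronglyMeasurableAtFilter)
        ((F_right (k + 1) t).mono Ioi_subset_Ici_self)).mono Ioi_subset_Ici_self
    refine (hG.div (hasDerivWithinAt_id t (Ioi t)) ht0).congr_deriv ?_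
    rw [h2]
    simp only [id]
    rw [div_eq_mul_inv]; ring
  · simp_rw [h2]
    refine IntervalIntegrable.mul_continuousOn ?_ ?_
    · refine IntervalIntegrable.sub ?_ (hcont.intervalIntegrable _ _)
      exact (F_int (k + 1) 1 u).continuousOn_mul continuousOn_id
    · exact (continuousOn_pow 2).inv₀ fun t ht => pow_ne_zero 2 (hpos t ht)

end MertensAux

/-! ### Mertens' first theorem -/

namespace MertensAux

open Filter Topology MeasureTheory Set intervalIntegral

lemma log_factorial_eq (N : ℕ) :
    log (N.factorial : ℝ) =
      ∑ n ∈ Finset.Ioc 0 N, ArithmeticFunction.vonMangoldt n * ((N / n : ℕ) : ℝ) := by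
  have h := ArithmeticFunction.sum_Ioc_mul_zeta_eq_sum ArithmeticFunction.vonMangoldt N
  rw [ArithmeticFunction.vonMangoldt_mul_zeta] at h
  rw [← h]
  clear h
  induction N with
  | zero => simp
  | succ n ih =>
    rw [← Finset.insert_Ioc_right_eq_Ioc_add_one (Nat.zero_le n),
      Finset.sum_insert (by simp), ← ih, Nat.factorial_succ, Nat.cast_mul,
      log_mul (by positivity) (by positivity)]
    simp [ArithmeticFunction.log_apply]

/-- `∑_{n ≤ N} Λ(n)/n = log N + O(1)`, from `log N! = N log N + O(N)` and Chebyshev's bound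
`ψ(N) = O(N)`. -/
lemma sum_vonMangoldt_div {N : ℕ} (hN : 1 ≤ N) :
    |∑ n ∈ Finset.Ioc 0 N, ArithmeticFunction.vonMangoldt n / (n : ℝ) - log N| ≤ log 4 + 4 := by
  have hN0 : (0 : ℝ) < N := by exact_mod_cast hN
  have hfac := log_factorial_eq N
  have hpsi : ∑ n ∈ Finset.Ioc 0 N, ArithmeticFunction.vonMangoldt n ≤ (log 4 + 4) * N := by
    have := Chebyshev.psi_le_const_mul_self (x := (N : ℝ)) hN0.le
    rwa [Chebyshev.psi, Nat.floor_natCast] at this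
  set S := ∑ n ∈ Finset.Ioc 0 N, ArithmeticFunction.vonMangoldt n / (n : ℝ) with hS
  have h1 : log (N.factorial : ℝ) ≤ N * S := by
    rw [hfac, hS, Finset.mul_sum]
    refine Finset.sum_le_sum fun n _ => ?_
    calc _ ≤ ArithmeticFunction.vonMangoldt n * ((N : ℝ) / n) :=
          mul_le_mul_of_nonneg_left Nat.cast_div_le ArithmeticFunction.vonMangoldt_nonneg
      _ = _ := by ring
  have h2 : N * S - (log 4 + 4) * N ≤ log (N.factorial : ℝ) := by
    refine (sub_le_sub_left hpsi _).trans ?_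
    rw [hfac, hS, Finset.mul_sum, ← Finset.sum_sub_distrib]
    refine Finset.sum_le_sum fun n _ => ?_
    have : (N : ℝ) / n - 1 ≤ ((N / n : ℕ) : ℝ) := by
      rw [← Nat.floor_div_eq_div (K := ℝ)]
      exact (Nat.sub_one_lt_floor _).le
    calc _ = ArithmeticFunction.vonMangoldt n * ((N : ℝ) / n - 1) := by ring
      _ ≤ _ := mul_le_mul_of_nonneg_left this ArithmeticFunction.vonMangoldt_nonneg
  have h3 : log (N.factorial : ℝ) ≤ N * log N := by
    rw [← log_pow]
    exact log_le_log (by positivity) (by exact_mod_cast Nat.factorial_le_pow N)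
  have h4 : N * log N - N ≤ log (N.factorial : ℝ) := by
    have := Stirling.le_log_factorial_stirling (n := N) (by lia)
    have h5 : 0 ≤ log (N : ℝ) := log_natCast_nonneg N
    have h6 : 0 ≤ log (2 * π) := log_nonneg (by nlinarith [pi_gt_three])
    linarith
  have h7 : 0 ≤ log (4 : ℝ) := log_nonneg (by norm_num)
  rw [abs_le]
  constructor
  · have : (N : ℝ) * (log N - 1 - S) ≤ 0 := by linarith
    have := nonpos_of_mul_nonpos_right this hN0
    linarith
  · have : (N : ℝ) * (S - (log 4 + 4) - log N) ≤ 0 := by linarith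
    have := nonpos_of_mul_nonpos_right this hN0
    linarith

/-- Mertens' first theorem: `∑_{p ≤ e^u} (log p)/p = u + O(1)`. -/
lemma mertens_first : ∃ C, ∀ u, 0 ≤ u → |Y 0 u - u| ≤ C := by
  -- The proper prime powers contribute a convergent series; modulo `q = 1` the residue class
  -- imposes no condition.
  have hsum := ArithmeticFunction.vonMangoldt.summable_residueClass_non_primes_div (q := 1) 0
  have hres : ∀ n, ArithmeticFunction.vonMangoldt.residueClass (0 : ZMod 1) n
      = ArithmeticFunction.vonMangoldt n := by
    intro n
    simp only [ArithmeticFunction.vonMangoldt.residueClass, Set.indicator]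
    rw [if_pos]
    exact Subsingleton.elim _ _
  simp only [hres] at hsum
  set K := ∑' n : ℕ, (if n.Prime then 0 else ArithmeticFunction.vonMangoldt n) / (n : ℝ) with hK
  refine ⟨log 4 + 4 + K + log 2, fun u hu => ?_⟩
  set N := ⌊exp u⌋₊ with hN
  have hN1 : 1 ≤ N := Nat.le_floor (by simpa using hu)
  have hN0 : (0 : ℝ) < N := by exact_mod_cast hN1
  have hY : Y 0 u = ∑ n ∈ Finset.Ioc 0 N,
      (if n.Prime then ArithmeticFunction.vonMangoldt n / (n : ℝ) else 0) := by
    change op wtlog (F 0) u = _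
    rw [op, Nat.primesLE_eq_filter_Ioc_zero, Finset.sum_filter]
    refine Finset.sum_congr rfl fun n hn => ?_
    split_ifs with hp
    · have h0 : (0 : ℝ) < n := by exact_mod_cast hp.pos
      have : log n ≤ u := by
        rw [log_le_iff_le_exp h0]
        exact (Nat.le_floor_iff (exp_pos u).le).1 (Finset.mem_Ioc.1 hn).2
      rw [ArithmeticFunction.vonMangoldt_apply_prime hp, wtlog]
      simp [F, this]; ring
    · rfl
  have hnn : ∀ n : ℕ, 0 ≤ (if n.Prime then 0 else ArithmeticFunction.vonMangoldt n) / (n : ℝ) := by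
    intro n
    split_ifs
    · simp
    · exact div_nonneg ArithmeticFunction.vonMangoldt_nonneg (by positivity)
  have hsplit : ∑ n ∈ Finset.Ioc 0 N, ArithmeticFunction.vonMangoldt n / (n : ℝ) = Y 0 u +
      ∑ n ∈ Finset.Ioc 0 N, (if n.Prime then 0 else ArithmeticFunction.vonMangoldt n) / (n : ℝ) := by
    rw [hY, ← Finset.sum_add_distrib]
    refine Finset.sum_congr rfl fun n _ => ?_
    split_ifs <;> simp
  have hle : ∑ n ∈ Finset.Ioc 0 N,
      (if n.Prime then 0 else ArithmeticFunction.vonMangoldt n) / (n : ℝ) ≤ K :=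
    hsum.sum_le_tsum _ fun n _ => hnn n
  have hge : 0 ≤ ∑ n ∈ Finset.Ioc 0 N,
      (if n.Prime then 0 else ArithmeticFunction.vonMangoldt n) / (n : ℝ) :=
    Finset.sum_nonneg fun n _ => hnn n
  have hmain := abs_le.1 (sum_vonMangoldt_div hN1)
  rw [hsplit] at hmain
  have hl1 : log N ≤ u := by
    rw [log_le_iff_le_exp hN0]
    exact Nat.floor_le (exp_pos u).le
  have hl2 : u ≤ log N + log 2 := by
    rw [← log_mul hN0.ne' (by norm_num), le_log_iff_exp_le (by positivity)]
    have h1 := Nat.lt_floor_add_one (exp u)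
    have h2 : (1 : ℝ) ≤ N := by exact_mod_cast hN1
    linarith
  have h2 : 0 ≤ log (2 : ℝ) := log_nonneg (by norm_num)
  rw [abs_le]
  constructor <;> linarith

end MertensAux

/-! ### Integrating an expansion of the averages -/

namespace MertensAux

open Filter Topology MeasureTheory Set intervalIntegral

/-- The logarithms at `t ≥ u` are compared with those at `u` by
`1 + log t ≤ (1 + log u)(1 + log (t/u))`, the second factor being absorbed in `(t/u)^{1/2}`. -/
lemma one_add_log_pow_le (m : ℕ) {u t : ℝ} (hu : 1 ≤ u) (ht : u ≤ t) :
    (1 + log t) ^ m / t ^ 2 ≤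
      (2 ^ m * m.factorial * exp (1 / 2)) * (1 + log u) ^ m * u ^ (-(1 / 2) : ℝ) *
        t ^ (-(3 / 2) : ℝ) := by
  have hu0 : 0 < u := by linarith
  have ht0 : 0 < t := by linarith
  set r := t / u with hr
  have hr1 : 1 ≤ r := (one_le_div hu0).2 ht
  have hr0 : 0 < r := by linarith
  have hlr : 0 ≤ log r := log_nonneg hr1
  have hlu : 0 ≤ log u := log_nonneg hu
  have ht' : t = u * r := by rw [hr]; field_simp
  have h1 : 1 + log t ≤ (1 + log u) * (1 + log r) := by
    rw [ht', log_mul hu0.ne' hr0.ne']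
    nlinarith [mul_nonneg hlr hlu]
  have h2 : (1 + log r) ^ m ≤ 2 ^ m * m.factorial * exp (1 / 2) * r ^ (1 / 2 : ℝ) := by
    have := pow_div_factorial_le_exp ((1 + log r) / 2) (by positivity) m
    rw [div_pow, add_div, exp_add, div_le_iff₀ (by positivity), div_le_iff₀ (by positivity)] at this
    rw [rpow_def_of_pos hr0]
    calc _ ≤ _ := this
      _ = _ := by
        rw [show log r * (1 / 2) = log r / 2 by ring]; ring
  have h3 : r ^ (1 / 2 : ℝ) = t ^ (1 / 2 : ℝ) * u ^ (-(1 / 2) : ℝ) := by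
    rw [hr, div_rpow ht0.le hu0.le, rpow_neg hu0.le, div_eq_mul_inv]
  have h4 : t ^ (1 / 2 : ℝ) = t ^ (-(3 / 2) : ℝ) * t ^ 2 := by
    rw [← rpow_natCast t 2, ← rpow_add ht0]; norm_num
  rw [div_le_iff₀ (by positivity)]
  have h0 : 0 ≤ 1 + log t := by have := log_nonneg (hu.trans ht); linarith
  calc (1 + log t) ^ m ≤ ((1 + log u) * (1 + log r)) ^ m := pow_le_pow_left₀ h0 h1 m
    _ = (1 + log u) ^ m * (1 + log r) ^ m := mul_pow _ _ _
    _ ≤ (1 + log u) ^ m * (2 ^ m * m.factorial * exp (1 / 2) * r ^ (1 / 2 : ℝ)) := by gcongr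
    _ = _ := by rw [h3, h4]; ring

lemma tail_bound (m : ℕ) : ∃ K, 0 ≤ K ∧
    IntegrableOn (fun t : ℝ => (1 + log t) ^ m / t ^ 2) (Ioi 1) ∧
    ∀ u, 1 ≤ u → ∫ t in Ioi u, (1 + log t) ^ m / t ^ 2 ≤ K * (1 + log u) ^ m / u := by
  set K0 : ℝ := 2 ^ m * m.factorial * exp (1 / 2) with hK0
  have hdom : ∀ u : ℝ, 1 ≤ u → IntegrableOn (fun t : ℝ => K0 * (1 + log u) ^ m *
      u ^ (-(1 / 2) : ℝ) * t ^ (-(3 / 2) : ℝ)) (Ioi u) := fun u hu =>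
    (integrableOn_Ioi_rpow_of_lt (by norm_num) (by linarith)).const_mul _
  have hI : IntegrableOn (fun t : ℝ => (1 + log t) ^ m / t ^ 2) (Ioi 1) := by
    refine Integrable.mono' (hdom 1 le_rfl) (Measurable.aestronglyMeasurable (by fun_prop)) ?_
    refine (ae_restrict_iff' measurableSet_Ioi).2 (Eventually.of_forall fun t ht => ?_)
    have ht1 : (1 : ℝ) ≤ t := le_of_lt ht
    have : 0 ≤ log t := log_nonneg ht1
    rw [norm_of_nonneg (by positivity)]
    exact one_add_log_pow_le m le_rfl ht1
  refine ⟨2 * K0, by positivity, hI, fun u hu => ?_⟩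
  have hu0 : 0 < u := by linarith
  refine (setIntegral_mono_on (hI.mono_set (Ioi_subset_Ioi hu)) (hdom u hu) measurableSet_Ioi
    fun t ht => one_add_log_pow_le m hu (le_of_lt ht)).trans (le_of_eq ?_)
  rw [MeasureTheory.integral_const_mul, integral_Ioi_rpow_of_lt (by norm_num) hu0]
  have h1 : u ^ (-(3 / 2) + 1 : ℝ) = u ^ (-(1 / 2) : ℝ) := by norm_num
  have h2 : u ^ (-(1 / 2) : ℝ) * u ^ (-(1 / 2) : ℝ) = u⁻¹ := by
    rw [← rpow_add hu0, ← rpow_neg_one]; norm_num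
  rw [h1]
  calc _ = 2 * (K0 * (1 + log u) ^ m) * (u ^ (-(1 / 2) : ℝ) * u ^ (-(1 / 2) : ℝ)) := by ring
    _ = _ := by rw [h2]; ring

lemma Y_measurable (k : ℕ) : Measurable (Y k) := by
  have h : Y k = fun u => (u * F (k + 1) u - G (k + 1) u) / ((k : ℝ) + 1) := by
    funext u
    rw [moment]
    have : (k : ℝ) + 1 ≠ 0 := by positivity
    field_simp
  have hG : Continuous (G (k + 1)) := continuous_primitive (fun a b => F_int (k + 1) a b) 0
  rw [h]
  exact ((measurable_id.mul (F_mono (k + 1)).measurable).sub hG.measurable).div_const _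

/-- The inductive step of the Mertens expansion: an asymptotic expansion of the averages
`G k u / u` in powers of `log u` integrates to one of `G (k + 1) u / u` and of `F (k + 1) u`, with
an undetermined constant of integration `d`. -/
lemma step (k : ℕ) {h0 h1 : ℝ → ℝ} (hc : Continuous h0)
    (hd : ∀ y, HasDerivAt h1 ((k + 1) * h0 y) y) {C1 C2 : ℝ}
    (hG : ∀ u, 1 ≤ u → |G k u / u - h0 (log u)| ≤ C1 * (1 + log u) ^ k / u)
    (hF : ∀ u, 1 ≤ u → F k u ≤ C2 * (1 + log u) ^ k) :
    ∃ d C, ∀ u, 1 ≤ u →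
      |G (k + 1) u / u - (h1 (log u) + d)| ≤ C * (1 + log u) ^ k / u ∧
      |F (k + 1) u - (h1 (log u) + d + (k + 1) * h0 (log u))| ≤ C * (1 + log u) ^ k / u := by
  obtain ⟨C0, hC0⟩ := mertens_first
  obtain ⟨K, hK, hKint, hKtail⟩ := tail_bound k
  have hC0' : 0 ≤ C0 := (abs_nonneg _).trans (hC0 0 le_rfl)
  set K1 : ℝ := (k + 1) * (C0 * C2 + C1) with hK1
  -- `Y k u / u` is within `O((log u)^k / u)` of the main term of `G k u / u`.
  have hY : ∀ u, 1 ≤ u → |(k + 1) * Y k u / u - (k + 1) * h0 (log u)| ≤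
      K1 * (1 + log u) ^ k / u := by
    intro u hu
    have hu0 : 0 < u := by linarith
    have e1 : (k + 1) * Y k u / u - (k + 1) * h0 (log u) =
        (k + 1) * ((Y k u - G k u) / u + (G k u / u - h0 (log u))) := by ring
    have e2 : |(Y k u - G k u) / u| ≤ C0 * C2 * (1 + log u) ^ k / u := by
      rw [abs_div, abs_of_pos hu0]
      refine div_le_div_of_nonneg_right ?_ hu0.le
      calc _ ≤ C0 * F k u := Y_sub_G hC0 k u
        _ ≤ C0 * (C2 * (1 + log u) ^ k) := mul_le_mul_of_nonneg_left (hF u hu) hC0'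
        _ = _ := by ring
    rw [e1, abs_mul, abs_of_nonneg (by positivity : (0 : ℝ) ≤ (k : ℝ) + 1)]
    calc _ ≤ ((k : ℝ) + 1) * (C0 * C2 * (1 + log u) ^ k / u + C1 * (1 + log u) ^ k / u) :=
          mul_le_mul_of_nonneg_left ((abs_add_le _ _).trans (add_le_add e2 (hG u hu)))
            (by positivity)
      _ = _ := by rw [hK1]; ring
  set e : ℝ → ℝ := fun t => (k + 1) * Y k t / t ^ 2 - (k + 1) * h0 (log t) / t with he
  have hebd : ∀ t, 1 ≤ t → |e t| ≤ K1 * ((1 + log t) ^ k / t ^ 2) := by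
    intro t ht
    have ht0 : 0 < t := by linarith
    have : e t = ((k + 1) * Y k t / t - (k + 1) * h0 (log t)) / t := by
      simp only [he]; field_simp
    rw [this, abs_div, abs_of_pos ht0]
    calc _ ≤ K1 * (1 + log t) ^ k / t / t := div_le_div_of_nonneg_right (hY t ht) ht0.le
      _ = _ := by field_simp
  have hem : Measurable e := by
    have := Y_measurable k
    have := hc.measurable
    simp only [he]
    fun_prop
  have heint : IntegrableOn e (Ioi 1) := by
    refine Integrable.mono' (hKint.const_mul K1) hem.aestronglyMeasurable ?_
    exact (ae_restrict_iff' measurableSet_Ioi).2 (Eventually.of_forall fun t ht =>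
      hebd t (le_of_lt ht))
  have hK1' : 0 ≤ K1 := by
    have := (abs_nonneg _).trans (hY 1 le_rfl)
    simpa using this
  refine ⟨G (k + 1) 1 - h1 0 + ∫ t in Ioi 1, e t, K1 * K + K1, fun u hu => ?_⟩
  have hu0 : 0 < u := by linarith
  have hlu : 0 ≤ log u := log_nonneg hu
  have htail : |∫ t in Ioi u, e t| ≤ K1 * K * (1 + log u) ^ k / u := by
    calc _ ≤ ∫ t in Ioi u, K1 * ((1 + log t) ^ k / t ^ 2) := by
          refine norm_integral_le_of_norm_le (f := e)
            ((hKint.mono_set (Ioi_subset_Ioi hu)).const_mul K1) ?_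
          exact (ae_restrict_iff' measurableSet_Ioi).2 (Eventually.of_forall fun t ht =>
            hebd t (hu.trans (le_of_lt ht)))
      _ = K1 * ∫ t in Ioi u, ((1 + log t) ^ k / t ^ 2) := MeasureTheory.integral_const_mul _ _
      _ ≤ K1 * (K * (1 + log u) ^ k / u) := mul_le_mul_of_nonneg_left (hKtail u hu) hK1'
      _ = _ := by ring
  have hposu : ∀ t ∈ uIcc 1 u, t ≠ 0 := by
    intro t ht
    rw [uIcc_of_le hu] at ht
    have := ht.1
    positivity
  have hmain : ∫ t in (1 : ℝ)..u, (k + 1) * h0 (log t) / t = h1 (log u) - h1 0 := by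
    rw [integral_eq_sub_of_hasDerivAt (f := fun t => h1 (log t))]
    · simp
    · intro t ht
      have := (hd (log t)).comp t (hasDerivAt_log (hposu t ht))
      exact this.congr_deriv (by rw [div_eq_mul_inv])
    · refine ContinuousOn.intervalIntegrable ?_
      refine ContinuousOn.div ?_ continuousOn_id hposu
      refine continuousOn_const.mul (hc.comp_continuousOn ?_)
      exact continuousOn_log.mono fun t ht => hposu t ht
  have hei : IntervalIntegrable e volume 1 u :=
    (intervalIntegrable_iff_integrableOn_Ioc_of_le hu).2 (heint.mono_set Ioc_subset_Ioi_self)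
  have hmi : IntervalIntegrable (fun t => (k + 1) * h0 (log t) / t) volume 1 u := by
    refine ContinuousOn.intervalIntegrable ?_
    refine ContinuousOn.div ?_ continuousOn_id hposu
    refine continuousOn_const.mul (hc.comp_continuousOn ?_)
    exact continuousOn_log.mono fun t ht => hposu t ht
  have hsplit : ∫ t in (1 : ℝ)..u, (k + 1) * Y k t / t ^ 2 =
      (∫ t in (1 : ℝ)..u, e t) + (h1 (log u) - h1 0) := by
    rw [← hmain, ← integral_add hei hmi]
    refine integral_congr fun t _ => ?_
    simp only [he]; ring
  -- The error is the tail of the convergent integral `∫₁^∞ e`, whose full value is part of `d`.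
  have hG1 : G (k + 1) u / u - (h1 (log u) + (G (k + 1) 1 - h1 0 + ∫ t in Ioi 1, e t)) =
      - ∫ t in Ioi u, e t := by
    rw [G_div k hu, hsplit, ← integral_Ioi_sub_Ioi heint hu]
    ring
  have hpos : 0 ≤ (1 + log u) ^ k / u := by positivity
  constructor
  · rw [hG1, abs_neg]
    refine htail.trans ?_
    have : 0 ≤ K1 * ((1 + log u) ^ k / u) := mul_nonneg hK1' hpos
    calc _ ≤ K1 * K * (1 + log u) ^ k / u + K1 * ((1 + log u) ^ k / u) := by linarith
      _ = _ := by ring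
  · have hF1 : F (k + 1) u = G (k + 1) u / u + (k + 1) * Y k u / u := by
      rw [← moment]; field_simp; ring
    have : F (k + 1) u - (h1 (log u) + (G (k + 1) 1 - h1 0 + ∫ t in Ioi 1, e t) +
        (k + 1) * h0 (log u)) = (- ∫ t in Ioi u, e t) +
        ((k + 1) * Y k u / u - (k + 1) * h0 (log u)) := by
      rw [← hG1, hF1]; ring
    rw [this]
    refine (abs_add_le _ _).trans ?_
    rw [abs_neg]
    calc _ ≤ K1 * K * (1 + log u) ^ k / u + K1 * (1 + log u) ^ k / u :=
          add_le_add htail (hY u hu)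
      _ = _ := by ring

end MertensAux

/-! ### The sums `S_k` as iterated convolutions -/

namespace MertensAux

open Filter Topology MeasureTheory Set intervalIntegral

lemma hasSum_op (c : ℕ → ℝ) {h : ℝ → ℝ} (hh : ∀ u < 0, h u = 0) (u : ℝ) :
    HasSum (fun p : Nat.Primes => c p * h (u - log p)) (op c h u) := by
  have h1 : (fun p : Nat.Primes => c p * h (u - log p))
      = (fun p : ℕ => c p * h (u - log p)) ∘ ((↑) : {p : ℕ | p.Prime} → ℕ) := rfl
  rw [h1]
  erw [hasSum_subtype_iff_indicator]
  have h2 : op c h u = ∑ p ∈ Nat.primesLE ⌊exp u⌋₊,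
      ({p : ℕ | p.Prime}.indicator fun p : ℕ => c p * h (u - log p)) p := by
    refine Finset.sum_congr rfl fun p hp => ?_
    rw [indicator_of_mem]
    exact Nat.prime_of_mem_primesLE hp
  rw [h2]
  refine hasSum_sum_of_ne_finset_zero fun p hp => ?_
  by_cases hpp : p.Prime
  · rw [indicator_of_mem (by exact hpp)]
    have h1 : ⌊exp u⌋₊ < p := by
      by_contra hcon
      exact hp (Nat.mem_primesLE.2 ⟨not_lt.1 hcon, hpp⟩)
    have h2 : exp u < p := (Nat.floor_lt (exp_pos u).le).1 h1
    have h3 : u < log p := (lt_log_iff_exp_lt (by exact_mod_cast hpp.pos)).2 h2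
    rw [hh _ (by linarith), mul_zero]
  · rw [indicator_of_notMem (by exact hpp)]

/-- `S_k(x) = F_k(log x)`, by splitting off the first prime of a tuple. -/
lemma hasSum_mertens (k : ℕ) {x : ℝ} (hx : 0 < x) :
    HasSum (fun v : Fin k → Nat.Primes =>
      if ((∏ i, ((v i : ℕ) : ℝ)) ≤ x) then 1 / ∏ i, ((v i : ℕ) : ℝ) else 0) (F k (log x)) := by
  induction k generalizing x with
  | zero =>
    have : F 0 (log x) = if (1 : ℝ) ≤ x then 1 else 0 := by
      simp only [F]
      congr 1
      rw [eq_iff_iff, log_nonneg_iff hx]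
    rw [this]
    simp
  | succ k ih =>
    let e := Fin.consEquiv (fun _ : Fin (k + 1) => Nat.Primes)
    rw [← e.hasSum_iff]
    set f : Nat.Primes × (Fin k → Nat.Primes) → ℝ := _
    change HasSum f _
    have hf : ∀ p v, f (p, v) = wt p * (if ((∏ i, ((v i : ℕ) : ℝ)) ≤ x / p)
        then 1 / ∏ i, ((v i : ℕ) : ℝ) else 0) := by
      intro p v
      have hp : (0 : ℝ) < (p : ℕ) := by exact_mod_cast p.2.pos
      simp only [f, e, Function.comp, Fin.consEquiv_apply, Fin.prod_univ_succ, Fin.cons_zero,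
        Fin.cons_succ, le_div_iff₀ hp, wt]
      rw [mul_comm (∏ i, ((v i : ℕ) : ℝ)) ((p : ℕ) : ℝ), mul_ite, mul_zero]
      congr 1
      rw [one_div_mul_one_div]
    have h1 : ∀ p : Nat.Primes, HasSum (fun v => f (p, v)) (wt p * F k (log x - log p)) := by
      intro p
      have hp : (0 : ℝ) < (p : ℕ) := by exact_mod_cast p.2.pos
      simp only [hf]
      rw [← log_div hx.ne' hp.ne']
      exact (ih (div_pos hx hp)).mul_left _
    have h2 := hasSum_op wt (F_neg k) (log x)
    have hnn : 0 ≤ f := by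
      rintro ⟨p, v⟩
      rw [hf]
      refine mul_nonneg (wt_nonneg _) ?_
      split_ifs
      · exact one_div_nonneg.2 (Finset.prod_nonneg fun i _ => Nat.cast_nonneg _)
      · exact le_rfl
    have hs : Summable f := by
      rw [summable_prod_of_nonneg hnn]
      refine ⟨fun p => (h1 p).summable, ?_⟩
      simp only [fun p => (h1 p).tsum_eq]
      exact h2.summable
    have h3 := hs.hasSum.prod_fiberwise h1
    have h4 : F (k + 1) (log x) = ∑' b, f b := h2.unique h3
    rw [h4]
    exact hs.hasSum

lemma mertensS_eq (k : ℕ) {x : ℝ} (hx : 0 < x) : mertensS k x = F k (log x) :=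
  (hasSum_mertens k hx).tsum_eq

end MertensAux

/-! ### The Laplace transform -/

namespace MertensAux

open Filter Topology MeasureTheory Set intervalIntegral

/-- The prime zeta function shifted to its singularity: `W s = ∑_p p^{-1-s}`. -/
noncomputable def W (s : ℝ) : ℝ := ∑' p : Nat.Primes, wt p * exp (-(s * log p))

lemma wt_exp {p : ℕ} (hp : 0 < p) (s : ℝ) : wt p * exp (-(s * log p)) = (p : ℝ) ^ (-(1 + s)) := by
  have hp' : (0 : ℝ) < p := by exact_mod_cast hp
  rw [wt, rpow_def_of_pos hp', show log p * -(1 + s) = -log p + -(s * log p) by ring, exp_add,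
    exp_neg (log p), exp_log hp', one_div]

lemma W_summable {s : ℝ} (hs : 0 < s) :
    Summable fun p : Nat.Primes => wt p * exp (-(s * log p)) := by
  have : (fun p : Nat.Primes => wt p * exp (-(s * log p)))
      = fun p : Nat.Primes => ((p : ℕ) : ℝ) ^ (-(1 + s)) :=
    funext fun p => wt_exp p.2.pos s
  rw [this, Nat.Primes.summable_rpow]
  linarith

lemma W_pos {s : ℝ} (hs : 0 < s) : 0 < W s := by
  refine (W_summable hs).tsum_pos (fun p => mul_nonneg (wt_nonneg _) (exp_pos _).le)
    ⟨2, Nat.prime_two⟩ ?_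
  simp only [wt]
  positivity

lemma F_measurable (k : ℕ) : Measurable (F k) := (F_mono k).measurable

/-- The Laplace transform of `F k` is `W(s)^k / s`. -/
lemma laplace (k : ℕ) {s : ℝ} (hs : 0 < s) :
    Integrable (fun u => exp (-(s * u)) * F k u) ∧
      ∫ u, exp (-(s * u)) * F k u = W s ^ k / s := by
  induction k with
  | zero =>
    have h1 : (fun u => exp (-(s * u)) * F 0 u)
        = (Set.Ici (0 : ℝ)).indicator fun u => exp (-s * u) := by
      funext u
      by_cases hu : 0 ≤ u
      · simp [F, hu, neg_mul]
      · simp [F, hu]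
    rw [h1]
    constructor
    · rw [integrable_indicator_iff measurableSet_Ici, integrableOn_Ici_iff_integrableOn_Ioi]
      exact integrableOn_exp_mul_Ioi (by linarith) 0
    · rw [MeasureTheory.integral_indicator measurableSet_Ici, integral_Ici_eq_integral_Ioi,
        integral_exp_mul_Ioi (by linarith)]
      simp
  | succ k ih =>
    obtain ⟨hi, hv⟩ := ih
    let f : Nat.Primes → ℝ → ℝ := fun p u => exp (-(s * u)) * (wt p * F k (u - log p))
    have hf : ∀ p, f p = fun u => (wt p * exp (-(s * log p))) *
        (fun t => exp (-(s * t)) * F k t) (u - log p) := by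
      intro p
      funext u
      simp only [f]
      rw [show -(s * u) = -(s * log p) + -(s * (u - log p)) by ring, exp_add]
      ring
    have hfi : ∀ p, Integrable (f p) := by
      intro p
      rw [hf]
      exact (hi.comp_sub_right _).const_mul _
    have hfv : ∀ p : Nat.Primes, ∫ u, f p u = (wt p * exp (-(s * log p))) * (W s ^ k / s) := by
      intro p
      rw [hf, MeasureTheory.integral_const_mul,
        integral_sub_right_eq_self (fun t => exp (-(s * t)) * F k t), hv]
    have hnn : ∀ p u, 0 ≤ f p u := fun p u =>
      mul_nonneg (exp_pos _).le (mul_nonneg (wt_nonneg _) (F_nonneg _ _))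
    have hfn : ∀ p, ∫ u, ‖f p u‖ = ∫ u, f p u := fun p =>
      integral_congr_ae (Eventually.of_forall fun u => Real.norm_of_nonneg (hnn p u))
    have hsum : Summable fun p => ∫ u, ‖f p u‖ := by
      simp only [hfn, hfv]
      exact (W_summable hs).mul_right _
    have h1 := hasSum_integral_of_summable_integral_norm hfi hsum
    have h2 : ∀ u, ∑' p, f p u = exp (-(s * u)) * F (k + 1) u := fun u =>
      ((hasSum_op wt (F_neg k) u).mul_left _).tsum_eq
    simp only [h2, hfv] at h1
    have h3 := h1.unique ((W_summable hs).hasSum.mul_right (W s ^ k / s))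
    have h4 : ∫ u, exp (-(s * u)) * F (k + 1) u = W s ^ (k + 1) / s := by
      rw [h3, ← W]
      ring
    refine ⟨?_, h4⟩
    by_contra hcon
    rw [integral_undef hcon] at h4
    have := W_pos hs
    have : 0 < W s ^ (k + 1) / s := by positivity
    linarith

end MertensAux

/-! ### An Abelian comparison -/

namespace MertensAux

open Filter Topology MeasureTheory Set intervalIntegral

lemma one_add_pow_le_exp (m : ℕ) {y : ℝ} (hy : 0 ≤ y) :
    (1 + y) ^ m ≤ (2 ^ m * m.factorial * exp (1 / 2)) * exp (y / 2) := by
  have h := Real.pow_div_factorial_le_exp ((1 + y) / 2) (by linarith) m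
  rw [div_le_iff₀ (by positivity), div_pow, div_le_iff₀ (by positivity), add_div, exp_add] at h
  linarith

lemma exp_half_log {u : ℝ} (hu : 0 < u) : exp (|log u| / 2) ≤ u ^ (1 / 2 : ℝ) + u ^ (-(1 / 2) : ℝ) := by
  have h1 : u ^ (1 / 2 : ℝ) = exp (log u / 2) := by rw [rpow_def_of_pos hu]; ring_nf
  have h2 : u ^ (-(1 / 2) : ℝ) = exp (-log u / 2) := by rw [rpow_def_of_pos hu]; ring_nf
  rw [h1, h2]
  have h3 := exp_pos (log u / 2)
  have h4 := exp_pos (-log u / 2)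
  rcases abs_cases (log u) with ⟨h, -⟩ | ⟨h, -⟩ <;> rw [h] <;> linarith

lemma integrableOn_exp_rpow {a : ℝ} (ha : -1 < a) :
    IntegrableOn (fun v : ℝ => exp (-v) * v ^ a) (Ioi 0) := by
  have := Real.GammaIntegral_convergent (s := a + 1) (by linarith)
  simpa using this

lemma integrableOn_poly_log {P : ℝ → ℝ} (hc : Continuous P) {A : ℝ} {k : ℕ}
    (hA : ∀ y, |P y| ≤ A * (1 + |y|) ^ k) (l : ℝ) :
    IntegrableOn (fun v => exp (-v) * P (log v + l)) (Ioi 0) := by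
  have hA0 : 0 ≤ A := by
    have := (abs_nonneg _).trans (hA 0)
    simpa using this
  have hg : IntegrableOn (fun v : ℝ => (A * (1 + |l|) ^ k * (2 ^ k * k.factorial * exp (1 / 2))) *
      (exp (-v) * v ^ (1 / 2 : ℝ) + exp (-v) * v ^ (-(1 / 2) : ℝ))) (Ioi 0) :=
    ((integrableOn_exp_rpow (by norm_num)).add (integrableOn_exp_rpow (by norm_num))).const_mul _
  refine hg.mono' ?_ ?_
  · have : Measurable fun v => exp (-v) * P (log v + l) :=
      (measurable_exp.comp measurable_neg).mul (hc.measurable.comp (measurable_log.add_const l))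
    exact this.aestronglyMeasurable
  · refine (ae_restrict_iff' measurableSet_Ioi).2 (Eventually.of_forall fun v hv => ?_)
    have hv0 : (0 : ℝ) < v := hv
    rw [norm_mul, Real.norm_of_nonneg (exp_pos _).le, Real.norm_eq_abs]
    have h1 : (1 + |log v + l|) ^ k ≤ ((1 + |l|) * (1 + |log v|)) ^ k := by
      refine pow_le_pow_left₀ (by positivity) ?_ k
      have h3 := abs_add_le (log v) l
      have : 0 ≤ |l| * |log v| := by positivity
      nlinarith
    have h2 := (one_add_pow_le_exp k (abs_nonneg (log v))).trans
      (mul_le_mul_of_nonneg_left (exp_half_log hv0) (by positivity))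
    calc exp (-v) * |P (log v + l)| ≤ exp (-v) * (A * ((1 + |l|) * (1 + |log v|)) ^ k) :=
          mul_le_mul_of_nonneg_left ((hA _).trans (mul_le_mul_of_nonneg_left h1 hA0)) (exp_pos _).le
      _ = exp (-v) * (A * (1 + |l|) ^ k) * (1 + |log v|) ^ k := by rw [mul_pow]; ring
      _ ≤ exp (-v) * (A * (1 + |l|) ^ k) * ((2 ^ k * k.factorial * exp (1 / 2)) *
          (v ^ (1 / 2 : ℝ) + v ^ (-(1 / 2) : ℝ))) :=
          mul_le_mul_of_nonneg_left h2 (by positivity)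
      _ = _ := by ring

/-- On `(0, 1)` both `F j` and a polynomial in `log u` are `O(u^{-1/2})`, so an error bound on
`[1, ∞)` extends to `(0, ∞)`. -/
lemma extend_bound {P : ℝ → ℝ} {A C : ℝ} {j k m : ℕ}
    (hA : ∀ y, |P y| ≤ A * (1 + |y|) ^ k)
    (hF : ∀ u, 1 ≤ u → |F j u - P (log u)| ≤ C * (1 + log u) ^ m / u) :
    ∃ C', ∀ u, 0 < u → |F j u - P (log u)| ≤ C' * u ^ (-(1 / 2) : ℝ) := by
  have hA0 : 0 ≤ A := by
    have := (abs_nonneg _).trans (hA 0)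
    simpa using this
  have hC0 : 0 ≤ C := by
    have := (abs_nonneg _).trans (hF 1 le_rfl)
    simpa using this
  refine ⟨C * (2 ^ m * m.factorial * exp (1 / 2)) +
    (A * (2 ^ k * k.factorial * exp (1 / 2)) + F j 1), fun u hu => ?_⟩
  have hr : u ^ (-(1 / 2) : ℝ) = exp (-log u / 2) := by rw [rpow_def_of_pos hu]; ring_nf
  have hF1 := F_nonneg j 1
  have he := exp_pos (-log u / 2)
  rw [hr, add_mul]
  rcases le_or_gt 1 u with h1 | h1
  · have hl := log_nonneg h1
    have h2 := one_add_pow_le_exp m hl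
    have h3 : C * (1 + log u) ^ m / u ≤ C * (2 ^ m * m.factorial * exp (1 / 2)) * exp (-log u / 2) := by
      rw [div_le_iff₀ hu]
      have : exp (-log u / 2) * u = exp (log u / 2) := by
        nth_rewrite 2 [← exp_log hu]
        rw [← exp_add]; ring_nf
      rw [mul_assoc _ (exp (-log u / 2)) u, this, mul_assoc]
      exact mul_le_mul_of_nonneg_left h2 hC0
    have h4 : 0 ≤ (A * (2 ^ k * k.factorial * exp (1 / 2)) + F j 1) * exp (-log u / 2) := by
      positivity
    linarith [hF u h1]
  · have hl := log_nonpos hu.le h1.le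
    have h2 := one_add_pow_le_exp k (neg_nonneg.2 hl)
    have h3 := hA (log u)
    rw [abs_of_nonpos hl] at h3
    have h4 := h3.trans (mul_le_mul_of_nonneg_left h2 hA0)
    have h5 : F j u ≤ F j 1 * exp (-log u / 2) := by
      have : 1 ≤ exp (-log u / 2) := one_le_exp (by linarith)
      nlinarith [F_mono j h1.le]
    have h6 := F_nonneg j u
    have h7 : 0 ≤ C * (2 ^ m * m.factorial * exp (1 / 2)) * exp (-log u / 2) := by positivity
    have h8 := abs_le.1 h4
    rw [abs_le]
    constructor <;> nlinarith [h8.1, h8.2]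

/-- Abelian step: an expansion of `F k` in powers of `log u` turns into one of `W(s)^k`
in powers of `log (1/s)`, with coefficients given by log-moments of the exponential law. -/
lemma abel {P : ℝ → ℝ} (hc : Continuous P) {A C : ℝ} {k m : ℕ}
    (hA : ∀ y, |P y| ≤ A * (1 + |y|) ^ m)
    (hF : ∀ u, 0 < u → |F k u - P (log u)| ≤ C * u ^ (-(1 / 2) : ℝ)) {s : ℝ} (hs : 0 < s) :
    |W s ^ k - ∫ v in Ioi (0 : ℝ), exp (-v) * P (log v + -log s)|
      ≤ C * Gamma (1 / 2) * s ^ (1 / 2 : ℝ) := by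
  obtain ⟨hi, hv⟩ := laplace k hs
  have h1 : ∫ u, exp (-(s * u)) * F k u = ∫ u in Ioi (0 : ℝ), exp (-(s * u)) * F k u := by
    rw [← integral_Ici_eq_integral_Ioi, setIntegral_eq_integral_of_forall_compl_eq_zero]
    intro u hu
    rw [F_neg k u (by simpa using hu), mul_zero]
  let g : ℝ → ℝ := fun v => exp (-v) * F k (v / s)
  have hg : ∀ u, g (s * u) = exp (-(s * u)) * F k u := fun u => by
    simp only [g, mul_div_cancel_left₀ _ hs.ne']
  have h2 : W s ^ k = ∫ v in Ioi (0 : ℝ), g v := by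
    have := integral_comp_mul_left_Ioi g 0 hs
    simp only [hg, mul_zero, smul_eq_mul] at this
    rw [← h1, hv] at this
    field_simp at this
    exact this
  have hgi : IntegrableOn g (Ioi 0) := by
    have := (integrableOn_Ioi_comp_mul_left_iff g 0 hs).1
    rw [mul_zero] at this
    refine this ?_
    simp only [hg]
    exact hi.integrableOn
  have hPi := integrableOn_poly_log hc hA (-log s)
  rw [h2, ← integral_sub hgi hPi, ← Real.norm_eq_abs]
  have hgam : ∫ v in Ioi (0 : ℝ), C * s ^ (1 / 2 : ℝ) * (exp (-v) * v ^ ((1 / 2 : ℝ) - 1))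
      = C * Gamma (1 / 2) * s ^ (1 / 2 : ℝ) := by
    rw [MeasureTheory.integral_const_mul, Real.Gamma_eq_integral (by norm_num)]
    ring
  rw [← hgam]
  refine norm_integral_le_of_norm_le
    ((integrableOn_exp_rpow (by norm_num)).const_mul _) ?_
  refine (ae_restrict_iff' measurableSet_Ioi).2 (Eventually.of_forall fun v hv' => ?_)
  have hv0 : (0 : ℝ) < v := hv'
  have h3 := hF (v / s) (div_pos hv0 hs)
  rw [log_div hv0.ne' hs.ne', div_rpow hv0.le hs.le, rpow_neg hs.le, div_inv_eq_mul] at h3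
  simp only [g]
  rw [← mul_sub, norm_mul, Real.norm_of_nonneg (exp_pos _).le, Real.norm_eq_abs, ← sub_eq_add_neg]
  refine (mul_le_mul_of_nonneg_left h3 (exp_pos _).le).trans_eq ?_
  rw [show (1 / 2 : ℝ) - 1 = -(1 / 2) by norm_num]
  ring

end MertensAux

/-! ### Taylor expansion of `log Γ(1 + z)` -/

namespace MertensAux

open Filter Topology MeasureTheory Set intervalIntegral

/-- Weierstrass' product for `Γ(1 + z)`, in logarithmic form. -/
lemma hasSum_log_Gamma {z : ℝ} (hz : 0 < z) :
    HasSum (fun m : ℕ => z / (m + 1) - log (1 + z / (m + 1)))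
      (eulerMascheroniConstant * z + log (Gamma (1 + z))) := by
  rw [hasSum_iff_tendsto_nat_of_nonneg]
  · have h1 := (BohrMollerup.tendsto_log_gamma hz).add (tendsto_harmonic_sub_log.mul_const z)
    have h2 := h1.add_const (log z)
    have h3 : log (Gamma z) + eulerMascheroniConstant * z + log z
        = eulerMascheroniConstant * z + log (Gamma (1 + z)) := by
      rw [add_comm 1 z, Gamma_add_one hz.ne', log_mul hz.ne' (Gamma_pos_of_pos hz).ne']
      ring
    rw [h3] at h2
    refine h2.congr fun n => ?_
    have h4 : ∀ m : ℕ, log (z + ((m + 1 : ℕ) : ℝ)) = log ((m + 1 : ℕ) : ℝ) + log (1 + z / (m + 1)) := by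
      intro m
      have : (0 : ℝ) < m + 1 := by positivity
      rw [← log_mul (by positivity) (by positivity)]
      congr 1
      push_cast
      field_simp
      ring
    have h5 : log (n.factorial : ℝ) = ∑ m ∈ Finset.range n, log ((m + 1 : ℕ) : ℝ) := by
      rw [← Finset.prod_range_add_one_eq_factorial, Nat.cast_prod, log_prod]
      intro i _
      positivity
    rw [BohrMollerup.logGammaSeq, Finset.sum_range_succ', h5, harmonic]
    simp only [h4, Finset.sum_sub_distrib, Finset.sum_add_distrib]
    push_cast
    simp only [div_eq_mul_inv, ← Finset.mul_sum]
    ring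
  · intro m
    have : 0 ≤ z / (m + 1) := by positivity
    have := log_le_sub_one_of_pos (x := 1 + z / (m + 1)) (by positivity)
    linarith

lemma log_taylor {t : ℝ} (h0 : 0 ≤ t) (h1 : t ≤ 1 / 2) :
    |t - log (1 + t) - (t ^ 2 / 2 - t ^ 3 / 3 + t ^ 4 / 4)| ≤ 2 * t ^ 5 := by
  have h := abs_log_sub_add_sum_range_le (x := -t) (by rw [abs_neg, abs_of_nonneg h0]; linarith) 4
  simp only [Finset.sum_range_succ, Finset.sum_range_zero, abs_neg, abs_of_nonneg h0,
    sub_neg_eq_add] at h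
  rw [← abs_neg]
  refine (le_of_eq ?_).trans (h.trans ?_)
  · congr 1
    push_cast
    ring
  · rw [div_le_iff₀ (by linarith)]
    have : 0 ≤ t ^ 5 := by positivity
    norm_num
    nlinarith

/-- The real number `ζ(3)`. -/
noncomputable def z3 : ℝ := (riemannZeta 3).re

lemma hasSum_z3 : HasSum (fun n : ℕ => 1 / (n : ℝ) ^ 3) z3 := by
  have h : ((∑' n : ℕ, 1 / (n : ℝ) ^ 3 : ℝ) : ℂ) = riemannZeta (3 : ℕ) := by
    rw [zeta_nat_eq_tsum_of_gt_one (by norm_num)]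
    push_cast
    rfl
  have h2 : z3 = ∑' n : ℕ, 1 / (n : ℝ) ^ 3 := by
    rw [z3, show (3 : ℂ) = ((3 : ℕ) : ℂ) by norm_num, ← h, Complex.ofReal_re]
  rw [h2]
  exact (summable_one_div_nat_pow.2 (by norm_num)).hasSum

lemma hasSum_shift {j : ℕ} (hj : j ≠ 0) {a : ℝ} (h : HasSum (fun n : ℕ => 1 / (n : ℝ) ^ j) a) :
    HasSum (fun n : ℕ => 1 / ((n : ℝ) + 1) ^ j) a := by
  have := (hasSum_nat_add_iff' 1).2 h
  simpa [hj] using this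

/-- The linear term of `log Γ(1 + z)` is `-γ z`, and the next coefficients are `ζ(2)/2`, `-ζ(3)/3`,
`ζ(4)/4`. -/
lemma log_Gamma_taylor : ∃ K, ∀ z : ℝ, 0 < z → z ≤ 1 / 4 →
    |eulerMascheroniConstant * z + log (Gamma (1 + z)) -
      ((π ^ 2 / 6) / 2 * z ^ 2 - z3 / 3 * z ^ 3 + (π ^ 4 / 90) / 4 * z ^ 4)| ≤ K * z ^ 5 := by
  obtain ⟨a5, h5⟩ : Summable (fun n : ℕ => 1 / (n : ℝ) ^ 5) :=
    summable_one_div_nat_pow.2 (by norm_num)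
  have h2 := hasSum_shift two_ne_zero hasSum_zeta_two
  have h3 := hasSum_shift three_ne_zero hasSum_z3
  have h4 := hasSum_shift four_ne_zero hasSum_zeta_four
  replace h5 := hasSum_shift (by norm_num) h5
  refine ⟨2 * a5, fun z hz hz4 => ?_⟩
  have hs := (hasSum_log_Gamma hz).sub (((h2.mul_left (z ^ 2 / 2)).sub
    (h3.mul_left (z ^ 3 / 3))).add (h4.mul_left (z ^ 4 / 4)))
  have hb := h5.mul_left (2 * z ^ 5)
  have key : ∀ n : ℕ, |z / (n + 1) - log (1 + z / (n + 1)) - (z ^ 2 / 2 * (1 / ((n : ℝ) + 1) ^ 2)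
      - z ^ 3 / 3 * (1 / ((n : ℝ) + 1) ^ 3) + z ^ 4 / 4 * (1 / ((n : ℝ) + 1) ^ 4))|
      ≤ 2 * z ^ 5 * (1 / ((n : ℝ) + 1) ^ 5) := by
    intro n
    have hn : (1 : ℝ) ≤ n + 1 := by linarith [Nat.cast_nonneg (α := ℝ) n]
    have := log_taylor (t := z / (n + 1)) (by positivity) ((div_le_self hz.le hn).trans (by linarith))
    generalize (n : ℝ) + 1 = m at this
    refine (le_of_eq ?_).trans (this.trans (le_of_eq ?_))
    · congr 1
      ring
    · ring
  have h := hs.norm_le_of_bounded hb key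
  rw [Real.norm_eq_abs] at h
  refine (le_of_eq ?_).trans (h.trans (le_of_eq ?_))
  · congr 1
    ring
  · ring

end MertensAux

/-! ### Logarithmic moments of the exponential law -/

namespace MertensAux

open Filter Topology MeasureTheory Set intervalIntegral Asymptotics

/-- Moments of `log v + γ` for the exponential law: `N j = ∫₀^∞ e^{-v} (log v + γ)^j dv`. -/
noncomputable def N (j : ℕ) : ℝ :=
  ∫ v in Ioi (0 : ℝ), exp (-v) * (log v + eulerMascheroniConstant) ^ j

lemma N_integrable (j : ℕ) :
    IntegrableOn (fun v => exp (-v) * (log v + eulerMascheroniConstant) ^ j) (Ioi 0) := by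
  refine integrableOn_poly_log (P := fun y => y ^ j) (A := 1) (k := j) (by fun_prop) ?_ _
  intro y
  rw [abs_pow, one_mul]
  exact pow_le_pow_left₀ (abs_nonneg _) (by linarith [abs_nonneg y]) _

lemma exp_sub_taylor_le (x : ℝ) :
    |exp x - ∑ m ∈ Finset.range 5, x ^ m / m.factorial| ≤ |x| ^ 5 * exp |x| := by
  have h := Complex.norm_exp_sub_sum_le_norm_mul_exp (x : ℂ) 5
  have h2 : Complex.exp x - ∑ m ∈ Finset.range 5, (x : ℂ) ^ m / m.factorial
      = ((exp x - ∑ m ∈ Finset.range 5, x ^ m / m.factorial : ℝ) : ℂ) := by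
    push_cast
    rfl
  rwa [h2, Complex.norm_real, Complex.norm_real, Real.norm_eq_abs, Real.norm_eq_abs] at h

/-- `e^{γz} Γ(1 + z)` is the moment generating function of `log v + γ` under `e^{-v} dv`. -/
lemma Gamma_moments : ∃ K, ∀ z : ℝ, 0 < z → z ≤ 1 / 4 →
    |exp (eulerMascheroniConstant * z + log (Gamma (1 + z))) -
      ∑ j ∈ Finset.range 5, N j / j.factorial * z ^ j| ≤ K * z ^ 5 := by
  set γ := eulerMascheroniConstant with hγ
  let c : ℝ := (4 ^ 5 * (5 : ℕ).factorial) * exp (|γ| / 2)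
  have hI : IntegrableOn (fun v : ℝ => c *
      (exp (-v) * v ^ (1 / 2 : ℝ) + exp (-v) * v ^ (-(1 / 2) : ℝ))) (Ioi 0) :=
    ((integrableOn_exp_rpow (by norm_num)).add (integrableOn_exp_rpow (by norm_num))).const_mul _
  refine ⟨∫ v in Ioi (0 : ℝ), c *
      (exp (-v) * v ^ (1 / 2 : ℝ) + exp (-v) * v ^ (-(1 / 2) : ℝ)), fun z hz hz4 => ?_⟩
  have e1 : ∀ v ∈ Ioi (0 : ℝ), exp (γ * z) * (exp (-v) * v ^ (1 + z - 1))
      = exp (-v) * exp (z * (log v + γ)) := by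
    intro v hv
    rw [add_sub_cancel_left, rpow_def_of_pos hv, ← exp_add, ← exp_add, ← exp_add]
    ring_nf
  have h1 : exp (γ * z + log (Gamma (1 + z)))
      = ∫ v in Ioi (0 : ℝ), exp (-v) * exp (z * (log v + γ)) := by
    rw [exp_add, exp_log (Gamma_pos_of_pos (by linarith)), Gamma_eq_integral (by linarith),
      ← MeasureTheory.integral_const_mul]
    exact setIntegral_congr_fun measurableSet_Ioi e1
  have h1i : IntegrableOn (fun v => exp (-v) * exp (z * (log v + γ))) (Ioi 0) := by
    have := (GammaIntegral_convergent (s := 1 + z) (by linarith)).const_mul (exp (γ * z))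
    exact (integrableOn_congr_fun e1 measurableSet_Ioi).1 this
  have h2 : ∑ j ∈ Finset.range 5, N j / j.factorial * z ^ j = ∫ v in Ioi (0 : ℝ),
      ∑ j ∈ Finset.range 5, z ^ j / j.factorial * (exp (-v) * (log v + γ) ^ j) := by
    rw [integral_finsetSum _ fun j _ => (N_integrable j).const_mul _]
    refine Finset.sum_congr rfl fun j _ => ?_
    rw [MeasureTheory.integral_const_mul, N]
    ring
  have h2i : IntegrableOn (fun v =>
      ∑ j ∈ Finset.range 5, z ^ j / j.factorial * (exp (-v) * (log v + γ) ^ j)) (Ioi 0) :=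
    integrable_finsetSum _ fun j _ => (N_integrable j).const_mul _
  rw [h1, h2, ← integral_sub h1i h2i, ← Real.norm_eq_abs, mul_comm _ (z ^ 5),
    ← MeasureTheory.integral_const_mul]
  refine norm_integral_le_of_norm_le (hI.const_mul (z ^ 5)) ?_
  refine (ae_restrict_iff' measurableSet_Ioi).2 (Eventually.of_forall fun v hv => ?_)
  have hv0 : (0 : ℝ) < v := hv
  set a := log v + γ with ha
  have e2 : exp (-v) * exp (z * a) - ∑ j ∈ Finset.range 5, z ^ j / j.factorial * (exp (-v) * a ^ j)
      = exp (-v) * (exp (z * a) - ∑ m ∈ Finset.range 5, (z * a) ^ m / m.factorial) := by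
    rw [mul_sub, Finset.mul_sum]
    congr 1
    refine Finset.sum_congr rfl fun j _ => ?_
    rw [mul_pow]
    ring
  rw [e2, norm_mul, Real.norm_of_nonneg (exp_pos _).le, Real.norm_eq_abs]
  have h3 : |a| ^ 5 ≤ (4 ^ 5 * (5 : ℕ).factorial) * exp (|a| / 4) := by
    have h := Real.pow_div_factorial_le_exp (|a| / 4) (by positivity) 5
    rw [div_le_iff₀ (by positivity), div_pow, div_le_iff₀ (by positivity)] at h
    linarith
  have h4 : exp |z * a| ≤ exp (|a| / 4) := by
    rw [abs_mul, abs_of_pos hz]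
    exact exp_le_exp.2 (by nlinarith [abs_nonneg a])
  have h5 : exp (|a| / 4) * exp (|a| / 4) ≤ exp (|γ| / 2) * exp (|log v| / 2) := by
    rw [← exp_add, ← exp_add]
    exact exp_le_exp.2 (by linarith [abs_add_le (log v) γ])
  have h6 := exp_half_log hv0
  have h7 : |z * a| ^ 5 * exp |z * a| ≤ z ^ 5 * (c * (v ^ (1 / 2 : ℝ) + v ^ (-(1 / 2) : ℝ))) := by
    rw [abs_mul, abs_of_pos hz, mul_pow, mul_assoc]
    refine mul_le_mul_of_nonneg_left ?_ (by positivity)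
    rw [abs_mul, abs_of_pos hz] at h4
    calc |a| ^ 5 * exp (z * |a|)
        ≤ ((4 ^ 5 * (5 : ℕ).factorial) * exp (|a| / 4)) * exp (|a| / 4) :=
          mul_le_mul h3 h4 (exp_pos _).le (by positivity)
      _ = (4 ^ 5 * (5 : ℕ).factorial) * (exp (|a| / 4) * exp (|a| / 4)) := by ring
      _ ≤ (4 ^ 5 * (5 : ℕ).factorial) * (exp (|γ| / 2) * exp (|log v| / 2)) :=
          mul_le_mul_of_nonneg_left h5 (by positivity)
      _ = c * exp (|log v| / 2) := by simp only [c]; ring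
      _ ≤ _ := mul_le_mul_of_nonneg_left h6 (by positivity)
  calc exp (-v) * |exp (z * a) - ∑ m ∈ Finset.range 5, (z * a) ^ m / m.factorial|
      ≤ exp (-v) * (z ^ 5 * (c * (v ^ (1 / 2 : ℝ) + v ^ (-(1 / 2) : ℝ)))) :=
        mul_le_mul_of_nonneg_left ((exp_sub_taylor_le _).trans h7) (exp_pos _).le
    _ = _ := by ring

/-- Reading off the constant coefficient of a polynomial that is `O(z^{n+1})`, and dividing by `z`. -/
lemma peel {c : ℝ} {q : ℝ → ℝ} (hq : Continuous q) {n : ℕ}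
    (h : (fun z => c + z * q z) =O[𝓝[>] 0] fun z : ℝ => z ^ (n + 1)) :
    c = 0 ∧ q =O[𝓝[>] 0] fun z : ℝ => z ^ n := by
  have hc : c = 0 := by
    have h1 : Tendsto (fun z => c + z * q z) (𝓝[>] 0) (𝓝 0) := by
      refine h.trans_tendsto ?_
      have : Continuous fun z : ℝ => z ^ (n + 1) := by fun_prop
      have := this.tendsto 0
      simp only [ne_eq, Nat.add_eq_zero_iff, one_ne_zero, and_false, not_false_eq_true, zero_pow]
        at this
      exact this.mono_left nhdsWithin_le_nhds
    have h2 : Tendsto (fun z => c + z * q z) (𝓝[>] 0) (𝓝 c) := by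
      have : Continuous fun z : ℝ => c + z * q z := by fun_prop
      have := this.tendsto 0
      simp only [zero_mul, add_zero] at this
      exact this.mono_left nhdsWithin_le_nhds
    exact tendsto_nhds_unique h2 h1
  refine ⟨hc, ?_⟩
  have h3 := (isBigO_refl (fun z : ℝ => z⁻¹) (𝓝[>] 0)).mul h
  refine (h3.congr' ?_ ?_)
  · filter_upwards [self_mem_nhdsWithin] with z hz
    have : z ≠ 0 := ne_of_gt hz
    rw [hc, zero_add, inv_mul_cancel_left₀ this]
  · filter_upwards [self_mem_nhdsWithin] with z hz
    have : z ≠ 0 := ne_of_gt hz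
    rw [pow_succ']
    rw [inv_mul_cancel_left₀ this]

lemma isBigO_of_le {f : ℝ → ℝ} {K : ℝ} {n : ℕ} (h : ∀ z : ℝ, 0 < z → z ≤ 1 / 4 → |f z| ≤ K * z ^ n) :
    f =O[𝓝[>] 0] fun z : ℝ => z ^ n := by
  refine IsBigO.of_bound K ?_
  filter_upwards [Ioc_mem_nhdsGT (show (0 : ℝ) < 1 / 4 by norm_num)] with z hz
  have := hz.1
  rw [Real.norm_eq_abs, Real.norm_of_nonneg (by positivity)]
  exact h z hz.1 hz.2

lemma pow_isBigO {m n : ℕ} (h : n ≤ m) :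
    (fun z : ℝ => z ^ m) =O[𝓝[>] 0] fun z : ℝ => z ^ n := by
  refine IsBigO.of_bound 1 ?_
  filter_upwards [Ioc_mem_nhdsGT (show (0 : ℝ) < 1 by norm_num)] with z hz
  have := hz.1
  rw [Real.norm_of_nonneg (by positivity), Real.norm_of_nonneg (by positivity), one_mul]
  exact pow_le_pow_of_le_one hz.1.le hz.2 h

/-- Exponentiating an expansion `a z² + b z³ + c z⁴ + O(z⁵)`. -/
lemma exp_expand {D : ℝ → ℝ} {a b c : ℝ}
    (hD : (fun z => D z - (a * z ^ 2 + b * z ^ 3 + c * z ^ 4)) =O[𝓝[>] 0] fun z : ℝ => z ^ 5) :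
    (fun z => exp (D z) - (1 + a * z ^ 2 + b * z ^ 3 + (c + a ^ 2 / 2) * z ^ 4))
      =O[𝓝[>] 0] fun z : ℝ => z ^ 5 := by
  have hm : ∀ (t : ℝ) {m n : ℕ}, n ≤ m → (fun z : ℝ => t * z ^ m) =O[𝓝[>] 0] fun z : ℝ => z ^ n :=
    fun t m n h => (pow_isBigO h).const_mul_left t
  have h3 : (fun z => D z - a * z ^ 2) =O[𝓝[>] 0] fun z : ℝ => z ^ 3 := by
    refine ((hD.trans (pow_isBigO (by norm_num))).add
      ((hm b le_rfl).add (hm c (by norm_num : 3 ≤ 4)))).congr_left fun z => ?_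
    ring
  have h2 : D =O[𝓝[>] 0] fun z : ℝ => z ^ 2 := by
    refine ((h3.trans (pow_isBigO (by norm_num))).add (hm a le_rfl)).congr_left fun z => ?_
    ring
  have h2' : (fun z => D z + a * z ^ 2) =O[𝓝[>] 0] fun z : ℝ => z ^ 2 := h2.add (hm a le_rfl)
  have h5 : (fun z => D z ^ 2 - a ^ 2 * z ^ 4) =O[𝓝[>] 0] fun z : ℝ => z ^ 5 := by
    refine (h3.mul h2').congr (fun z => ?_) (fun z => ?_) <;> ring
  have hlim : Tendsto D (𝓝[>] 0) (𝓝 0) := by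
    refine h2.trans_tendsto ?_
    have : Continuous fun z : ℝ => z ^ 2 := by fun_prop
    have := this.tendsto 0
    simp only [ne_eq, OfNat.ofNat_ne_zero, not_false_eq_true, zero_pow] at this
    exact this.mono_left nhdsWithin_le_nhds
  have he : (fun x : ℝ => exp x - (1 + x + x ^ 2 / 2)) =O[𝓝 0] fun x : ℝ => x ^ 3 := by
    refine IsBigO.of_bound 1 ?_
    filter_upwards [Metric.closedBall_mem_nhds (0 : ℝ) one_pos] with x hx
    have hx1 : |x| ≤ 1 := by simpa using hx
    have := Real.exp_bound hx1 (n := 3) (by norm_num)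
    simp only [Finset.sum_range_succ, Finset.sum_range_zero] at this
    norm_num [Nat.factorial] at this
    rw [Real.norm_eq_abs, Real.norm_eq_abs, abs_pow]
    refine this.trans ?_
    have : 0 ≤ |x| ^ 3 := by positivity
    linarith
  have he2 := he.comp_tendsto hlim
  have he3 : (fun z => exp (D z) - (1 + D z + D z ^ 2 / 2)) =O[𝓝[>] 0] fun z : ℝ => z ^ 5 := by
    refine he2.trans ((h2.pow 3).trans ?_)
    simp only [← pow_mul]
    exact pow_isBigO (by norm_num)
  refine ((he3.add hD).add (h5.const_mul_left (1 / 2))).congr_left fun z => ?_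
  ring

/-- Comparison of the two expansions of `e^{γz} Γ(1 + z)` up to order `z⁴`. -/
lemma N_values : N 0 = 1 ∧ N 1 = 0 ∧ N 2 = π ^ 2 / 6 ∧ N 3 = -2 * z3 ∧ N 4 = 3 * π ^ 4 / 20 := by
  obtain ⟨K1, hK1⟩ := Gamma_moments
  obtain ⟨K2, hK2⟩ := log_Gamma_taylor
  have h1 := isBigO_of_le hK1
  have h2 := exp_expand (D := fun z => eulerMascheroniConstant * z + log (Gamma (1 + z)))
    (a := (π ^ 2 / 6) / 2) (b := -z3 / 3) (c := (π ^ 4 / 90) / 4)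
    ((isBigO_of_le hK2).congr_left fun z => by ring)
  have h3 : (fun z : ℝ => (N 0 - 1) + z * (N 1 + z * ((N 2 / 2 - π ^ 2 / 12) + z *
      ((N 3 / 6 + z3 / 3) + z * ((N 4 / 24 - (π ^ 4 / 360 + (π ^ 2 / 12) ^ 2 / 2)) + z * 0)))))
      =O[𝓝[>] 0] fun z : ℝ => z ^ (4 + 1) := by
    refine (h2.sub h1).congr_left fun z => ?_
    simp only [Finset.sum_range_succ, Finset.sum_range_zero, Nat.factorial]
    push_cast
    ring
  obtain ⟨e0, h4⟩ := peel (by fun_prop) h3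
  obtain ⟨e1, h5⟩ := peel (n := 3) (by fun_prop) h4
  obtain ⟨e2, h6⟩ := peel (n := 2) (by fun_prop) h5
  obtain ⟨e3, h7⟩ := peel (n := 1) (by fun_prop) h6
  obtain ⟨e4, -⟩ := peel (n := 0) (by fun_prop) h7
  refine ⟨by linarith, e1, by linarith, by linarith, ?_⟩
  nlinarith [e4]

end MertensAux

/-! ### The prime zeta function near its singularity -/

namespace MertensAux

open Filter Topology MeasureTheory Set intervalIntegral Asymptotics

lemma neg_log_sub_le {q : ℝ} (h0 : 0 ≤ q) (h1 : q ≤ 1 / 2) : |-log (1 - q) - q| ≤ 2 * q ^ 2 := by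
  have h := abs_log_sub_add_sum_range_le (x := q) (by rw [abs_of_nonneg h0]; linarith) 1
  simp only [Finset.sum_range_one, abs_of_nonneg h0] at h
  have h2 : |-log (1 - q) - q| = |q ^ (0 + 1) / ((0 : ℕ) + 1) + log (1 - q)| := by
    rw [← abs_neg]
    congr 1
    push_cast
    ring
  rw [h2]
  refine h.trans ?_
  rw [div_le_iff₀ (by linarith)]
  have h3 : 0 ≤ q ^ 2 * (1 - 2 * q) := mul_nonneg (sq_nonneg q) (by linarith)
  have h4 : 2 * q ^ 2 * (1 - q) = q ^ (1 + 1) + q ^ 2 * (1 - 2 * q) := by ring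
  rw [h4]
  linarith

lemma wt_le_half (p : Nat.Primes) : wt p ≤ 1 / 2 := by
  have h2 : (2 : ℝ) ≤ (p : ℕ) := by exact_mod_cast p.2.two_le
  rw [wt]
  exact one_div_le_one_div_of_le (by norm_num) h2

lemma term_bounds (p : Nat.Primes) {s : ℝ} (hs : 0 ≤ s) :
    0 ≤ wt p * exp (-(s * log p)) ∧ wt p * exp (-(s * log p)) ≤ wt p := by
  have h1 : 0 ≤ log (p : ℕ) := log_natCast_nonneg _
  have h2 : exp (-(s * log p)) ≤ 1 := exp_le_one_iff.2 (by nlinarith)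
  exact ⟨mul_nonneg (wt_nonneg _) (exp_pos _).le, mul_le_of_le_one_right (wt_nonneg _) h2⟩

lemma summable_wt_sq : Summable fun p : Nat.Primes => 2 * wt p ^ 2 := by
  refine Summable.mul_left _ ?_
  have h : Summable fun n : ℕ => wt n ^ 2 := by
    simp only [wt, one_div, inv_pow]
    exact summable_nat_pow_inv.2 (by norm_num)
  exact h.comp_injective Nat.Primes.coe_nat_injective

/-- Uniform domination of the contribution of prime powers to the Euler product. -/
lemma bracket_bound (p : Nat.Primes) {s : ℝ} (hs : 0 ≤ s) :
    ‖-log (1 - wt p * exp (-(s * log p))) - wt p * exp (-(s * log p))‖ ≤ 2 * wt p ^ 2 := by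
  obtain ⟨h0, h1⟩ := term_bounds p hs
  refine (neg_log_sub_le h0 (h1.trans (wt_le_half p))).trans ?_
  have := pow_le_pow_left₀ h0 h1 2
  linarith

/-- The logarithm of the Euler product of `ζ(1+s)`, for real `s > 0`. -/
lemma exp_euler {s : ℝ} (hs : 0 < s) :
    riemannZeta ((1 + s : ℝ) : ℂ) =
      ((exp (∑' p : Nat.Primes, -log (1 - wt p * exp (-(s * log p)))) : ℝ) : ℂ) := by
  rw [← riemannZeta_eulerProduct_exp_log (by rw [Complex.ofReal_re]; linarith), Complex.ofReal_exp,
    Complex.ofReal_tsum]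
  congr 1
  refine tsum_congr fun p => ?_
  obtain ⟨h0, h1⟩ := term_bounds p hs.le
  have h2 := wt_le_half p
  rw [Complex.ofReal_neg, Complex.ofReal_log (by linarith), wt_exp p.2.pos, Complex.ofReal_sub,
    Complex.ofReal_one, Complex.ofReal_cpow (Nat.cast_nonneg _), Complex.ofReal_neg,
    Complex.ofReal_natCast]

/-- `log ζ(1 + s) + log s → 0`, since `ζ` has a simple pole with residue `1` at `1`. -/
lemma tendsto_euler :
    Tendsto (fun s => log s + ∑' p : Nat.Primes, -log (1 - wt p * exp (-(s * log p))))
      (𝓝[>] 0) (𝓝 0) := by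
  have h1 : Tendsto (fun s : ℝ => ((1 + s : ℝ) : ℂ)) (𝓝[>] 0) (𝓝[≠] 1) := by
    refine tendsto_nhdsWithin_iff.2 ⟨?_, ?_⟩
    · have : Continuous fun s : ℝ => ((1 + s : ℝ) : ℂ) := by fun_prop
      have := this.tendsto 0
      simp only [add_zero, Complex.ofReal_one] at this
      exact this.mono_left nhdsWithin_le_nhds
    · filter_upwards [self_mem_nhdsWithin] with s hs
      have : (s : ℝ) ≠ 0 := ne_of_gt hs
      simp [this]
  have h2 := (Complex.continuous_re.tendsto _).comp (riemannZeta_residue_one.comp h1)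
  have h3 : Tendsto (fun s : ℝ => s * exp (∑' p : Nat.Primes, -log (1 - wt p * exp (-(s * log p)))))
      (𝓝[>] 0) (𝓝 1) := by
    rw [Complex.one_re] at h2
    refine h2.congr' ?_
    filter_upwards [self_mem_nhdsWithin] with s hs
    simp only [Function.comp]
    rw [exp_euler hs, show ((1 + s : ℝ) : ℂ) - 1 = (s : ℂ) by push_cast; ring,
      ← Complex.ofReal_mul, Complex.ofReal_re]
  have h4 := (continuousAt_log one_ne_zero).tendsto.comp h3
  rw [log_one] at h4
  refine h4.congr' ?_
  filter_upwards [self_mem_nhdsWithin] with s hs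
  simp only [Function.comp]
  rw [log_mul (ne_of_gt hs) (exp_pos _).ne', log_exp]

/-- The prime zeta function near its singularity, to precision `o(1)`. -/
lemma W_tendsto :
    Tendsto (fun s => W s + log s) (𝓝[>] 0) (𝓝 (mertensC1 - eulerMascheroniConstant)) := by
  let R : ℝ → ℝ := fun s => ∑' p : Nat.Primes,
    (-log (1 - wt p * exp (-(s * log p))) - wt p * exp (-(s * log p)))
  have hR : Tendsto R (𝓝[>] 0) (𝓝 (∑' p : Nat.Primes, (-log (1 - wt p) - wt p))) := by
    refine tendsto_tsum_of_dominated_convergence summable_wt_sq ?_ ?_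
    · intro p
      have hlt := wt_le_half p
      have : ContinuousAt (fun s => -log (1 - wt p * exp (-(s * log p)))
          - wt p * exp (-(s * log p))) 0 := by
        have h : 1 - wt p * exp (-(0 * log p)) ≠ 0 := by
          rw [zero_mul, neg_zero, exp_zero]
          linarith
        fun_prop (disch := exact h)
      have := this.tendsto
      simp only [zero_mul, neg_zero, exp_zero, mul_one] at this
      exact this.mono_left nhdsWithin_le_nhds
    · filter_upwards [self_mem_nhdsWithin] with s hs p
      exact bracket_bound p (le_of_lt hs)
  have hc : mertensC1 - eulerMascheroniConstant
      = 0 - ∑' p : Nat.Primes, (-log (1 - wt p) - wt p) := by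
    have : ∀ p : Nat.Primes, log (1 / (1 - 1 / ((p : ℕ) : ℝ))) - 1 / ((p : ℕ) : ℝ)
        = -log (1 - wt p) - wt p := by
      intro p
      rw [one_div (1 - _), log_inv, wt]
    rw [mertensC1, tsum_congr this]
    ring
  rw [hc]
  refine (tendsto_euler.sub hR).congr' ?_
  filter_upwards [self_mem_nhdsWithin] with s hs
  have hs' : 0 < s := hs
  have h1 : Summable fun p : Nat.Primes =>
      (-log (1 - wt p * exp (-(s * log p))) - wt p * exp (-(s * log p))) :=
    Summable.of_norm_bounded summable_wt_sq fun p => bracket_bound p hs'.le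
  have h2 := h1.tsum_add (W_summable hs')
  simp only [sub_add_cancel] at h2
  simp only [h2, R, W]
  ring

end MertensAux

/-! ### Determining the constants of integration -/

namespace MertensAux

open Filter Topology MeasureTheory Set intervalIntegral Asymptotics Polynomial

lemma poly_bound (p : ℝ[X]) : ∃ A, ∀ y, |p.eval y| ≤ A * (1 + |y|) ^ p.natDegree := by
  refine ⟨∑ i ∈ Finset.range (p.natDegree + 1), |p.coeff i|, fun y => ?_⟩
  rw [Polynomial.eval_eq_sum_range, Finset.sum_mul]
  refine (Finset.abs_sum_le_sum_abs _ _).trans (Finset.sum_le_sum fun i hi => ?_)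
  rw [abs_mul, abs_pow]
  refine mul_le_mul_of_nonneg_left ?_ (abs_nonneg _)
  have hy := abs_nonneg y
  exact (pow_le_pow_left₀ hy (by linarith) i).trans
    (pow_le_pow_right₀ (by linarith) (Nat.lt_succ_iff.1 (Finset.mem_range.1 hi)))

lemma abel_poly {k m : ℕ} {P : ℝ[X]} {C : ℝ}
    (hF : ∀ u, 1 ≤ u → |F k u - P.eval (log u)| ≤ C * (1 + log u) ^ m / u) :
    ∃ C', ∀ s, 0 < s → |W s ^ k - ∫ v in Ioi (0 : ℝ), exp (-v) * P.eval (log v + -log s)|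
      ≤ C' * s ^ (1 / 2 : ℝ) := by
  obtain ⟨A, hA⟩ := poly_bound P
  obtain ⟨C', hC2⟩ := extend_bound hA hF
  exact ⟨_, fun s hs => abel P.continuous hA hC2 hs⟩

/-- The integral in `abel`, for a polynomial re-expanded around `-γ` in powers of
`x = log v + γ`. -/
lemma moment_integral {P : ℝ → ℝ} {l : ℝ} {q : ℕ → ℝ}
    (h : ∀ x, P (x - eulerMascheroniConstant + l) = ∑ j ∈ Finset.range 5, q j * x ^ j) :
    ∫ v in Ioi (0 : ℝ), exp (-v) * P (log v + l) = ∑ j ∈ Finset.range 5, q j * N j := by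
  have h1 : ∀ v : ℝ, exp (-v) * P (log v + l) = ∑ j ∈ Finset.range 5,
      q j * (exp (-v) * (log v + eulerMascheroniConstant) ^ j) := by
    intro v
    have := h (log v + eulerMascheroniConstant)
    rw [add_sub_cancel_right] at this
    rw [this, Finset.mul_sum]
    exact Finset.sum_congr rfl fun j _ => by ring
  simp only [h1]
  rw [integral_finsetSum _ fun j _ => (N_integrable j).const_mul _]
  exact Finset.sum_congr rfl fun j _ => by rw [MeasureTheory.integral_const_mul, N]

lemma tendsto_sqrt_zero : Tendsto (fun s : ℝ => s ^ (1 / 2 : ℝ)) (𝓝[>] 0) (𝓝 0) := by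
  have := (continuous_rpow_const (q := (1 / 2 : ℝ)) (by norm_num)).tendsto 0
  rw [zero_rpow (by norm_num)] at this
  exact this.mono_left nhdsWithin_le_nhds

/-- One step of the induction on `k`. The constant of integration `d` produced by `step` is
forced to vanish by comparison with the behaviour of `W(s)^{k+1}` as `s → 0+`. -/
lemma chain (k : ℕ) {H0 H1 P : ℝ[X]} (hder : ∀ y, (derivative H1).eval y = (k + 1) * H0.eval y)
    (hP : ∀ y, P.eval y = H1.eval y + (k + 1) * H0.eval y) (hdeg : P.natDegree ≤ k + 1)
    (hmom : ∀ l, ∫ v in Ioi (0 : ℝ), exp (-v) * P.eval (log v + l)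
      = (l + (mertensC1 - eulerMascheroniConstant)) ^ (k + 1))
    (hW : Tendsto (fun s => W s ^ (k + 1) -
      (-log s + (mertensC1 - eulerMascheroniConstant)) ^ (k + 1)) (𝓝[>] 0) (𝓝 0))
    (hG : ∃ C, ∀ u, 1 ≤ u → |G k u / u - H0.eval (log u)| ≤ C * (1 + log u) ^ k / u)
    (hF : ∃ C, ∀ u, 1 ≤ u → F k u ≤ C * (1 + log u) ^ k) :
    (∃ C, ∀ u, 1 ≤ u → |G (k + 1) u / u - H1.eval (log u)| ≤ C * (1 + log u) ^ (k + 1) / u) ∧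
    (∃ C, ∀ u, 1 ≤ u → F (k + 1) u ≤ C * (1 + log u) ^ (k + 1)) ∧
    (∃ C, ∀ u, 1 ≤ u → |F (k + 1) u - P.eval (log u)| ≤ C * (1 + log u) ^ k / u) := by
  obtain ⟨C1, hC1⟩ := hG
  obtain ⟨C2, hC2⟩ := hF
  obtain ⟨d, D, hD⟩ := step k H0.continuous (fun y => hder y ▸ H1.hasDerivAt y) hC1 hC2
  have hD0 : 0 ≤ D := by
    have := (abs_nonneg _).trans (hD 1 le_rfl).1
    simpa using this
  -- The integral in `abel` for `P + d` is `(log(1/s) + c₁ - γ)^{k+1} + d`, and `W(s)^{k+1}` has the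
  -- same asymptotics without `d`.
  have hd : d = 0 := by
    have h1 : ∀ u, 1 ≤ u → |F (k + 1) u - (P + C d).eval (log u)| ≤ D * (1 + log u) ^ k / u := by
      intro u hu
      refine (le_of_eq ?_).trans (hD u hu).2
      rw [eval_add, eval_C, hP]
      congr 1
      ring
    obtain ⟨C', hC'⟩ := abel_poly h1
    have hI : ∀ l, ∫ v in Ioi (0 : ℝ), exp (-v) * (P + C d).eval (log v + l)
        = (l + (mertensC1 - eulerMascheroniConstant)) ^ (k + 1) + d := by
      intro l
      obtain ⟨A, hA⟩ := poly_bound P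
      have h2 := integrableOn_poly_log P.continuous hA l
      have h3 : IntegrableOn (fun v : ℝ => exp (-v) * d) (Ioi 0) :=
        (integrableOn_exp_neg_Ioi 0).mul_const d
      simp only [eval_add, eval_C, mul_add]
      rw [integral_add h2 h3, hmom, MeasureTheory.integral_mul_const, integral_exp_neg_Ioi_zero,
        one_mul]
    simp only [hI] at hC'
    have h4 : Tendsto (fun s => W s ^ (k + 1) -
        ((-log s + (mertensC1 - eulerMascheroniConstant)) ^ (k + 1) + d)) (𝓝[>] 0) (𝓝 0) := by
      have hz := tendsto_sqrt_zero.const_mul C'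
      rw [mul_zero] at hz
      refine squeeze_zero_norm' ?_ hz
      filter_upwards [self_mem_nhdsWithin] with s hs
      exact hC' s hs
    have h5 := hW.sub h4
    have h6 : Tendsto (fun _ : ℝ => d) (𝓝[>] 0) (𝓝 (0 - 0)) := h5.congr fun s => by ring
    rw [sub_zero] at h6
    exact tendsto_nhds_unique tendsto_const_nhds h6
  rw [hd] at hD
  simp only [add_zero] at hD
  have hl : ∀ u : ℝ, 1 ≤ u → (1 + log u) ^ k ≤ (1 + log u) ^ (k + 1) := fun u hu =>
    pow_le_pow_right₀ (by linarith [log_nonneg hu]) (Nat.le_succ k)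
  have hF2 : ∀ u, 1 ≤ u → |F (k + 1) u - P.eval (log u)| ≤ D * (1 + log u) ^ k / u := by
    intro u hu
    rw [hP]
    exact (hD u hu).2
  refine ⟨⟨D, fun u hu => ?_⟩, ?_, ⟨D, hF2⟩⟩
  · refine (hD u hu).1.trans ?_
    have := hl u hu
    gcongr
  · obtain ⟨A, hA⟩ := poly_bound P
    have hA0 : 0 ≤ A := by
      have := (abs_nonneg _).trans (hA 0)
      simpa using this
    refine ⟨A + D, fun u hu => ?_⟩
    have h1 := (abs_le.1 (hF2 u hu)).2
    have hlog := log_nonneg hu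
    have h2 := (le_abs_self _).trans (hA (log u))
    rw [abs_of_nonneg hlog] at h2
    have h3 : (1 + log u) ^ P.natDegree ≤ (1 + log u) ^ (k + 1) :=
      pow_le_pow_right₀ (by linarith) hdeg
    have h4 : D * (1 + log u) ^ k / u ≤ D * (1 + log u) ^ (k + 1) :=
      (div_le_self (by positivity) hu).trans (mul_le_mul_of_nonneg_left (hl u hu) hD0)
    have h5 := mul_le_mul_of_nonneg_left h3 hA0
    linarith

/-- If `W = Y + O(s^{1/2})` with `Y` logarithmic in `s`, then `W^n - Y^n → 0`. -/
lemma pow_sub_tendsto {c K : ℝ} (h : ∀ s, 0 < s → |W s - (-log s + c)| ≤ K * s ^ (1 / 2 : ℝ))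
    {n : ℕ} (hn : n ≤ 4) : Tendsto (fun s => W s ^ n - (-log s + c) ^ n) (𝓝[>] 0) (𝓝 0) := by
  -- With `T = s^{1/16}`, `Z = T Y → 0` and `A = T⁻⁴ (W - Y) → 0`, the difference is a
  -- polynomial in `A, T, Z` without constant term.
  have hT : Tendsto (fun s : ℝ => s ^ (1 / 16 : ℝ)) (𝓝[>] 0) (𝓝 0) := by
    have := (continuous_rpow_const (q := (1 / 16 : ℝ)) (by norm_num)).tendsto 0
    rw [zero_rpow (by norm_num)] at this
    exact this.mono_left nhdsWithin_le_nhds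
  have hZ : Tendsto (fun s : ℝ => s ^ (1 / 16 : ℝ) * (-log s + c)) (𝓝[>] 0) (𝓝 0) := by
    have h1 := tendsto_log_mul_rpow_nhdsGT_zero (r := 1 / 16) (by norm_num)
    have h2 := h1.neg.add (hT.mul_const c)
    simp only [neg_zero, zero_mul, add_zero] at h2
    exact h2.congr fun s => by ring
  have hA : Tendsto (fun s : ℝ => (W s - (-log s + c)) * (s ^ (-(1 / 4) : ℝ))) (𝓝[>] 0) (𝓝 0) := by
    have h1 : Tendsto (fun s : ℝ => K * s ^ (1 / 4 : ℝ)) (𝓝[>] 0) (𝓝 0) := by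
      have := (continuous_rpow_const (q := (1 / 4 : ℝ)) (by norm_num)).tendsto 0
      rw [zero_rpow (by norm_num)] at this
      simpa using (this.mono_left nhdsWithin_le_nhds).const_mul K
    refine squeeze_zero_norm' ?_ h1
    filter_upwards [self_mem_nhdsWithin] with s hs
    have hs0 : (0 : ℝ) < s := hs
    rw [norm_mul, Real.norm_eq_abs, Real.norm_of_nonneg (rpow_nonneg hs0.le _)]
    refine (mul_le_mul_of_nonneg_right (h s hs0) (rpow_nonneg hs0.le _)).trans_eq ?_
    rw [mul_assoc, ← rpow_add hs0]
    norm_num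
  have hAT : ∀ s : ℝ, 0 < s → W s = (-log s + c) +
      ((W s - (-log s + c)) * (s ^ (-(1 / 4) : ℝ))) * (s ^ (1 / 16 : ℝ)) ^ 4 := by
    intro s hs
    rw [← rpow_natCast, ← rpow_mul hs.le, mul_assoc, ← rpow_add hs]
    norm_num
  have key : ∀ f : ℝ × ℝ × ℝ → ℝ, Continuous f → f (0, 0, 0) = 0 →
      Tendsto (fun s : ℝ => f ((W s - (-log s + c)) * (s ^ (-(1 / 4) : ℝ)), s ^ (1 / 16 : ℝ),
        s ^ (1 / 16 : ℝ) * (-log s + c))) (𝓝[>] 0) (𝓝 0) := by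
    intro f hf h0
    have := hf.tendsto (0, 0, 0)
    rw [h0, nhds_prod_eq, nhds_prod_eq] at this
    exact this.comp (hA.prodMk (hT.prodMk hZ))
  have fin : ∀ f : ℝ × ℝ × ℝ → ℝ, Continuous f → f (0, 0, 0) = 0 →
      (∀ A T Y : ℝ, (Y + A * T ^ 4) ^ n - Y ^ n = f (A, T, T * Y)) →
      Tendsto (fun s => W s ^ n - (-log s + c) ^ n) (𝓝[>] 0) (𝓝 0) := by
    intro f hf h0 hfe
    refine (key f hf h0).congr' ?_
    filter_upwards [self_mem_nhdsWithin] with s hs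
    rw [← hfe, ← hAT s hs]
  interval_cases n
  · exact fin (fun _ => 0) (by fun_prop) rfl (by intros; ring)
  · exact fin (fun x => x.1 * x.2.1 ^ 4) (by fun_prop) (by norm_num) (by intros; ring)
  · exact fin (fun x => 2 * x.1 * x.2.1 ^ 3 * x.2.2 + x.1 ^ 2 * x.2.1 ^ 8) (by fun_prop)
      (by norm_num) (by intros; ring)
  · exact fin (fun x => 3 * x.1 * x.2.1 ^ 2 * x.2.2 ^ 2 + 3 * x.1 ^ 2 * x.2.1 ^ 7 * x.2.2
      + x.1 ^ 3 * x.2.1 ^ 12) (by fun_prop) (by norm_num) (by intros; ring)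
  · exact fin (fun x => 4 * x.1 * x.2.1 * x.2.2 ^ 3 + 6 * x.1 ^ 2 * x.2.1 ^ 6 * x.2.2 ^ 2
      + 4 * x.1 ^ 3 * x.2.1 ^ 11 * x.2.2 + x.1 ^ 4 * x.2.1 ^ 16) (by fun_prop)
      (by norm_num) (by intros; ring)

end MertensAux

/-! ### The main terms -/

namespace MertensAux

open Filter Topology MeasureTheory Set intervalIntegral Asymptotics Polynomial

/-- The main-term polynomials `P_k` (`0 ≤ k ≤ 4`), with
`F k u = P_k(log u) + O((log u)^{k-1}/u)` for `k ≥ 1`. -/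
noncomputable def Pol : ℕ → ℝ[X]
  | 0 => 1
  | 1 => X + C mertensC1
  | 2 => (X + C mertensC1) ^ 2 - C (π ^ 2 / 6)
  | 3 => (X + C mertensC1) ^ 3 - C (π ^ 2 / 2) * (X + C mertensC1) + C (2 * z3)
  | _ => (X + C mertensC1) ^ 4 - C (π ^ 2) * (X + C mertensC1) ^ 2
      + C (8 * z3) * (X + C mertensC1) + C (π ^ 4 / 60)

/-- The solution of `H + H' = P_k` with `H' = k H_{k-1}`: the main term of `G k u / u`. -/
noncomputable def Hol : ℕ → ℝ[X]
  | 0 => 1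
  | 1 => Pol 1 - 1
  | 2 => Pol 2 - C 2 * Pol 1 + C 2
  | 3 => Pol 3 - C 3 * Pol 2 + C 6 * Pol 1 - C 6
  | _ => Pol 4 - C 4 * Pol 3 + C 12 * Pol 2 - C 24 * Pol 1 + C 24

/-- The expectation of `P_1(log v + l)`, for `v` exponentially distributed, is
`(l + c₁ - γ)^1`; `mom2`, `mom3`, `mom4` are the analogues for `P_2`, `P_3`, `P_4`. -/
lemma mom1 (l : ℝ) : ∫ v in Ioi (0 : ℝ), exp (-v) * (Pol 1).eval (log v + l)
    = (l + (mertensC1 - eulerMascheroniConstant)) ^ 1 := by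
  obtain ⟨n0, n1, n2, n3, n4⟩ := N_values
  set Y := l + (mertensC1 - eulerMascheroniConstant) with hY
  rw [moment_integral (P := fun y => (Pol 1).eval y) (q := fun | 0 => Y | 1 => 1 | _ => 0)]
  · simp only [Finset.sum_range_succ, Finset.sum_range_zero, n0, n1]
    ring
  · intro x
    simp only [Finset.sum_range_succ, Finset.sum_range_zero, Pol, eval_add, eval_X, eval_C]
    rw [hY]
    ring

lemma mom2 (l : ℝ) : ∫ v in Ioi (0 : ℝ), exp (-v) * (Pol 2).eval (log v + l)
    = (l + (mertensC1 - eulerMascheroniConstant)) ^ 2 := by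
  obtain ⟨n0, n1, n2, n3, n4⟩ := N_values
  set Y := l + (mertensC1 - eulerMascheroniConstant) with hY
  rw [moment_integral (P := fun y => (Pol 2).eval y)
    (q := fun | 0 => Y ^ 2 - π ^ 2 / 6 | 1 => 2 * Y | 2 => 1 | _ => 0)]
  · simp only [Finset.sum_range_succ, Finset.sum_range_zero, n0, n1, n2]
    ring
  · intro x
    simp only [Finset.sum_range_succ, Finset.sum_range_zero, Pol, eval_add, eval_X, eval_C,
      eval_sub, eval_pow]
    rw [hY]
    ring

lemma mom3 (l : ℝ) : ∫ v in Ioi (0 : ℝ), exp (-v) * (Pol 3).eval (log v + l)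
    = (l + (mertensC1 - eulerMascheroniConstant)) ^ 3 := by
  obtain ⟨n0, n1, n2, n3, n4⟩ := N_values
  set Y := l + (mertensC1 - eulerMascheroniConstant) with hY
  rw [moment_integral (P := fun y => (Pol 3).eval y)
    (q := fun | 0 => Y ^ 3 - π ^ 2 / 2 * Y + 2 * z3 | 1 => 3 * Y ^ 2 - π ^ 2 / 2
              | 2 => 3 * Y | 3 => 1 | _ => 0)]
  · simp only [Finset.sum_range_succ, Finset.sum_range_zero, n0, n1, n2, n3]
    ring
  · intro x
    simp only [Finset.sum_range_succ, Finset.sum_range_zero, Pol, eval_add, eval_X, eval_C,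
      eval_sub, eval_pow, eval_mul]
    rw [hY]
    ring

lemma mom4 (l : ℝ) : ∫ v in Ioi (0 : ℝ), exp (-v) * (Pol 4).eval (log v + l)
    = (l + (mertensC1 - eulerMascheroniConstant)) ^ 4 := by
  obtain ⟨n0, n1, n2, n3, n4⟩ := N_values
  set Y := l + (mertensC1 - eulerMascheroniConstant) with hY
  rw [moment_integral (P := fun y => (Pol 4).eval y)
    (q := fun | 0 => Y ^ 4 - π ^ 2 * Y ^ 2 + 8 * z3 * Y + π ^ 4 / 60
              | 1 => 4 * Y ^ 3 - 2 * π ^ 2 * Y + 8 * z3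
              | 2 => 6 * Y ^ 2 - π ^ 2 | 3 => 4 * Y | _ => 1)]
  · simp only [Finset.sum_range_succ, Finset.sum_range_zero, n0, n1, n2, n3, n4]
    ring
  · intro x
    simp only [Finset.sum_range_succ, Finset.sum_range_zero, Pol, eval_add, eval_X, eval_C,
      eval_sub, eval_pow, eval_mul]
    rw [hY]
    ring

lemma Hol_deriv {k : ℕ} (hk : k ≤ 3) (y : ℝ) :
    (derivative (Hol (k + 1))).eval y = (k + 1) * (Hol k).eval y := by
  interval_cases k <;>
  · simp [Hol, Pol, derivative_pow]
    try ring

lemma Pol_eq {k : ℕ} (hk : k ≤ 3) (y : ℝ) :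
    (Pol (k + 1)).eval y = (Hol (k + 1)).eval y + (k + 1) * (Hol k).eval y := by
  interval_cases k <;>
  · simp [Hol, Pol]
    try ring

lemma Pol_deg {k : ℕ} (hk : k ≤ 3) : (Pol (k + 1)).natDegree ≤ k + 1 := by
  interval_cases k <;>
  · simp only [Pol]
    compute_degree

/-- Four applications of `chain`, starting from `F 0 = 1` on `[0, ∞)`. -/
lemma F_four : ∃ K, ∀ u, 1 ≤ u → |F 4 u - (Pol 4).eval (log u)| ≤ K * (1 + log u) ^ 3 / u := by
  have hG0 : ∃ K, ∀ u, 1 ≤ u → |G 0 u / u - (Hol 0).eval (log u)| ≤ K * (1 + log u) ^ 0 / u := by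
    refine ⟨0, fun u hu => ?_⟩
    rw [G_zero (by linarith), div_self (by linarith)]
    simp [Hol]
  have hF0 : ∃ K, ∀ u, 1 ≤ u → F 0 u ≤ K * (1 + log u) ^ 0 := by
    refine ⟨1, fun u hu => ?_⟩
    simp only [F]
    split_ifs <;> norm_num
  have hW1 : Tendsto (fun s => W s ^ (0 + 1) -
      (-log s + (mertensC1 - eulerMascheroniConstant)) ^ (0 + 1)) (𝓝[>] 0) (𝓝 0) := by
    have := W_tendsto.sub_const (mertensC1 - eulerMascheroniConstant)
    rw [sub_self] at this
    exact this.congr fun s => by ring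
  obtain ⟨hG1, hF1, K1, hK1⟩ := chain 0 (Hol_deriv (by norm_num)) (Pol_eq (by norm_num))
    (Pol_deg (by norm_num)) mom1 hW1 hG0 hF0
  -- The case `k = 1` improves the error term of `W` from `o(1)` to `O(s^{1/2})`.
  obtain ⟨K, hK⟩ := abel_poly hK1
  simp only [mom1] at hK
  have hW : ∀ s, 0 < s → |W s - (-log s + (mertensC1 - eulerMascheroniConstant))|
      ≤ K * s ^ (1 / 2 : ℝ) := by
    intro s hs
    simpa using hK s hs
  obtain ⟨hG2, hF2, -⟩ := chain 1 (Hol_deriv (by norm_num)) (Pol_eq (by norm_num))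
    (Pol_deg (by norm_num)) mom2 (pow_sub_tendsto hW (by norm_num)) hG1 hF1
  obtain ⟨hG3, hF3, -⟩ := chain 2 (Hol_deriv (by norm_num)) (Pol_eq (by norm_num))
    (Pol_deg (by norm_num)) mom3 (pow_sub_tendsto hW (by norm_num)) hG2 hF2
  exact (chain 3 (Hol_deriv (by norm_num)) (Pol_eq (by norm_num))
    (Pol_deg (by norm_num)) mom4 (pow_sub_tendsto hW (by norm_num)) hG3 hF3).2.2

end MertensAux

theorem mertens_S4 :
    ∃ C : ℝ, ∀ x : ℝ, 3 ≤ x →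
      |mertensS 4 x -
          ((Real.log (Real.log x) + mertensC1) ^ 4
            - Real.pi ^ 2 * (Real.log (Real.log x) + mertensC1) ^ 2
            + 8 * (riemannZeta 3).re * (Real.log (Real.log x) + mertensC1)
            + Real.pi ^ 4 / 60)| ≤
        C * (Real.log (Real.log x)) ^ 3 / Real.log x := by
  obtain ⟨K, hK⟩ := MertensAux.F_four
  have h3 : 1 < log 3 := (lt_log_iff_exp_lt (by norm_num)).2 (by linarith [exp_one_lt_d9])
  have hL : 0 < log (log 3) := log_pos h3
  -- As `log log x ≥ log log 3 > 0`, the factor `1 + log log x` is at most a constant times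
  -- `log log x`.
  refine ⟨K * (1 / log (log 3) + 1) ^ 3, fun x hx => ?_⟩
  have hx3 : log 3 ≤ log x := log_le_log (by norm_num) hx
  have hLx : log (log 3) ≤ log (log x) := log_le_log (by linarith) hx3
  have h := hK (log x) (by linarith)
  have hK0 : 0 ≤ K := by
    have := (abs_nonneg _).trans (hK 1 le_rfl)
    simpa using this
  rw [MertensAux.mertensS_eq 4 (by linarith)]
  refine (le_of_eq ?_).trans (h.trans ?_)
  · simp [MertensAux.Pol, MertensAux.z3]
  · have h5 : 1 + log (log x) ≤ (1 / log (log 3) + 1) * log (log x) := by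
      have : 1 ≤ 1 / log (log 3) * log (log x) := by
        rw [one_div, inv_mul_eq_div, le_div_iff₀ hL]
        linarith
      linarith
    have h6 : (1 + log (log x)) ^ 3 ≤ (1 / log (log 3) + 1) ^ 3 * log (log x) ^ 3 := by
      rw [← mul_pow]
      exact pow_le_pow_left₀ (by linarith) h5 3
    have h7 : 0 < log x := by linarith
    rw [mul_assoc]
    exact div_le_div_of_nonneg_right (mul_le_mul_of_nonneg_left h6 hK0) h7.le
end

section
/- As x → ∞, the quantity Σ_{p ≤ x} 1/p − log log x converges to γ − Σ_p ( log(1/(1−1/p)) − 1/p ), where both sums range over primes; that is, Mertens' constant c_1 := lim_{x→∞} (Σ_{p ≤ x} 1/p − log log x) exists and satisfies c_1 = γ − Σ_p ( log(1/(1−1/p)) − 1/p ). -/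
/-!
Write `P(x) = ∑_{p ≤ x} 1/p` and `T = ∑_p (log (1/(1 - 1/p)) - 1/p)`.

*Existence of the limit.* Taking logarithms in Legendre's factorization of `n!`, together with
Chebyshev's bound `θ(n) ≤ n log 4`, gives Mertens' first theorem
`∑_{p ≤ n} log p / p = log n + O(1)` (`mertens_first`). The numbers
`z_k = (log p / p if k = p is prime, else 0) - (log k - log (k - 1))` therefore have bounded partial
sums, so `∑ z_k / log k` converges by Dirichlet's test; since `(log k - log (k - 1)) / log k` differs
from `log log k - log log (k - 1)` by a summable amount, `P(x) - log log x` tends to some `c`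
(`exists_mertens_limit`).

*Value of the limit.* Instead of evaluating a Laplace transform of `log`, compare with the harmonic
numbers `H(u) = ∑_{n ≤ u} 1/n = log u + γ + o(1)`: the function `P(e^u) - H(u)` tends to `c - γ`.
As `s → 0⁺`, so does its Laplace mean `∫_0^∞ e^{-v} (P(e^{v/s}) - H(v/s)) dv`, which equals
`∑_p p^{-1-s} - ∑_n e^{-sn}/n = ∑_p p^{-1-s} + log (1 - e^{-s})`
(`tendsto_prime_series_add_log`). By the Euler product `∑_p p^{-1-s}` is `log ζ(1 + s)` minus a
series tending to `T` by dominated convergence, and `ζ(1 + s) (1 - e^{-s}) → 1` by the simple pole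
of `ζ`. Hence the same quantity tends to `-T`, and `c = γ - T`.
-/
open Real Filter
open MeasureTheory Topology

/-! ### Mertens' first theorem -/

lemma factorial_valuation_bounds {p n : ℕ} (hp : p.Prime) :
    (n : ℝ) / p - 1 ≤ (n.factorial.factorization p : ℝ) ∧
      (n.factorial.factorization p : ℝ) ≤ (n : ℝ) / (p - 1) := by
  have := Fact.mk hp
  have hp1 : (1 : ℝ) < p := by exact_mod_cast hp.one_lt
  rw [Nat.factorization_def _ hp]
  constructor
  · have h1 : n / p ≤ padicValNat p n.factorial := by
      rw [padicValNat_factorial (b := Nat.log p n + 2) (by omega)]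
      have := Finset.single_le_sum (f := fun i => n / p ^ i) (s := Finset.Ico 1 (Nat.log p n + 2))
        (fun _ _ => Nat.zero_le _) (a := 1) (by simp)
      simpa using this
    have h2 : (n : ℝ) / p < (n / p : ℕ) + 1 := by
      rw [← Nat.floor_div_eq_div (K := ℝ)]
      exact Nat.lt_floor_add_one _
    have h3 : ((n / p : ℕ) : ℝ) ≤ padicValNat p n.factorial := by exact_mod_cast h1
    linarith
  · rw [le_div_iff₀ (by linarith)]
    have h := sub_one_mul_padicValNat_factorial (p := p) n
    have h1 : (p - 1) * padicValNat p n.factorial ≤ n := h ▸ Nat.sub_le _ _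
    have h2 : (((p - 1 : ℕ) : ℝ)) * padicValNat p n.factorial ≤ n := by exact_mod_cast h1
    rw [Nat.cast_sub hp.one_le] at h2
    push_cast at h2
    linarith

lemma log_factorial_eq_sum (n : ℕ) :
    Real.log n.factorial = ∑ p ∈ (Finset.Iic n).filter Nat.Prime,
      (n.factorial.factorization p : ℝ) * Real.log p := by
  rw [Real.log_nat_eq_sum_factorization]
  refine Finsupp.sum_of_support_subset _ (fun p hp => ?_) _ (by simp)
  have hp' : p ∈ n.factorial.primeFactors := by simpa using hp
  have h := Nat.prime_of_mem_primeFactors hp'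
  simp only [Finset.mem_filter, Finset.mem_Iic]
  exact ⟨(h.dvd_factorial).1 (Nat.dvd_of_mem_primeFactors hp'), h⟩

lemma log_factorial_bounds {n : ℕ} (hn : 1 ≤ n) :
    (n : ℝ) * Real.log n - n ≤ Real.log n.factorial ∧
      Real.log n.factorial ≤ n * Real.log n := by
  have hn' : (0 : ℝ) < n := by exact_mod_cast hn
  have hf : (0 : ℝ) < n.factorial := by exact_mod_cast n.factorial_pos
  constructor
  · have h := Real.pow_div_factorial_le_exp (n : ℝ) hn'.le n
    have h2 := Real.log_le_log (by positivity) h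
    rw [Real.log_div (by positivity) hf.ne', Real.log_pow, Real.log_exp] at h2
    linarith
  · rw [← Real.log_pow]
    exact Real.log_le_log hf (by exact_mod_cast Nat.factorial_le_pow n)

lemma log_div_mul_sub_one_le {m : ℕ} (hm : 2 ≤ m) :
    Real.log m / (m * (m - 1)) ≤ 4 * (m : ℝ) ^ (-(3 / 2) : ℝ) := by
  have hm' : (2 : ℝ) ≤ m := by exact_mod_cast hm
  have h1 : Real.log m ≤ 2 * (m : ℝ) ^ (1 / 2 : ℝ) := by
    have := Real.log_le_rpow_div (x := (m : ℝ)) (by positivity) (ε := 1 / 2) (by norm_num)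
    linarith
  rw [div_le_iff₀ (by nlinarith)]
  have h2 : (m : ℝ) ^ (1 / 2 : ℝ) = (m : ℝ) ^ (-(3 / 2) : ℝ) * (m : ℝ) ^ 2 := by
    rw [← Real.rpow_natCast, ← Real.rpow_add (by linarith)]; norm_num
  have h3 : (0 : ℝ) ≤ (m : ℝ) ^ (-(3 / 2) : ℝ) := by positivity
  rw [h2] at h1
  nlinarith [mul_nonneg h3 (show (0 : ℝ) ≤ 4 * (m * (m - 1)) - 2 * m ^ 2 by nlinarith)]

/-- Mertens' first theorem: `∑_{p ≤ n} log p / p = log n + O(1)`. -/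
theorem mertens_first : ∃ C : ℝ, ∀ n : ℕ, 1 ≤ n →
    |∑ p ∈ (Finset.Iic n).filter Nat.Prime, Real.log p / p - Real.log n| ≤ C := by
  have hsum : Summable fun m : ℕ => 4 * (m : ℝ) ^ (-(3 / 2) : ℝ) :=
    (Real.summable_nat_rpow.2 (by norm_num)).mul_left 4
  set K := ∑' m : ℕ, 4 * (m : ℝ) ^ (-(3 / 2) : ℝ) with hK
  refine ⟨max (Real.log 4) (1 + K), fun n hn => ?_⟩
  have hn' : (0 : ℝ) < n := by exact_mod_cast hn
  obtain ⟨hl, hu⟩ := log_factorial_bounds hn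
  rw [log_factorial_eq_sum] at hl hu
  set s := (Finset.Iic n).filter Nat.Prime with hs
  have hprime : ∀ p ∈ s, p.Prime := fun p hp => (Finset.mem_filter.1 hp).2
  have hlog : ∀ p ∈ s, 0 ≤ Real.log (p : ℝ) := fun p _ => Real.log_natCast_nonneg p
  have htheta : ∑ p ∈ s, Real.log (p : ℝ) ≤ Real.log 4 * n := by
    have h := Chebyshev.theta_le_log4_mul_x hn'.le
    rw [Chebyshev.theta_eq_sum_Icc, Nat.floor_natCast] at h
    exact h
  have h1 : (n : ℝ) * ∑ p ∈ s, Real.log p / p ≤ n * Real.log n + Real.log 4 * n := by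
    calc (n : ℝ) * ∑ p ∈ s, Real.log p / p
        = ∑ p ∈ s, ((n : ℝ) / p) * Real.log p := by
          rw [Finset.mul_sum]; exact Finset.sum_congr rfl fun p _ => by ring
      _ ≤ ∑ p ∈ s, ((n.factorial.factorization p : ℝ) * Real.log p + Real.log p) := by
          refine Finset.sum_le_sum fun p hp => ?_
          have := (factorial_valuation_bounds (n := n) (hprime p hp)).1
          nlinarith [hlog p hp]
      _ ≤ _ := by rw [Finset.sum_add_distrib]; linarith
  have hrest : ∑ p ∈ s, Real.log p / ((p : ℝ) * (p - 1)) ≤ K := by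
    refine le_trans (Finset.sum_le_sum fun p hp => log_div_mul_sub_one_le (hprime p hp).two_le) ?_
    exact hsum.sum_le_tsum _ fun _ _ => by positivity
  have h2 : (n : ℝ) * Real.log n - n ≤ n * ∑ p ∈ s, Real.log p / p + n * K := by
    calc (n : ℝ) * Real.log n - n ≤ _ := hl
      _ ≤ ∑ p ∈ s, (n * (Real.log p / p) + n * (Real.log p / ((p : ℝ) * (p - 1)))) := by
          refine Finset.sum_le_sum fun p hp => ?_
          have h := (factorial_valuation_bounds (n := n) (hprime p hp)).2
          have hp1 : (1 : ℝ) < p := by exact_mod_cast (hprime p hp).one_lt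
          have hp2 : (p : ℝ) - 1 ≠ 0 := by linarith
          refine (mul_le_mul_of_nonneg_right h (hlog p hp)).trans_eq ?_
          field_simp
          ring
      _ ≤ _ := by
          rw [Finset.sum_add_distrib, ← Finset.mul_sum, ← Finset.mul_sum]
          nlinarith
  rw [abs_le]
  constructor
  · have : Real.log n - 1 ≤ ∑ p ∈ s, Real.log p / p + K :=
      le_of_mul_le_mul_left (by linarith) hn'
    linarith [le_max_right (Real.log 4) (1 + K)]
  · have : ∑ p ∈ s, Real.log p / p ≤ Real.log n + Real.log 4 :=
      le_of_mul_le_mul_left (by linarith) hn'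
    linarith [le_max_left (Real.log 4) (1 + K)]
/-! ### Existence of the limit -/

/-- Used with `x = log k` and `y = log (k - 1)`. -/
lemma abs_log_increment_sub_le {x y : ℝ} (hy : 0 < y) (hxy : y ≤ x) :
    |(x - y) / x - (Real.log x - Real.log y)| ≤ (x - y) ^ 2 / y ^ 2 := by
  have hx : 0 < x := hy.trans_le hxy
  have h1 := Real.log_le_sub_one_of_pos (div_pos hx hy)
  have h2 := Real.log_le_sub_one_of_pos (div_pos hy hx)
  rw [Real.log_div hx.ne' hy.ne'] at h1
  rw [Real.log_div hy.ne' hx.ne'] at h2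
  have e1 : (x - y) / x = 1 - y / x := by field_simp
  have e2 : x / y - 1 - (1 - y / x) = (x - y) ^ 2 / (x * y) := by field_simp
  have e3 : (x - y) ^ 2 / (x * y) ≤ (x - y) ^ 2 / y ^ 2 := by
    gcongr
    nlinarith
  rw [abs_le]
  constructor <;> linarith [show 0 ≤ (x - y) ^ 2 / y ^ 2 by positivity]

/-- The terms `(log k - log (k - 1)) / log k` and `log log k - log log (k - 1)`, with `k = i + 3`,
differ by `O(1 / k ^ 2)`. -/
lemma summable_log_increment : Summable fun i : ℕ =>
    (Real.log (i + 3 : ℕ) - Real.log (i + 2 : ℕ)) / Real.log (i + 3 : ℕ) -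
      (Real.log (Real.log (i + 3 : ℕ)) - Real.log (Real.log (i + 2 : ℕ))) := by
  have hs : Summable fun i : ℕ => 4 * (1 / ((i + 2 : ℕ) : ℝ) ^ 2) :=
    ((summable_nat_add_iff 2).2 (Real.summable_one_div_nat_pow.2 one_lt_two)).mul_left 4
  refine Summable.of_norm_bounded hs fun i => ?_
  have hk : (2 : ℝ) ≤ (i + 2 : ℕ) := by push_cast; linarith [(Nat.cast_nonneg i : (0 : ℝ) ≤ i)]
  have hk3 : ((i + 3 : ℕ) : ℝ) = (i + 2 : ℕ) + 1 := by push_cast; ring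
  rw [hk3]
  generalize ((i + 2 : ℕ) : ℝ) = k at *
  have hy : 1 / 2 ≤ Real.log k := by
    have := Real.log_le_log (by norm_num) hk
    linarith [Real.log_two_gt_d9]
  have hxy : Real.log k ≤ Real.log (k + 1) := Real.log_le_log (by linarith) (by linarith)
  have hd : Real.log (k + 1) - Real.log k ≤ 1 / k := by
    rw [← Real.log_div (by linarith) (by linarith)]
    refine (Real.log_le_sub_one_of_pos (by positivity)).trans_eq ?_
    field_simp
    ring
  refine (abs_log_increment_sub_le (by linarith) hxy).trans ?_
  calc (Real.log (k + 1) - Real.log k) ^ 2 / Real.log k ^ 2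
      ≤ (1 / k) ^ 2 / (1 / 2) ^ 2 := by
        gcongr
    _ = 4 * (1 / k ^ 2) := by ring

/-- Starting the index at `3` keeps `log k` and `log (k - 1)` positive; the prime `2` is
split off. -/
lemma sum_primes_shift (g : ℕ → ℝ) (N : ℕ) :
    ∑ p ∈ (Finset.Iic (N + 2)).filter Nat.Prime, g p =
      g 2 + ∑ i ∈ Finset.range N, if (i + 3).Prime then g (i + 3) else 0 := by
  have h : Finset.Iic (N + 2) = Finset.range (3 + N) := by ext; simp; omega
  rw [Finset.sum_filter, h, Finset.sum_range_add]
  congr 1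
  · simp [Finset.sum_range_succ, Nat.prime_two, Nat.not_prime_zero, Nat.not_prime_one]
  · simp only [add_comm 3]

/-- Partial summation, in the form of Dirichlet's test applied to `1 / log k` and the increments of
`∑_{p ≤ k} log p / p - log k`. -/
theorem exists_mertens_limit_nat : ∃ c : ℝ, Tendsto
    (fun n : ℕ => ∑ p ∈ (Finset.Iic n).filter Nat.Prime, 1 / (p : ℝ) - Real.log (Real.log n))
    atTop (𝓝 c) := by
  obtain ⟨C, hC⟩ := mertens_first
  let f : ℕ → ℝ := fun i => (Real.log (i + 3 : ℕ))⁻¹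
  let z : ℕ → ℝ := fun i => (if (i + 3).Prime then Real.log (i + 3 : ℕ) / (i + 3 : ℕ) else 0) -
    (Real.log (i + 3 : ℕ) - Real.log (i + 2 : ℕ))
  have hlogpos : ∀ i : ℕ, 0 < Real.log (i + 3 : ℕ) := fun i =>
    Real.log_pos (by push_cast; linarith [(Nat.cast_nonneg i : (0 : ℝ) ≤ i)])
  have hf : Antitone f := fun i j hij => by
    refine inv_anti₀ (hlogpos i) (Real.log_le_log (by positivity) ?_)
    exact_mod_cast Nat.add_le_add_right hij 3
  have hf0 : Tendsto f atTop (𝓝 0) :=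
    (Real.tendsto_log_atTop.comp (tendsto_natCast_atTop_atTop.comp
      (tendsto_add_atTop_nat 3))).inv_tendsto_atTop
  have htele : ∀ (h : ℝ → ℝ) (N : ℕ),
      ∑ i ∈ Finset.range N, (h (i + 3 : ℕ) - h (i + 2 : ℕ)) = h (N + 2 : ℕ) - h 2 := by
    intro h N
    exact Finset.sum_range_sub (fun i => h (i + 2 : ℕ)) N
  have hz : ∀ n, ‖∑ i ∈ Finset.range n, z i‖ ≤
      C + |Real.log 2 - Real.log (2 : ℕ) / (2 : ℕ)| := by
    intro n
    have h := hC (n + 2) (by omega)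
    rw [sum_primes_shift (fun k => Real.log k / k)] at h
    have e : ∑ i ∈ Finset.range n, z i =
        (Real.log (2 : ℕ) / (2 : ℕ) + (∑ i ∈ Finset.range n,
          if (i + 3).Prime then Real.log (i + 3 : ℕ) / (i + 3 : ℕ) else 0) -
            Real.log (n + 2 : ℕ)) + (Real.log 2 - Real.log (2 : ℕ) / (2 : ℕ)) := by
      simp only [z]
      rw [Finset.sum_sub_distrib, htele Real.log]
      ring
    rw [e]
    exact (norm_add_le _ _).trans (add_le_add h le_rfl)
  obtain ⟨c₁, hc₁⟩ := cauchySeq_tendsto_of_complete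
    (hf.cauchySeq_series_mul_of_tendsto_zero_of_bounded hf0 hz)
  have hc₂ := summable_log_increment.hasSum.tendsto_sum_nat
  have h := (hc₁.add hc₂).const_add (1 / (2 : ℕ) - Real.log (Real.log 2))
  refine ⟨_, (tendsto_add_atTop_iff_nat 2).1 (h.congr fun N => ?_)⟩
  rw [sum_primes_shift (fun k => 1 / (k : ℝ)), ← Finset.sum_add_distrib]
  have e : ∀ i : ℕ, f i • z i + ((Real.log (i + 3 : ℕ) - Real.log (i + 2 : ℕ)) /
      Real.log (i + 3 : ℕ) - (Real.log (Real.log (i + 3 : ℕ)) - Real.log (Real.log (i + 2 : ℕ)))) =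
      (if (i + 3).Prime then 1 / ((i + 3 : ℕ) : ℝ) else 0) -
        (Real.log (Real.log (i + 3 : ℕ)) - Real.log (Real.log (i + 2 : ℕ))) := by
    intro i
    have := (hlogpos i).ne'
    simp only [f, z, smul_eq_mul]
    split_ifs
    · field_simp
      ring
    · field_simp
      ring
  rw [Finset.sum_congr rfl fun i _ => e i, Finset.sum_sub_distrib,
    htele fun t => Real.log (Real.log t)]
  ring

lemma tendsto_log_floor_sub_log :
    Tendsto (fun x : ℝ => Real.log ⌊x⌋₊ - Real.log x) atTop (𝓝 0) := by
  have h := (Real.continuousAt_log one_ne_zero).tendsto.comp (tendsto_nat_floor_div_atTop (R := ℝ))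
  rw [Real.log_one] at h
  refine h.congr' ?_
  filter_upwards [eventually_ge_atTop 1] with x hx
  have : (0 : ℝ) < ⌊x⌋₊ := by exact_mod_cast Nat.floor_pos.2 hx
  exact Real.log_div this.ne' (by linarith)

theorem exists_mertens_limit : ∃ c : ℝ, Tendsto
    (fun x : ℝ => ∑ p ∈ (Finset.Iic ⌊x⌋₊).filter Nat.Prime, 1 / (p : ℝ) - Real.log (Real.log x))
    atTop (𝓝 c) := by
  obtain ⟨c, hc⟩ := exists_mertens_limit_nat
  refine ⟨c, ?_⟩
  have h1 : Tendsto (fun x : ℝ => Real.log ⌊x⌋₊ / Real.log x) atTop (𝓝 1) := by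
    have h := (tendsto_log_floor_sub_log.div_atTop Real.tendsto_log_atTop).add_const 1
    rw [zero_add] at h
    refine h.congr' ?_
    filter_upwards [eventually_gt_atTop 1] with x hx
    have := (Real.log_pos hx).ne'
    field_simp
    ring
  have h2 := (Real.continuousAt_log one_ne_zero).tendsto.comp h1
  rw [Real.log_one] at h2
  have h := (hc.comp tendsto_nat_floor_atTop).add h2
  rw [add_zero] at h
  refine h.congr' ?_
  filter_upwards [eventually_ge_atTop 2] with x hx
  have hfl : (1 : ℝ) < ⌊x⌋₊ := by
    exact_mod_cast (Nat.le_floor (by exact_mod_cast hx) : 2 ≤ ⌊x⌋₊)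
  simp only [Function.comp]
  rw [Real.log_div (Real.log_pos hfl).ne' (Real.log_pos (by linarith)).ne']
  ring


/-! ### Laplace means and their Abelian theorem -/

/-- A generalized Dirichlet series with nonnegative coefficients `a i` and exponents `l i` is the
Laplace mean of its summatory function `A u = ∑_{l i ≤ u} a i`. The variable is rescaled so that
`s` occurs only inside `A`. -/
lemma tsum_exp_eq_laplace {ι : Type*} [Countable ι] (a l : ι → ℝ) (ha : ∀ i, 0 ≤ a i)
    (hl : ∀ i, 0 ≤ l i) {s : ℝ} (hs : 0 < s)
    (hsum : Summable fun i => a i * Real.exp (-(s * l i))) (A : ℝ → ℝ)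
    (hA : ∀ u, 0 ≤ u → HasSum (fun i => if l i ≤ u then a i else 0) (A u)) :
    ∑' i, a i * Real.exp (-(s * l i)) = ∫ v in Set.Ioi (0 : ℝ), Real.exp (-v) * A (v / s) := by
  let F : ι → ℝ → ℝ := fun i => (Set.Ici (s * l i)).indicator fun v => a i * Real.exp (-v)
  have hexp : ∀ c : ℝ, IntegrableOn (fun v => Real.exp (-v)) (Set.Ioi c) := fun c =>
    integrableOn_exp_neg_Ioi c
  have hFint : ∀ i, Integrable (F i) (volume.restrict (Set.Ioi 0)) := fun i =>
    ((hexp 0).const_mul (a i)).indicator measurableSet_Ici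
  have hFval : ∀ i, ∫ v in Set.Ioi (0 : ℝ), F i v = a i * Real.exp (-(s * l i)) := by
    intro i
    have h0 : 0 ≤ s * l i := mul_nonneg hs.le (hl i)
    rw [← integral_Ici_eq_integral_Ioi, setIntegral_indicator measurableSet_Ici,
      Set.inter_eq_right.2 (Set.Ici_subset_Ici.2 h0), integral_Ici_eq_integral_Ioi,
      integral_const_mul, integral_exp_neg_Ioi]
  have hFn : ∀ i v, 0 ≤ F i v := fun i v =>
    Set.indicator_nonneg (fun v _ => mul_nonneg (ha i) (Real.exp_pos _).le) v
  have key := hasSum_integral_of_summable_integral_norm hFint (by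
    simpa only [Real.norm_of_nonneg (hFn _ _), hFval] using hsum)
  simp only [hFval] at key
  rw [key.tsum_eq]
  refine setIntegral_congr_fun measurableSet_Ioi fun v hv => ?_
  have h := (hA (v / s) (div_nonneg (Set.mem_Ioi.1 hv).le hs.le)).mul_left (Real.exp (-v))
  rw [← h.tsum_eq]
  refine tsum_congr fun i => ?_
  simp only [F, Set.indicator, Set.mem_Ici, le_div_iff₀ hs, mul_comm (l i) s]
  split_ifs <;> ring

/-- Abelian theorem: the Laplace means of a bounded function tend to its limit at infinity. -/
lemma tendsto_laplace_of_tendsto {G : ℝ → ℝ} {L B : ℝ} (hm : Measurable G)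
    (hB : ∀ u, 0 ≤ u → |G u| ≤ B) (hG : Tendsto G atTop (𝓝 L)) :
    Tendsto (fun s : ℝ => ∫ v in Set.Ioi (0 : ℝ), Real.exp (-v) * G (v / s)) (𝓝[>] 0) (𝓝 L) := by
  have hlim : L = ∫ v in Set.Ioi (0 : ℝ), Real.exp (-v) * L := by
    rw [integral_mul_const, integral_exp_neg_Ioi_zero, one_mul]
  rw [hlim]
  refine tendsto_integral_filter_of_dominated_convergence (fun v => Real.exp (-v) * B)
    (Eventually.of_forall fun s => ?_) ?_ ((integrableOn_exp_neg_Ioi 0).mul_const B) ?_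
  · exact ((Real.measurable_exp.comp measurable_neg).mul
      (hm.comp (measurable_id.div_const s))).aestronglyMeasurable
  · filter_upwards [self_mem_nhdsWithin] with s hs
    filter_upwards [ae_restrict_mem measurableSet_Ioi] with v hv
    rw [norm_mul, Real.norm_of_nonneg (Real.exp_pos _).le]
    exact mul_le_mul_of_nonneg_left (hB _ (div_nonneg (Set.mem_Ioi.1 hv).le (Set.mem_Ioi.1 hs).le))
      (Real.exp_pos _).le
  · filter_upwards [ae_restrict_mem measurableSet_Ioi] with v hv
    refine (hG.comp ?_).const_mul _
    exact tendsto_inv_nhdsGT_zero.const_mul_atTop (Set.mem_Ioi.1 hv)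

/-! ### The Euler product near the pole of zeta -/

lemma prime_rpow_neg_bounds (p : Nat.Primes) {s : ℝ} (hs : 0 ≤ s) :
    0 < (p : ℝ) ^ (-(1 + s)) ∧ (p : ℝ) ^ (-(1 + s)) ≤ (p : ℝ)⁻¹ ∧ (p : ℝ)⁻¹ ≤ 1 / 2 := by
  have hp : (2 : ℝ) ≤ p := by exact_mod_cast p.2.two_le
  refine ⟨by positivity, ?_, ?_⟩
  · rw [← Real.rpow_neg_one]
    exact Real.rpow_le_rpow_of_exponent_le (by linarith) (by linarith)
  · rw [one_div]
    exact inv_anti₀ (by norm_num) hp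

lemma abs_neg_log_one_sub_sub_le {y : ℝ} (hy : y ≤ 1 / 2) :
    |-Real.log (1 - y) - y| ≤ 2 * y ^ 2 := by
  have h1 := Real.log_le_sub_one_of_pos (show 0 < 1 - y by linarith)
  have h2 := Real.log_le_sub_one_of_pos (show 0 < (1 - y)⁻¹ by
    have : 0 < 1 - y := by linarith
    positivity)
  rw [Real.log_inv] at h2
  have h3 : (1 - y)⁻¹ - 1 ≤ y + 2 * y ^ 2 := by
    have : (1 - y)⁻¹ ≤ 1 + y + 2 * y ^ 2 := by
      rw [inv_le_iff_one_le_mul₀ (by linarith)]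
      nlinarith [mul_nonneg (sq_nonneg y) (show (0:ℝ) ≤ 1 - 2 * y by linarith)]
    linarith
  rw [abs_le]
  constructor <;> nlinarith [sq_nonneg y]

lemma summable_primes_inv_sq : Summable fun p : Nat.Primes => 2 * ((p : ℝ)⁻¹) ^ 2 := by
  have h := (Nat.Primes.summable_rpow (r := -2)).2 (by norm_num)
  refine (h.mul_left 2).congr fun p => ?_
  rw [Real.rpow_neg (by positivity), inv_pow]
  norm_cast

lemma abs_log_term_le (p : Nat.Primes) {s : ℝ} (hs : 0 ≤ s) :
    |-Real.log (1 - (p : ℝ) ^ (-(1 + s))) - (p : ℝ) ^ (-(1 + s))| ≤ 2 * ((p : ℝ)⁻¹) ^ 2 := by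
  obtain ⟨h0, h1, h2⟩ := prime_rpow_neg_bounds p hs
  refine (abs_neg_log_one_sub_sub_le (h1.trans h2)).trans ?_
  gcongr

lemma tendsto_tsum_log_terms : Tendsto
    (fun s : ℝ => ∑' p : Nat.Primes,
      (-Real.log (1 - (p : ℝ) ^ (-(1 + s))) - (p : ℝ) ^ (-(1 + s)))) (𝓝[>] 0)
    (𝓝 (∑' p : Nat.Primes, (Real.log (1 / (1 - 1 / (p : ℝ))) - 1 / (p : ℝ)))) := by
  refine tendsto_tsum_of_dominated_convergence summable_primes_inv_sq (fun p => ?_) ?_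
  · obtain ⟨h0, h1, h2⟩ := prime_rpow_neg_bounds p le_rfl
    have hp : (0 : ℝ) < p := by exact_mod_cast p.2.pos
    have hc : Tendsto (fun s : ℝ => (p : ℝ) ^ (-(1 + s))) (𝓝[>] 0) (𝓝 (1 / (p : ℝ))) := by
      have : ContinuousAt (fun s : ℝ => (p : ℝ) ^ (-(1 + s))) 0 :=
        ContinuousAt.rpow continuousAt_const (by fun_prop) (Or.inl hp.ne')
      have h := this.tendsto.mono_left (nhdsWithin_le_nhds (s := Set.Ioi 0))
      simpa [Real.rpow_neg_one] using h
    have hne : 1 - 1 / (p : ℝ) ≠ 0 := by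
      rw [one_div]
      linarith
    rw [one_div (1 - 1 / (p : ℝ)), Real.log_inv]
    exact (((hc.const_sub 1).log hne).neg).sub hc
  · filter_upwards [self_mem_nhdsWithin] with s hs p
    exact abs_log_term_le p (Set.mem_Ioi.1 hs).le

lemma summable_primes_rpow {s : ℝ} (hs : 0 < s) :
    Summable fun p : Nat.Primes => (p : ℝ) ^ (-(1 + s)) :=
  Nat.Primes.summable_rpow.2 (by linarith)

/-- The logarithm of the Euler product of `ζ(1 + s)`, solved for the prime zeta function. -/
lemma tsum_primes_rpow_eq {s : ℝ} (hs : 0 < s) :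
    ∑' p : Nat.Primes, (p : ℝ) ^ (-(1 + s)) =
      Real.log (∑' n : ℕ, 1 / (n : ℝ) ^ (1 + s)) - ∑' p : Nat.Primes,
        (-Real.log (1 - (p : ℝ) ^ (-(1 + s))) - (p : ℝ) ^ (-(1 + s))) := by
  have hT : Summable fun p : Nat.Primes =>
      (-Real.log (1 - (p : ℝ) ^ (-(1 + s))) - (p : ℝ) ^ (-(1 + s))) :=
    Summable.of_norm_bounded summable_primes_inv_sq fun p => abs_log_term_le p hs.le
  have hexp : Real.exp (∑' p : Nat.Primes, -Real.log (1 - (p : ℝ) ^ (-(1 + s)))) =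
      ∑' n : ℕ, 1 / (n : ℝ) ^ (1 + s) := by
    have hre : 1 < ((1 + s : ℝ) : ℂ).re := by rw [Complex.ofReal_re]; linarith
    have h := riemannZeta_eulerProduct_exp_log hre
    rw [zeta_eq_tsum_one_div_nat_cpow hre] at h
    have hL : ((∑' p : Nat.Primes, -Real.log (1 - (p : ℝ) ^ (-(1 + s))) : ℝ) : ℂ) =
        ∑' p : Nat.Primes, -Complex.log (1 - (p : ℂ) ^ (-((1 + s : ℝ) : ℂ))) := by
      rw [Complex.ofReal_tsum]
      congr 1
      funext p
      obtain ⟨h0, h1, h2⟩ := prime_rpow_neg_bounds p hs.le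
      rw [Complex.ofReal_neg, Complex.ofReal_log (by linarith), Complex.ofReal_sub,
        Complex.ofReal_cpow (by positivity)]
      simp
    have hR : ((∑' n : ℕ, 1 / (n : ℝ) ^ (1 + s) : ℝ) : ℂ) =
        ∑' n : ℕ, 1 / (n : ℂ) ^ ((1 + s : ℝ) : ℂ) := by
      rw [Complex.ofReal_tsum]
      congr 1
      funext n
      rw [Complex.ofReal_div, Complex.ofReal_cpow (by positivity)]
      simp
    rw [← hL, ← hR, ← Complex.ofReal_exp] at h
    exact Complex.ofReal_injective h
  rw [← hexp, Real.log_exp, eq_sub_iff_add_eq, ← (summable_primes_rpow hs).tsum_add hT]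
  exact tsum_congr fun p => by ring

/-! ### Comparison with the harmonic numbers -/

lemma harmonic_floor_mono : Monotone fun u : ℝ => (harmonic ⌊u⌋₊ : ℝ) := by
  intro u v huv
  simp only [harmonic, Rat.cast_sum]
  exact Finset.sum_le_sum_of_subset_of_nonneg
    (Finset.range_subset_range.2 (Nat.floor_mono huv)) fun i _ _ => by positivity

lemma primeSum_mono : Monotone fun u : ℝ =>
    ∑ p ∈ (Finset.Iic ⌊Real.exp u⌋₊).filter Nat.Prime, 1 / (p : ℝ) := by
  intro u v huv
  refine Finset.sum_le_sum_of_subset_of_nonneg (Finset.filter_subset_filter _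
    (Finset.Iic_subset_Iic.2 (Nat.floor_mono (Real.exp_le_exp.2 huv)))) fun i _ _ => by positivity

lemma tendsto_harmonic_floor_sub_log :
    Tendsto (fun u : ℝ => (harmonic ⌊u⌋₊ : ℝ) - Real.log u) atTop
      (𝓝 Real.eulerMascheroniConstant) := by
  have h := (Real.tendsto_harmonic_sub_log.comp (tendsto_nat_floor_atTop (α := ℝ))).add
    tendsto_log_floor_sub_log
  rw [add_zero] at h
  refine h.congr fun u => ?_
  simp only [Function.comp]
  ring

/-- Convergence bounds the difference for large `u`, monotonicity for the remaining `u`. -/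
lemma exists_bound_of_tendsto_sub {P H : ℝ → ℝ} {L : ℝ} (hP : Monotone P) (hH : Monotone H)
    (hP0 : ∀ u, 0 ≤ P u) (hH0 : ∀ u, 0 ≤ H u)
    (h : Tendsto (fun u => P u - H u) atTop (𝓝 L)) : ∃ B, ∀ u, |P u - H u| ≤ B := by
  obtain ⟨N, hN⟩ := eventually_atTop.1 ((h.abs).eventually_lt_const (lt_add_one |L|))
  refine ⟨max (|L| + 1) (P N + H N), fun u => ?_⟩
  rcases le_total N u with hu | hu
  · exact (hN u hu).le.trans (le_max_left _ _)
  · refine le_trans ?_ (le_max_right _ _)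
    rw [abs_le]
    constructor <;> linarith [hP hu, hH hu, hP0 u, hH0 u]

lemma hasSum_harmonic_exp {s : ℝ} (hs : 0 < s) :
    HasSum (fun n : ℕ => 1 / ((n : ℝ) + 1) * Real.exp (-(s * ((n : ℝ) + 1))))
      (-Real.log (1 - Real.exp (-s))) := by
  have h := Real.hasSum_pow_div_log_of_abs_lt_one (x := Real.exp (-s)) (by
    rw [abs_of_pos (Real.exp_pos _), Real.exp_lt_one_iff]; linarith)
  refine h.congr_fun fun n => ?_
  rw [← Real.exp_nat_mul]
  push_cast
  rw [show ((n : ℝ) + 1) * -s = -(s * (n + 1)) by ring]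
  ring

lemma harmonic_laplace {s : ℝ} (hs : 0 < s) :
    -Real.log (1 - Real.exp (-s)) =
      ∫ v in Set.Ioi (0 : ℝ), Real.exp (-v) * (harmonic ⌊v / s⌋₊ : ℝ) := by
  have h := hasSum_harmonic_exp hs
  rw [← h.tsum_eq]
  refine tsum_exp_eq_laplace (fun n : ℕ => 1 / ((n : ℝ) + 1)) (fun n : ℕ => (n : ℝ) + 1)
    (fun n => by positivity) (fun n => by positivity) hs h.summable
    (fun u => (harmonic ⌊u⌋₊ : ℝ)) fun u hu => ?_
  have hmem : ∀ n : ℕ, (n : ℝ) + 1 ≤ u ↔ n ∈ Finset.range ⌊u⌋₊ := fun n => by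
    rw [Finset.mem_range, ← Nat.succ_le_iff, Nat.le_floor_iff hu]
    push_cast
    rfl
  have e : (harmonic ⌊u⌋₊ : ℝ) = ∑ n ∈ Finset.range ⌊u⌋₊,
      if (n : ℝ) + 1 ≤ u then 1 / ((n : ℝ) + 1) else 0 := by
    rw [harmonic, Rat.cast_sum]
    refine Finset.sum_congr rfl fun n hn => ?_
    rw [if_pos ((hmem n).2 hn)]
    push_cast
    rw [one_div]
  rw [e]
  exact hasSum_sum_of_ne_finset_zero fun n hn => if_neg fun h => hn ((hmem n).1 h)

lemma primes_laplace {s : ℝ} (hs : 0 < s) :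
    ∑' p : Nat.Primes, (p : ℝ) ^ (-(1 + s)) =
      ∫ v in Set.Ioi (0 : ℝ), Real.exp (-v) *
        ∑ p ∈ (Finset.Iic ⌊Real.exp (v / s)⌋₊).filter Nat.Prime, 1 / (p : ℝ) := by
  have hterm : ∀ p : Nat.Primes, 1 / (p : ℝ) * Real.exp (-(s * Real.log p)) =
      (p : ℝ) ^ (-(1 + s)) := fun p => by
    have hp : (0 : ℝ) < p := by exact_mod_cast p.2.pos
    rw [neg_add, Real.rpow_add hp, Real.rpow_neg_one, Real.rpow_def_of_pos hp, one_div]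
    ring_nf
  have hsum := summable_primes_rpow hs
  simp only [← hterm] at hsum ⊢
  refine tsum_exp_eq_laplace (fun p : Nat.Primes => 1 / (p : ℝ)) (fun p => Real.log p)
    (fun p => by positivity) (fun p => Real.log_natCast_nonneg _) hs hsum
    (fun u => ∑ p ∈ (Finset.Iic ⌊Real.exp u⌋₊).filter Nat.Prime, 1 / (p : ℝ)) fun u _ => ?_
  have hmem : ∀ p : Nat.Primes, Real.log p ≤ u ↔ (p : ℕ) ≤ ⌊Real.exp u⌋₊ := fun p => by
    have hp : (0 : ℝ) < p := by exact_mod_cast p.2.pos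
    rw [Nat.le_floor_iff (Real.exp_pos u).le, Real.log_le_iff_le_exp hp]
  have e : ∑ p ∈ (Finset.Iic ⌊Real.exp u⌋₊).filter Nat.Prime, 1 / (p : ℝ) =
      ∑ p ∈ (Finset.Iic ⌊Real.exp u⌋₊).subtype Nat.Prime,
        if Real.log (p : ℕ) ≤ u then 1 / ((p : ℕ) : ℝ) else 0 := by
    rw [← Finset.sum_subtype_eq_sum_filter]
    refine Finset.sum_congr rfl fun p hp => ?_
    rw [if_pos ((hmem p).2 (by simpa using hp))]
  rw [e]
  exact hasSum_sum_of_ne_finset_zero fun p hp =>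
    if_neg fun h => hp (Finset.mem_subtype.2 (Finset.mem_Iic.2 ((hmem p).1 h)))

/-- The Abelian theorem applied to `P(e^u) - H(u)`, which tends to `c - γ`; here
`log (1 - e^{-s}) = -∑_n e^{-sn}/n` is minus the Laplace mean of `H`. -/
lemma tendsto_prime_series_add_log {c : ℝ} (hc : Tendsto
    (fun x : ℝ => ∑ p ∈ (Finset.Iic ⌊x⌋₊).filter Nat.Prime, 1 / (p : ℝ) - Real.log (Real.log x))
    atTop (𝓝 c)) :
    Tendsto (fun s : ℝ => ∑' p : Nat.Primes, (p : ℝ) ^ (-(1 + s)) +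
      Real.log (1 - Real.exp (-s))) (𝓝[>] 0) (𝓝 (c - Real.eulerMascheroniConstant)) := by
  set P : ℝ → ℝ := fun u => ∑ p ∈ (Finset.Iic ⌊Real.exp u⌋₊).filter Nat.Prime, 1 / (p : ℝ)
    with hPdef
  set H : ℝ → ℝ := fun u => (harmonic ⌊u⌋₊ : ℝ) with hHdef
  have hP : Monotone P := primeSum_mono
  have hH : Monotone H := harmonic_floor_mono
  have hlim : Tendsto (fun u => P u - H u) atTop (𝓝 (c - Real.eulerMascheroniConstant)) := by
    refine ((hc.comp Real.tendsto_exp_atTop).sub tendsto_harmonic_floor_sub_log).congr fun u => ?_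
    simp only [Function.comp, Real.log_exp, P, H]
    ring
  obtain ⟨B, hB⟩ := exists_bound_of_tendsto_sub hP hH
    (fun u => Finset.sum_nonneg fun _ _ => by positivity)
    (fun u => by
      simp only [H, harmonic, Rat.cast_sum]
      exact Finset.sum_nonneg fun _ _ => by positivity) hlim
  refine (tendsto_laplace_of_tendsto (hP.measurable.sub hH.measurable) (fun u _ => hB u)
    hlim).congr' ?_
  filter_upwards [self_mem_nhdsWithin] with s hs
  have hs : 0 < s := hs
  have h1 := primes_laplace hs
  have h2 := harmonic_laplace hs
  -- A nonzero Bochner integral forces integrability, since the integral is `0` otherwise.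
  have i1 : Integrable (fun v => Real.exp (-v) * P (v / s)) (volume.restrict (Set.Ioi 0)) := by
    refine not_imp_comm.1 integral_undef ?_
    rw [← h1]
    have := (summable_primes_rpow hs).tsum_pos (fun p => by positivity) ⟨2, Nat.prime_two⟩
      (prime_rpow_neg_bounds _ hs.le).1
    exact this.ne'
  have i2 : Integrable (fun v => Real.exp (-v) * H (v / s)) (volume.restrict (Set.Ioi 0)) := by
    refine not_imp_comm.1 integral_undef ?_
    rw [← h2]
    have h3 : Real.exp (-s) < 1 := Real.exp_lt_one_iff.2 (by linarith)
    have := Real.log_neg (x := 1 - Real.exp (-s)) (by linarith) (by linarith [Real.exp_pos (-s)])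
    linarith
  have e : ∫ v in Set.Ioi (0 : ℝ), Real.exp (-v) * (P - H) (v / s) =
      ∫ v in Set.Ioi (0 : ℝ), (Real.exp (-v) * P (v / s) - Real.exp (-v) * H (v / s)) :=
    integral_congr_ae (Eventually.of_forall fun v => mul_sub _ _ _)
  rw [e, integral_sub i1 i2, ← h1, ← h2]
  ring

/-- The simple pole of `ζ` at `1`: `ζ(1 + s) (1 - e^{-s}) → 1`. -/
lemma tendsto_log_zeta_add_log : Tendsto
    (fun s : ℝ => Real.log (∑' n : ℕ, 1 / (n : ℝ) ^ (1 + s)) + Real.log (1 - Real.exp (-s)))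
    (𝓝[>] 0) (𝓝 0) := by
  have hz : Tendsto (fun s : ℝ => s * ∑' n : ℕ, 1 / (n : ℝ) ^ (1 + s)) (𝓝[>] 0) (𝓝 1) := by
    have hshift : Tendsto (fun s : ℝ => 1 + s) (𝓝[>] 0) (𝓝[>] 1) := by
      refine tendsto_nhdsWithin_iff.2 ⟨?_, ?_⟩
      · have : Tendsto (fun s : ℝ => 1 + s) (𝓝 0) (𝓝 (1 + 0)) := tendsto_id.const_add 1
        rw [add_zero] at this
        exact this.mono_left nhdsWithin_le_nhds
      · filter_upwards [self_mem_nhdsWithin] with s hs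
        have hs : 0 < s := hs
        exact Set.mem_Ioi.2 (by linarith)
    refine (tendsto_sub_mul_tsum_nat_rpow.comp hshift).congr fun s => ?_
    simp only [Function.comp, add_sub_cancel_left]
  have he : Tendsto (fun s : ℝ => (1 - Real.exp (-s)) / s) (𝓝[>] 0) (𝓝 1) := by
    have hd : HasDerivAt (fun s : ℝ => 1 - Real.exp (-s)) 1 0 := by
      have := ((hasDerivAt_neg (0 : ℝ)).exp).const_sub 1
      simpa using this
    have h := hd.tendsto_slope_zero_right
    refine h.congr fun s => ?_
    simp [div_eq_inv_mul]
  have hm := hz.mul he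
  rw [one_mul] at hm
  have h := (Real.continuousAt_log one_ne_zero).tendsto.comp hm
  rw [Real.log_one] at h
  refine h.congr' ?_
  filter_upwards [self_mem_nhdsWithin, hz.eventually_const_lt one_pos] with s hs hpos
  have hs : 0 < s := hs
  have h3 : Real.exp (-s) < 1 := Real.exp_lt_one_iff.2 (by linarith)
  have hZ := pos_of_mul_pos_right hpos hs.le
  rw [← Real.log_mul hZ.ne' (by linarith)]
  simp only [Function.comp]
  congr 1
  field_simp

/-! ### Mertens' constant -/

theorem mertens_constant_exists :
    Filter.Tendsto
      (fun x : ℝ =>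
        (∑ p ∈ (Finset.Iic ⌊x⌋₊).filter Nat.Prime, 1 / (p : ℝ)) -
          Real.log (Real.log x))
      Filter.atTop
      (nhds (Real.eulerMascheroniConstant -
        ∑' p : Nat.Primes, (Real.log (1 / (1 - 1 / (p : ℝ))) - 1 / (p : ℝ)))) := by
  obtain ⟨c, hc⟩ := exists_mertens_limit
  have h1 := tendsto_prime_series_add_log hc
  have h2 : Tendsto (fun s : ℝ => ∑' p : Nat.Primes, (p : ℝ) ^ (-(1 + s)) +
      Real.log (1 - Real.exp (-s))) (𝓝[>] 0) (𝓝 (0 - ∑' p : Nat.Primes,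
        (Real.log (1 / (1 - 1 / (p : ℝ))) - 1 / (p : ℝ)))) := by
    refine (tendsto_log_zeta_add_log.sub tendsto_tsum_log_terms).congr' ?_
    filter_upwards [self_mem_nhdsWithin] with s hs
    rw [tsum_primes_rpow_eq hs]
    ring
  have h3 := tendsto_nhds_unique h1 h2
  have h4 : c = Real.eulerMascheroniConstant - ∑' p : Nat.Primes,
      (Real.log (1 / (1 - 1 / (p : ℝ))) - 1 / (p : ℝ)) := by linarith
  rwa [← h4]
end

section
/- For x ≥ 3, Σ_{p ≤ x} 1/p = log log x + c_1 + O(1/log x), the sum ranging over primes p ≤ x. -/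
/-!
The proof has two independent halves: the asymptotic formula with *some* constant `c`, and the
identification of `c` with `mertensC1`.

For the formula, `log N!` is evaluated in two ways, by Legendre's formula and by Stirling's bound.
With Chebyshev's bound `θ(N) ≤ N log 4` this yields Mertens' first theorem
`∑_{p ≤ t} log p / p = log t + O(1)` (`mertens_first`). Abel summation against `1 / log t` then gives
`A(x) := ∑_{p ≤ x} 1 / p = log log x + c + O(1 / log x)` (`exists_mertens_const`).

For the constant, the prime zeta function `P(1+δ) = ∑_p p^(-1-δ)` is computed as `δ → 0⁺` in two ways.

* Abel summation gives `P(1+δ) = δ ∫_0^∞ exp(-δu) A(exp u) du`. Inserting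
  `A(exp u) = log u + c + O(u^(-1/2))` and `∫_0^∞ exp(-t) log t dt = -γ`, one finds
  `P(1+δ) + log δ → c - γ` (`tendsto_tsum_primes_add_log`).
* The Euler product gives `log ζ(1+δ) = P(1+δ) + ∑_p (-log(1 - p^(-1-δ)) - p^(-1-δ))`. The last sum
  converges to its value at `δ = 0` by dominated convergence (`tendsto_eulerRem`), and
  `log (δ ζ(1+δ)) → 0` because of the simple pole of `ζ` (`tendsto_log_zeta`).

Comparing the two limits, `c - γ + ∑_p (log(1/(1-1/p)) - 1/p) = 0`.
-/

open Real

/-! ### Mertens' first theorem -/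

lemma summable_log_div : Summable (fun n : ℕ => log n / ((n : ℝ) * (n - 1))) := by
  have h : Summable (fun n : ℕ => 4 * (n : ℝ) ^ (-(3/2) : ℝ)) :=
    (Real.summable_nat_rpow.2 (by norm_num)).mul_left 4
  refine Summable.of_nonneg_of_le (fun n => ?_) (fun n => ?_) h
  · rcases Nat.lt_or_ge n 2 with hn | hn
    · interval_cases n <;> simp
    · have : (2 : ℝ) ≤ n := by exact_mod_cast hn
      exact div_nonneg (log_natCast_nonneg n) (mul_nonneg (by linarith) (by linarith))
  · rcases Nat.lt_or_ge n 2 with hn | hn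
    · interval_cases n
      · simp
      · simp
    · have h2 : (2 : ℝ) ≤ n := by exact_mod_cast hn
      have h0 : (0 : ℝ) < n := by linarith
      have hl := log_natCast_le_rpow_div n (ε := 1/2) (by norm_num)
      rw [div_le_iff₀ (mul_pos h0 (by linarith))]
      have e : (n : ℝ) ^ (-(3/2) : ℝ) * (n * n) = (n : ℝ) ^ (1/2 : ℝ) := by
        rw [← pow_two, ← Real.rpow_natCast, ← Real.rpow_add h0]; norm_num
      have hp : 0 < (n : ℝ) ^ (-(3/2) : ℝ) := by positivity
      calc log n ≤ 2 * (n : ℝ) ^ (1/2 : ℝ) := by linarith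
        _ = 2 * ((n : ℝ) ^ (-(3/2) : ℝ) * (n * n)) := by rw [e]
        _ ≤ 4 * (n : ℝ) ^ (-(3/2) : ℝ) * (n * (n - 1)) := by
          have : (n : ℝ) ^ (-(3/2) : ℝ) * n * (2 * n) ≤ (n : ℝ) ^ (-(3/2) : ℝ) * n * (4 * (n - 1)) := by
            exact mul_le_mul_of_nonneg_left (by linarith) (by positivity)
          linarith

lemma log_factorial_eq (N : ℕ) :
    log (N.factorial) = ∑ p ∈ (Finset.Icc 0 N).filter Nat.Prime,
      (N.factorial.factorization p : ℝ) * log p := by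
  conv_lhs => rw [← Nat.prod_factorization_pow_eq_self N.factorial_ne_zero]
  rw [Finsupp.prod_of_support_subset (s := (Finset.Icc 0 N).filter Nat.Prime)]
  · push_cast
    rw [Real.log_prod]
    · simp
    · intro p hp
      have := (Finset.mem_filter.1 hp).2.pos
      positivity
  · intro p hp
    rw [Nat.support_factorization, Nat.mem_primeFactors] at hp
    simp [hp.1, (hp.1.dvd_factorial).1 hp.2.1]
  · simp

/-- The first term `⌊N / p⌋` of Legendre's formula, bounded below. -/
lemma factorization_factorial_ge {p : ℕ} (hp : p.Prime) (N : ℕ) :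
    (N : ℝ) / p - 1 ≤ (N.factorial.factorization p : ℝ) := by
  have h : N / p ≤ N.factorial.factorization p := by
    rw [Nat.factorization_factorial hp (b := Nat.log p N + 2) (by omega)]
    calc N / p = N / p ^ 1 := by simp
      _ ≤ _ := Finset.single_le_sum (f := fun i => N / p ^ i) (fun _ _ => Nat.zero_le _)
        (by simp)
  have h2 : ((N / p : ℕ) : ℝ) ≤ (N.factorial.factorization p : ℝ) := by exact_mod_cast h
  have h3 : (N : ℝ) / p < ((N / p : ℕ) : ℝ) + 1 := by
    rw [← Nat.floor_div_eq_div (K := ℝ)]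
    exact Nat.lt_floor_add_one _
  linarith

/-- Legendre's formula bounded above by the full geometric series `∑ N / p ^ i`, `i ≥ 1`. -/
lemma factorization_factorial_le {p : ℕ} (hp : p.Prime) (N : ℕ) :
    (N.factorial.factorization p : ℝ) ≤ N / (p - 1) := by
  have h := Nat.sub_one_mul_factorization_factorial (n := N) hp
  have h1 : (1 : ℝ) < p := by exact_mod_cast hp.one_lt
  rw [le_div_iff₀ (by linarith)]
  have : (p - 1) * N.factorial.factorization p ≤ N := by omega
  have h2 : (((p - 1) * N.factorial.factorization p : ℕ) : ℝ) ≤ N := by exact_mod_cast this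
  rw [Nat.cast_mul, Nat.cast_sub hp.one_lt.le] at h2
  push_cast at h2
  linarith

/-- The weight `log p / p` at a prime `p`, extended by `0` to all natural numbers so that it can be
used in Abel summation. -/
noncomputable def primeLog (n : ℕ) : ℝ := if n.Prime then log n / n else 0

lemma sum_primeLog (N : ℕ) : ∑ k ∈ Finset.Icc 0 N, primeLog k =
    ∑ p ∈ (Finset.Icc 0 N).filter Nat.Prime, log p / (p : ℝ) := by
  simp [primeLog, Finset.sum_filter]

/-- Mertens' first theorem at integers: `∑_{p ≤ N} log p / p = log N + O(1)`. Legendre's formula gives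
`log N! = N ∑_{p ≤ N} log p / p` up to `O(N)`: in one direction the error is `θ(N) ≤ N log 4`, in the
other it is `N` times the convergent sum of `log n / (n (n - 1))`. This is compared with
`N log N - N ≤ log N! ≤ N log N`. -/
lemma mertens_first_nat : ∃ C, ∀ N : ℕ, 1 ≤ N →
    |∑ k ∈ Finset.Icc 0 N, primeLog k - log N| ≤ C := by
  set B := ∑' n : ℕ, log n / ((n : ℝ) * (n - 1)) with hB
  refine ⟨max (log 4) (1 + B), fun N hN => ?_⟩
  have hN0 : (0 : ℝ) < N := by exact_mod_cast hN
  rw [sum_primeLog]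
  set s := (Finset.Icc 0 N).filter Nat.Prime with hs
  have hprime : ∀ p ∈ s, p.Prime := fun p hp => (Finset.mem_filter.1 hp).2
  have hfac := log_factorial_eq N
  rw [abs_le]
  constructor
  · have h1 : log (N.factorial) ≤ N * (∑ p ∈ s, log p / (p : ℝ) + B) := by
      rw [hfac]
      have hB' : ∑ p ∈ s, log p / ((p : ℝ) * (p - 1)) ≤ B := by
        refine summable_log_div.sum_le_tsum s (fun n _ => ?_)
        rcases Nat.lt_or_ge n 2 with hn | hn
        · interval_cases n <;> simp
        · have : (2 : ℝ) ≤ n := by exact_mod_cast hn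
          exact div_nonneg (log_natCast_nonneg n) (mul_nonneg (by linarith) (by linarith))
      calc _ ≤ ∑ p ∈ s, (N : ℝ) * (log p / (p : ℝ) + log p / ((p : ℝ) * (p - 1))) := by
            refine Finset.sum_le_sum fun p hp => ?_
            have hp1 : (1 : ℝ) < p := by exact_mod_cast (hprime p hp).one_lt
            have hl : 0 ≤ log (p : ℝ) := log_natCast_nonneg p
            calc _ ≤ (N : ℝ) / (p - 1) * log p := by
                  gcongr; exact factorization_factorial_le (hprime p hp) N
              _ = _ := by
                  have : (p : ℝ) - 1 ≠ 0 := by linarith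
                  have : (p : ℝ) ≠ 0 := by linarith
                  field_simp
                  ring
        _ = N * (∑ p ∈ s, log p / (p : ℝ) + ∑ p ∈ s, log p / ((p : ℝ) * (p - 1))) := by
            rw [← Finset.mul_sum, Finset.sum_add_distrib]
        _ ≤ _ := by gcongr
    have h2 := Stirling.le_log_factorial_stirling (n := N) (by omega)
    have h3 : 0 ≤ log (N : ℝ) := log_natCast_nonneg N
    have h4 : 0 ≤ log (2 * π) := log_nonneg (by nlinarith [pi_gt_three])
    have h5 : (N : ℝ) * (log N - 1) ≤ N * (∑ p ∈ s, log p / (p : ℝ) + B) := by linarith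
    have h6 := le_of_mul_le_mul_left h5 hN0
    have := le_max_right (log 4) (1 + B)
    linarith
  · have h1 : (N : ℝ) * ∑ p ∈ s, log p / (p : ℝ) - Chebyshev.theta N ≤ log (N.factorial) := by
      rw [hfac, Chebyshev.theta_eq_sum_Icc, Nat.floor_natCast, Finset.mul_sum,
        ← Finset.sum_sub_distrib]
      refine Finset.sum_le_sum fun p hp => ?_
      have := mul_le_mul_of_nonneg_right (factorization_factorial_ge (hprime p hp) N)
        (log_natCast_nonneg p)
      refine le_trans (le_of_eq ?_) this
      ring
    have h2 := Chebyshev.theta_le_log4_mul_x hN0.le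
    have h3 : log (N.factorial) ≤ N * log N := by
      rw [← Real.log_pow]
      exact Real.log_le_log (by positivity) (by exact_mod_cast Nat.factorial_le_pow N)
    have h5 : (N : ℝ) * ∑ p ∈ s, log p / (p : ℝ) ≤ N * (log N + log 4) := by linarith
    have h6 := le_of_mul_le_mul_left h5 hN0
    have := le_max_left (log 4) (1 + B)
    linarith

/-- Mertens' first theorem at real arguments; replacing `t` by `⌊t⌋` costs at most `log 2`. -/
lemma mertens_first_s5 : ∃ C, 0 ≤ C ∧ ∀ t : ℝ, 2 ≤ t →
    |∑ k ∈ Finset.Icc 0 ⌊t⌋₊, primeLog k - log t| ≤ C := by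
  obtain ⟨C, hC⟩ := mertens_first_nat
  have hC0 : 0 ≤ C := (abs_nonneg _).trans (hC 1 le_rfl)
  refine ⟨C + log 2, by positivity, fun t ht => ?_⟩
  have hf : 1 ≤ ⌊t⌋₊ := Nat.le_floor (by push_cast; linarith)
  have hf' : (1 : ℝ) ≤ ⌊t⌋₊ := by exact_mod_cast hf
  have h := hC _ hf
  have h1 : log (⌊t⌋₊ : ℝ) ≤ log t := log_le_log (by linarith) (Nat.floor_le (by linarith))
  have h2 : log t ≤ log (⌊t⌋₊ : ℝ) + log 2 := by
    rw [← log_mul (by linarith) (by norm_num)]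
    exact log_le_log (by linarith) (by linarith [Nat.lt_floor_add_one t])
  rw [abs_le] at *
  constructor <;> linarith [log_pos (one_lt_two)]

/-! ### Abel summation: the second theorem with an unidentified constant -/

/-- The weight `1 / p` at a prime `p`, extended by `0` to all natural numbers. -/
noncomputable def primeRecip (n : ℕ) : ℝ := if n.Prime then 1 / n else 0

section
open MeasureTheory Filter Topology

lemma hasDerivAt_log_inv {t : ℝ} (ht : 1 < t) :
    HasDerivAt (fun t => (log t)⁻¹) (-(t⁻¹ / log t ^ 2)) t := by
  have hl := (log_pos ht).ne'
  have := (hasDerivAt_log (by linarith : t ≠ 0)).inv hl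
  convert! this using 1
  ring

lemma hasDerivAt_neg_log_inv {t : ℝ} (ht : 1 < t) :
    HasDerivAt (fun t => -(log t)⁻¹) (t⁻¹ / log t ^ 2) t := by
  convert! (hasDerivAt_log_inv ht).neg using 1
  ring

lemma tendsto_neg_inv_log : Tendsto (fun t => -(log t)⁻¹) atTop (𝓝 0) := by
  simpa using (tendsto_inv_atTop_zero.comp tendsto_log_atTop).neg

lemma integrableOn_inv_log_sq {x : ℝ} (hx : 2 ≤ x) :
    IntegrableOn (fun t => t⁻¹ / log t ^ 2) (Set.Ioi x) := by
  refine integrableOn_Ioi_deriv_of_nonneg (g := fun t => -(log t)⁻¹) ?_ (fun t ht => ?_)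
    (fun t ht => ?_) tendsto_neg_inv_log
  · exact (hasDerivAt_neg_log_inv (by linarith)).continuousAt.continuousWithinAt
  · have ht : x < t := ht
    exact hasDerivAt_neg_log_inv (by linarith)
  · have ht : x < t := ht
    have : 0 < t := by linarith
    positivity

lemma integral_inv_log_sq {x : ℝ} (hx : 2 ≤ x) :
    ∫ t in Set.Ioi x, t⁻¹ / log t ^ 2 = (log x)⁻¹ := by
  rw [integral_Ioi_of_hasDerivAt_of_nonneg (g := fun t => -(log t)⁻¹) (l := 0)
    ?_ (fun t ht => ?_) (fun t ht => ?_) tendsto_neg_inv_log]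
  · simp
  · exact (hasDerivAt_neg_log_inv (by linarith)).continuousAt.continuousWithinAt
  · have ht : x < t := ht
    exact hasDerivAt_neg_log_inv (by linarith)
  · have ht : x < t := ht
    have : 0 < t := by linarith
    positivity

lemma measurable_floor_sum (a : ℕ → ℝ) :
    Measurable (fun t : ℝ => ∑ k ∈ Finset.Icc 0 ⌊t⌋₊, a k) :=
  (measurable_from_nat (f := fun n => ∑ k ∈ Finset.Icc 0 n, a k)).comp Nat.measurable_floor

/-- The second theorem with some constant `c`. With `S t = ∑_{p ≤ t} log p / p`, Abel summation against
`1 / log t` gives `S x / log x + ∫_2^x S t / (t log² t) dt`. The main term `log t` of `S t` contributes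
`1 + log log x - log log 2`, and the bounded remainder `S t - log t` is integrable against
`1 / (t log² t)` up to infinity, the tail beyond `x` being `O(1 / log x)`. -/
lemma exists_mertens_const : ∃ c C : ℝ, 0 ≤ C ∧ ∀ x : ℝ, 2 ≤ x →
    |∑ k ∈ Finset.Icc 0 ⌊x⌋₊, primeRecip k - (log (log x) + c)| ≤ C / log x := by
  obtain ⟨C, hC0, hC⟩ := mertens_first_s5
  set S : ℝ → ℝ := fun t => ∑ k ∈ Finset.Icc 0 ⌊t⌋₊, primeLog k with hS
  set h : ℝ → ℝ := fun t => t⁻¹ / log t ^ 2 with hh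
  set F : ℝ → ℝ := fun t => h t * (S t - log t) with hF
  have hnonneg : ∀ t : ℝ, 2 ≤ t → 0 ≤ h t := fun t ht => by
    have : 0 < t := by linarith
    simp only [hh]; positivity
  have hFle : ∀ t : ℝ, 2 ≤ t → ‖F t‖ ≤ C * h t := fun t ht => by
    simp only [hF, norm_mul, Real.norm_eq_abs, abs_of_nonneg (hnonneg t ht)]
    rw [mul_comm C]
    exact mul_le_mul_of_nonneg_left (hC t ht) (hnonneg t ht)
  have hFint : ∀ x : ℝ, 2 ≤ x → IntegrableOn F (Set.Ioi x) := fun x hx => by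
    refine Integrable.mono' ((integrableOn_inv_log_sq hx).const_mul C) ?_ ?_
    · have := measurable_floor_sum primeLog
      simp only [hF, hh, hS]
      exact Measurable.aestronglyMeasurable (by fun_prop)
    · refine (ae_restrict_iff' measurableSet_Ioi).2 (Eventually.of_forall fun t ht => ?_)
      exact hFle t (hx.trans (le_of_lt ht))
  -- One `C` pays for the boundary term `(S x - log x) / log x`, the other for the tail of the integral.
  refine ⟨1 - log (log 2) + ∫ t in Set.Ioi 2, F t, C + C, by linarith, fun x hx => ?_⟩
  have hlx : 0 < log x := log_pos (by linarith)
  have htail : |∫ t in Set.Ioi x, F t| ≤ C / log x := by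
    rw [← Real.norm_eq_abs, div_eq_mul_inv, ← integral_inv_log_sq hx, ← integral_const_mul]
    refine norm_integral_le_of_norm_le ((integrableOn_inv_log_sq hx).const_mul C) ?_
    refine (ae_restrict_iff' measurableSet_Ioi).2 (Eventually.of_forall fun t ht => ?_)
    exact hFle t (hx.trans (le_of_lt ht))
  have hsplit : ∫ t in Set.Ioi 2, F t = (∫ t in Set.Ioc 2 x, F t) + ∫ t in Set.Ioi x, F t := by
    rw [← Set.Ioc_union_Ioi_eq_Ioi hx, setIntegral_union
      (Set.Ioc_disjoint_Ioi le_rfl) measurableSet_Ioi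
      ((hFint 2 le_rfl).mono_set Set.Ioc_subset_Ioi_self) (hFint x hx)]
  have hcont : ContinuousOn h (Set.Icc 2 x) := by
    intro t ht
    have h1 : t ≠ 0 := by linarith [ht.1]
    have h2 : log t ^ 2 ≠ 0 := (pow_pos (log_pos (by linarith [ht.1])) 2).ne'
    exact ContinuousAt.continuousWithinAt (by fun_prop (disch := assumption))
  have hderiv : ∀ t ∈ Set.Icc 2 x, deriv (fun t => (log t)⁻¹) t = -h t := fun t ht =>
    (hasDerivAt_log_inv (by linarith [ht.1])).deriv
  have hcont2 : ContinuousOn (fun t => t⁻¹ / log t) (Set.Icc 2 x) := by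
    intro t ht
    have h1 : t ≠ 0 := by linarith [ht.1]
    have h2 : log t ≠ 0 := (log_pos (by linarith [ht.1])).ne'
    exact ContinuousAt.continuousWithinAt (by fun_prop (disch := assumption))
  have hloglog : ∫ t in Set.Ioc 2 x, t⁻¹ / log t = log (log x) - log (log 2) := by
    rw [← intervalIntegral.integral_of_le hx]
    refine intervalIntegral.integral_eq_sub_of_hasDerivAt (f := fun t => log (log t))
      (fun t ht => ?_) ?_
    · rw [Set.uIcc_of_le hx] at ht
      exact (hasDerivAt_log (by linarith [ht.1])).log (log_pos (by linarith [ht.1])).ne'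
    · exact ContinuousOn.intervalIntegrable (by rwa [Set.uIcc_of_le hx])
  have habel := sum_mul_eq_sub_integral_mul₁ primeLog (f := fun t => (log t)⁻¹)
    (by simp [primeLog]) (by simp [primeLog]) x
    (fun t ht => (hasDerivAt_log_inv (by linarith [ht.1])).differentiableAt)
    ((hcont.neg.integrableOn_Icc).congr_fun (fun t ht => (hderiv t ht).symm) measurableSet_Icc)
  have hint : ∫ t in Set.Ioc 2 x, deriv (fun t => (log t)⁻¹) t *
      ∑ k ∈ Finset.Icc 0 ⌊t⌋₊, primeLog k =
      -((∫ t in Set.Ioc 2 x, F t) + (log (log x) - log (log 2))) := by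
    rw [← hloglog, ← integral_add ((hFint 2 le_rfl).mono_set Set.Ioc_subset_Ioi_self)
      (hcont2.integrableOn_Icc.mono_set Set.Ioc_subset_Icc_self), ← integral_neg]
    refine setIntegral_congr_fun measurableSet_Ioc fun t ht => ?_
    have h2 : log t ≠ 0 := (log_pos (by linarith [ht.1])).ne'
    have h1 : t ≠ 0 := by linarith [ht.1]
    simp only [hderiv t ⟨ht.1.le, ht.2⟩, hF, hh, hS]
    field_simp
    ring
  have hsum : ∑ k ∈ Finset.Icc 0 ⌊x⌋₊, primeRecip k =
      ∑ k ∈ Finset.Icc 0 ⌊x⌋₊, (log (k : ℝ))⁻¹ * primeLog k := by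
    refine Finset.sum_congr rfl fun k _ => ?_
    unfold primeRecip primeLog
    split_ifs with hk
    · have : log (k : ℝ) ≠ 0 := (log_pos (by exact_mod_cast hk.one_lt)).ne'
      field_simp
    · simp
  rw [hsum, habel, hint, hsplit]
  have hE := hC x hx
  have hE' : |(log x)⁻¹ * (S x - log x)| ≤ C / log x := by
    rw [abs_mul, abs_of_pos (inv_pos.2 hlx), div_eq_inv_mul]
    exact mul_le_mul_of_nonneg_left hE (inv_pos.2 hlx).le
  have e : (log x)⁻¹ * S x = 1 + (log x)⁻¹ * (S x - log x) := by
    field_simp; ring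
  change |(log x)⁻¹ * S x - _ - _| ≤ _
  rw [e, add_div]
  rw [abs_le] at *
  constructor <;> linarith

/-- A crude growth bound, by comparison with the harmonic sum; it only serves to justify the Abel
summation of the Dirichlet series. -/
lemma sum_primeRecip_le (n : ℕ) : ∑ k ∈ Finset.Icc 1 n, primeRecip k ≤ 1 + log n := by
  refine le_trans ?_ (harmonic_le_one_add_log n)
  rw [harmonic_eq_sum_Icc]
  push_cast
  refine Finset.sum_le_sum fun k _ => ?_
  unfold primeRecip
  split_ifs
  · simp
  · positivity

/-! ### Laplace transforms of powers and of the logarithm -/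

/-- The derivative of `Γ` at `1` is `-γ`, and it may be taken under the integral sign. -/
lemma integral_exp_neg_mul_log :
    ∫ t in Set.Ioi (0 : ℝ), rexp (-t) * log t = -eulerMascheroniConstant := by
  have h1 := Complex.hasDerivAt_GammaIntegral (s := 1) (by simp)
  have h2 : HasDerivAt Complex.GammaIntegral (-(eulerMascheroniConstant : ℂ)) 1 := by
    refine Complex.hasDerivAt_Gamma_one.congr_of_eventuallyEq ?_
    have : ∀ᶠ s : ℂ in 𝓝 1, 0 < s.re :=
      (Complex.continuous_re.tendsto 1).eventually (lt_mem_nhds (by simp))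
    filter_upwards [this] with s hs
    exact (Complex.Gamma_eq_integral hs).symm
  have h3 := h1.unique h2
  have h4 : ∫ t in Set.Ioi (0 : ℝ), (t : ℂ) ^ ((1 : ℂ) - 1) * ((log t : ℂ) * (rexp (-t) : ℂ)) =
      ∫ t in Set.Ioi (0 : ℝ), ((rexp (-t) * log t : ℝ) : ℂ) := by
    refine setIntegral_congr_fun measurableSet_Ioi fun t _ => ?_
    simp [mul_comm]
  rw [h4, integral_complex_ofReal] at h3
  exact_mod_cast h3

lemma integrableOn_rpow_exp {a δ : ℝ} (ha : 0 < a) (hδ : 0 < δ) :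
    IntegrableOn (fun u : ℝ => u ^ (a - 1) * rexp (-(δ * u))) (Set.Ioi 0) := by
  -- A non-integrable function would have the junk integral `0`, but the integral is a positive number.
  by_contra hn
  have h := integral_rpow_mul_exp_neg_mul_Ioi ha hδ
  rw [integral_undef hn] at h
  have : 0 < (1 / δ) ^ a * Gamma a := mul_pos (by positivity) (Gamma_pos_of_pos ha)
  linarith

/-- Both exponents `±1/2` are integrable at `0` against a decaying exponential. -/
lemma abs_log_le {u : ℝ} (hu : 0 < u) : |log u| ≤ 2 * u ^ (1 / 2 : ℝ) + 2 * u ^ (-(1 / 2) : ℝ) := by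
  have h1 := log_le_rpow_div hu.le (ε := 1 / 2) (by norm_num)
  have h2 := log_le_rpow_div (inv_pos.2 hu).le (ε := 1 / 2) (by norm_num)
  rw [log_inv, inv_rpow hu.le, ← rpow_neg hu.le] at h2
  have := rpow_pos_of_pos hu (1 / 2)
  have := rpow_pos_of_pos hu (-(1 / 2))
  rw [abs_le]
  constructor <;> linarith

lemma integrableOn_exp_log {δ : ℝ} (hδ : 0 < δ) :
    IntegrableOn (fun u : ℝ => rexp (-(δ * u)) * log u) (Set.Ioi 0) := by
  have h1 := (integrableOn_rpow_exp (a := 3 / 2) (by norm_num) hδ).const_mul 2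
  have h2 := (integrableOn_rpow_exp (a := 1 / 2) (by norm_num) hδ).const_mul 2
  refine Integrable.mono' (h1.add h2) (Measurable.aestronglyMeasurable (by fun_prop)) ?_
  refine (ae_restrict_iff' measurableSet_Ioi).2 (Eventually.of_forall fun u hu => ?_)
  have := abs_log_le (u := u) hu
  rw [norm_mul, Real.norm_eq_abs, Real.norm_eq_abs, abs_of_pos (exp_pos _)]
  have h3 := mul_le_mul_of_nonneg_left this (exp_pos (-(δ * u))).le
  simp only [Pi.add_apply]
  norm_num at h3 ⊢
  linarith

/-- The Laplace transform of `log`, from `integral_exp_neg_mul_log` by the substitution `t = δ u`. -/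
lemma integral_exp_log {δ : ℝ} (hδ : 0 < δ) :
    δ * ∫ u in Set.Ioi (0 : ℝ), rexp (-(δ * u)) * log u =
      -eulerMascheroniConstant - log δ := by
  have h := integral_comp_mul_left_Ioi (fun t => rexp (-t) * (log t - log δ)) 0 hδ
  have e : ∫ u in Set.Ioi (0 : ℝ), rexp (-(δ * u)) * (log (δ * u) - log δ) =
      ∫ u in Set.Ioi (0 : ℝ), rexp (-(δ * u)) * log u := by
    refine setIntegral_congr_fun measurableSet_Ioi fun u hu => ?_
    have hu : 0 < u := hu
    simp [log_mul hδ.ne' hu.ne']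
  rw [e, mul_zero] at h
  rw [h]
  have i1 := integrableOn_exp_log one_pos
  simp only [one_mul] at i1
  simp only [mul_sub]
  rw [integral_sub i1 ((integrableOn_exp_neg_Ioi 0).mul_const _), integral_exp_neg_mul_log,
    integral_mul_const, integral_exp_neg_Ioi_zero]
  simp only [smul_eq_mul, one_mul]
  field_simp

end

section
open MeasureTheory Filter Topology

/-! ### The prime zeta function near `1`, from the partial sums -/

lemma primeRecip_nonneg (n : ℕ) : 0 ≤ primeRecip n := by
  unfold primeRecip; split_ifs <;> positivity

lemma sum_Icc_one_eq (n : ℕ) :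
    ∑ k ∈ Finset.Icc 1 n, primeRecip k = ∑ k ∈ Finset.Icc 0 n, primeRecip k := by
  refine Finset.sum_subset (Finset.Icc_subset_Icc_left zero_le_one) fun k hk hk' => ?_
  have : k = 0 := by
    simp only [Finset.mem_Icc] at hk hk'; omega
  simp [this, primeRecip]

/-- The Dirichlet series of `1 / p` at `δ` is the prime zeta function at `1 + δ`. -/
lemma LSeries_primeRecip (δ : ℝ) : LSeries (fun n => (primeRecip n : ℂ)) δ =
    ((∑' p : Nat.Primes, (p : ℝ) ^ (-(1 + δ)) : ℝ) : ℂ) := by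
  have h := tsum_subtype {n : ℕ | n.Prime} (fun n : ℕ => (n : ℝ) ^ (-(1 + δ)))
  have h' : (∑' p : Nat.Primes, (p : ℝ) ^ (-(1 + δ))) =
    ∑' n : ℕ, Set.indicator {n : ℕ | n.Prime} (fun n : ℕ => (n : ℝ) ^ (-(1 + δ))) n := h
  rw [h', Complex.ofReal_tsum, LSeries]
  refine tsum_congr fun n => ?_
  rw [LSeries.term]
  by_cases hn : n.Prime
  · have hn0 : (0 : ℝ) < n := by exact_mod_cast hn.pos
    rw [if_neg hn.ne_zero, Set.indicator_of_mem (by exact hn), primeRecip, if_pos hn,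
      show (n : ℂ) = ((n : ℝ) : ℂ) by simp, ← Complex.ofReal_cpow hn0.le, ← Complex.ofReal_div,
      neg_add, rpow_add hn0, rpow_neg_one, rpow_neg hn0.le]
    congr 1
    field_simp
  · rw [Set.indicator_of_notMem (by exact hn)]
    simp [primeRecip, hn]

/-- Abel summation of the prime zeta function: with `A x = ∑_{p ≤ x} 1 / p`, the value at `1 + δ` is
`δ ∫_1^∞ A(t) t^(-1-δ) dt`, written as a Laplace transform by the substitution `t = exp u`. -/
lemma tsum_primes_eq_integral {δ : ℝ} (hδ : 0 < δ) :
    ∑' p : Nat.Primes, (p : ℝ) ^ (-(1 + δ)) = δ * ∫ u in Set.Ioi (0 : ℝ),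
      rexp (-(δ * u)) * ∑ k ∈ Finset.Icc 0 ⌊rexp u⌋₊, primeRecip k := by
  have hO : (fun n : ℕ => ∑ k ∈ Finset.Icc 1 n, primeRecip k) =O[atTop]
      fun n : ℕ => (n : ℝ) ^ (δ / 2) := by
    refine Asymptotics.IsBigO.of_bound (1 + 2 / δ) ?_
    filter_upwards [eventually_ge_atTop 1] with n hn
    have hn1 : (1 : ℝ) ≤ n := by exact_mod_cast hn
    have h0 : 0 ≤ ∑ k ∈ Finset.Icc 1 n, primeRecip k :=
      Finset.sum_nonneg fun k _ => primeRecip_nonneg k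
    rw [Real.norm_eq_abs, Real.norm_eq_abs, abs_of_nonneg h0, abs_of_nonneg (by positivity)]
    have h1 := log_natCast_le_rpow_div n (half_pos hδ)
    have h2 := one_le_rpow hn1 (half_pos hδ).le
    have h3 : (n : ℝ) ^ (δ / 2) / (δ / 2) = 2 / δ * (n : ℝ) ^ (δ / 2) := by
      field_simp
    linarith [sum_primeRecip_le n]
  have h := LSeries_eq_mul_integral_of_nonneg primeRecip (r := δ / 2) (by positivity) (s := δ)
    (by simpa using hδ) hO primeRecip_nonneg
  rw [LSeries_primeRecip] at h
  have e : ∫ t in Set.Ioi (1 : ℝ), (∑ k ∈ Finset.Icc 1 ⌊t⌋₊, (primeRecip k : ℂ)) *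
      (t : ℂ) ^ (-((δ : ℂ) + 1)) = ∫ t in Set.Ioi (1 : ℝ),
      (((∑ k ∈ Finset.Icc 0 ⌊t⌋₊, primeRecip k) * t ^ (-(δ + 1)) : ℝ) : ℂ) := by
    refine setIntegral_congr_fun measurableSet_Ioi fun t ht => ?_
    have ht : 1 < t := ht
    rw [← sum_Icc_one_eq, Complex.ofReal_mul, Complex.ofReal_cpow (by linarith)]
    push_cast
    rfl
  rw [e, integral_complex_ofReal] at h
  have h' : ∑' p : Nat.Primes, (p : ℝ) ^ (-(1 + δ)) = δ * ∫ t in Set.Ioi (1 : ℝ),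
      (∑ k ∈ Finset.Icc 0 ⌊t⌋₊, primeRecip k) * t ^ (-(δ + 1)) := by exact_mod_cast h
  rw [h']
  have himg : rexp '' Set.Ioi 0 = Set.Ioi 1 := by
    ext t
    constructor
    · rintro ⟨u, hu, rfl⟩
      exact one_lt_exp_iff.2 hu
    · intro ht
      have ht : 1 < t := ht
      exact ⟨log t, log_pos ht, exp_log (by linarith)⟩
  rw [← himg, integral_image_eq_integral_abs_deriv_smul measurableSet_Ioi
    (fun u _ => (hasDerivAt_exp u).hasDerivWithinAt) exp_injective.injOn]
  congr 1
  refine setIntegral_congr_fun measurableSet_Ioi fun u _ => ?_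
  simp only [abs_of_pos (exp_pos u), smul_eq_mul]
  rw [← exp_mul, mul_comm (∑ k ∈ _, _), ← mul_assoc, ← exp_add]
  congr 2
  ring

/-- An error bound valid for all `u > 0`. The bound `C / u` holds for `u ≥ log 2` only and is not
integrable at `0` in any case; weakening it to `u ^ (-1/2)` gives a bound integrable at `0` that
also dominates `|log u + c|` on `(0, log 2)`, where the sum over primes is empty. -/
lemma sum_exp_bound {c C : ℝ} (hC0 : 0 ≤ C) (hC : ∀ x : ℝ, 2 ≤ x →
    |∑ k ∈ Finset.Icc 0 ⌊x⌋₊, primeRecip k - (log (log x) + c)| ≤ C / log x) {u : ℝ} (hu : 0 < u) :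
    |∑ k ∈ Finset.Icc 0 ⌊rexp u⌋₊, primeRecip k - (log u + c)| ≤
      (2 * C + 4 + |c|) * u ^ (-(1 / 2) : ℝ) := by
  have hp : 0 < u ^ (-(1 / 2) : ℝ) := rpow_pos_of_pos hu _
  have hq : 0 < u ^ (1 / 2 : ℝ) := rpow_pos_of_pos hu _
  have hqq : u ^ (1 / 2 : ℝ) * u ^ (1 / 2 : ℝ) = u := by
    rw [← rpow_add hu]; norm_num
  have hpq : u ^ (-(1 / 2) : ℝ) * u ^ (1 / 2 : ℝ) = 1 := by
    rw [← rpow_add hu]; norm_num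
  rcases le_or_gt 2 (rexp u) with h | h
  · have h1 := hC _ h
    rw [log_exp] at h1
    refine h1.trans ?_
    have hl : 1 / 4 ≤ u := by
      have h2 : log 2 ≤ u := (log_le_iff_le_exp (by norm_num)).2 h
      linarith [log_two_gt_d9]
    have hq2 : 1 / 2 ≤ u ^ (1 / 2 : ℝ) := by nlinarith
    have e : C / u = C * u ^ (-(1 / 2) : ℝ) * u ^ (-(1 / 2) : ℝ) := by
      rw [mul_assoc, ← rpow_add hu]
      norm_num [rpow_neg_one, div_eq_mul_inv]
    have hp2 : u ^ (-(1 / 2) : ℝ) ≤ 2 := by nlinarith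
    rw [e]
    refine mul_le_mul_of_nonneg_right ?_ hp.le
    have := abs_nonneg c
    nlinarith
  · have hfl : ⌊rexp u⌋₊ < 2 := (Nat.floor_lt (exp_pos u).le).2 (by exact_mod_cast h)
    have hz : ∑ k ∈ Finset.Icc 0 ⌊rexp u⌋₊, primeRecip k = 0 := by
      refine Finset.sum_eq_zero fun k hk => ?_
      have : k < 2 := by simp only [Finset.mem_Icc] at hk; omega
      exact if_neg fun hk' => by have := hk'.two_le; omega
    rw [hz, zero_sub, abs_neg]
    have hu1 : u ≤ 1 := by
      have h2 : u < log 2 := (lt_log_iff_exp_lt (by norm_num)).2 h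
      linarith [log_two_lt_d9]
    have h1 : 1 ≤ u ^ (-(1 / 2) : ℝ) := one_le_rpow_of_pos_of_le_one_of_nonpos hu hu1 (by norm_num)
    have h2 : u ^ (1 / 2 : ℝ) ≤ 1 := rpow_le_one hu.le hu1 (by norm_num)
    have h3 := abs_log_le hu
    have h4 := abs_add_le (log u) c
    have := abs_nonneg c
    nlinarith

/-- The prime zeta function satisfies `∑ p^(-1-δ) = -log δ + c - γ + o(1)` as `δ → 0⁺`, where `c` is the
constant of `exists_mertens_const`. In the integral of `tsum_primes_eq_integral` the main term
`log u + c` contributes `-γ - log δ + c`, and the error `O(u ^ (-1/2))` contributes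
`O(δ · δ ^ (-1/2))`. -/
lemma tendsto_tsum_primes_add_log {c C : ℝ} (hC0 : 0 ≤ C) (hC : ∀ x : ℝ, 2 ≤ x →
    |∑ k ∈ Finset.Icc 0 ⌊x⌋₊, primeRecip k - (log (log x) + c)| ≤ C / log x) :
    Tendsto (fun δ : ℝ => ∑' p : Nat.Primes, (p : ℝ) ^ (-(1 + δ)) + log δ) (𝓝[>] 0)
      (𝓝 (c - eulerMascheroniConstant)) := by
  set D := 2 * C + 4 + |c| with hD
  set A : ℝ → ℝ := fun u => ∑ k ∈ Finset.Icc 0 ⌊rexp u⌋₊, primeRecip k with hA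
  have hAm : Measurable A := (measurable_floor_sum primeRecip).comp measurable_exp
  have key : ∀ δ : ℝ, 0 < δ →
      |∑' p : Nat.Primes, (p : ℝ) ^ (-(1 + δ)) + log δ - (c - eulerMascheroniConstant)| ≤
        D * Gamma (1 / 2) * δ ^ (1 / 2 : ℝ) := by
    intro δ hδ
    have hr := (integrableOn_rpow_exp (a := 1 / 2) (by norm_num) hδ).const_mul D
    have hb : ∀ u ∈ Set.Ioi (0 : ℝ), ‖rexp (-(δ * u)) * (A u - (log u + c))‖ ≤
        D * (u ^ ((1 / 2 : ℝ) - 1) * rexp (-(δ * u))) := by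
      intro u hu
      rw [norm_mul, Real.norm_eq_abs, Real.norm_eq_abs, abs_of_pos (exp_pos _)]
      have := mul_le_mul_of_nonneg_left (sum_exp_bound hC0 hC hu) (exp_pos (-(δ * u))).le
      rw [show ((1 / 2 : ℝ) - 1) = -(1 / 2) by norm_num]
      refine this.trans (le_of_eq ?_)
      rw [hD]; ring
    have hb' := (ae_restrict_iff' (μ := volume) measurableSet_Ioi).2 (Eventually.of_forall hb)
    have hi1 : IntegrableOn (fun u => rexp (-(δ * u)) * (A u - (log u + c))) (Set.Ioi 0) :=
      Integrable.mono' hr (Measurable.aestronglyMeasurable (by fun_prop)) hb'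
    have hi2 := integrableOn_exp_log hδ
    have hi3 : IntegrableOn (fun u => rexp (-(δ * u))) (Set.Ioi 0) := by
      simpa using integrableOn_rpow_exp one_pos hδ
    have hexp : ∫ u in Set.Ioi (0 : ℝ), rexp (-(δ * u)) = 1 / δ := by
      simpa using integral_rpow_mul_exp_neg_mul_Ioi one_pos hδ
    have hsplit : ∫ u in Set.Ioi (0 : ℝ), rexp (-(δ * u)) * A u =
        (∫ u in Set.Ioi (0 : ℝ), rexp (-(δ * u)) * (A u - (log u + c))) +
        ((∫ u in Set.Ioi (0 : ℝ), rexp (-(δ * u)) * log u) +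
          ∫ u in Set.Ioi (0 : ℝ), rexp (-(δ * u)) * c) := by
      have hi4 : IntegrableOn (fun u => rexp (-(δ * u)) * log u + rexp (-(δ * u)) * c)
          (Set.Ioi 0) := hi2.add (hi3.mul_const c)
      rw [← integral_add hi2 (hi3.mul_const c), ← integral_add hi1 hi4]
      refine setIntegral_congr_fun measurableSet_Ioi fun u _ => ?_
      ring
    have herr : |∫ u in Set.Ioi (0 : ℝ), rexp (-(δ * u)) * (A u - (log u + c))| ≤
        D * ((1 / δ) ^ (1 / 2 : ℝ) * Gamma (1 / 2)) := by
      rw [← Real.norm_eq_abs, ← integral_rpow_mul_exp_neg_mul_Ioi (by norm_num) hδ,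
        ← integral_const_mul]
      exact norm_integral_le_of_norm_le hr hb'
    rw [tsum_primes_eq_integral hδ]
    change |δ * (∫ u in Set.Ioi (0 : ℝ), rexp (-(δ * u)) * A u) + log δ - _| ≤ _
    rw [hsplit, mul_add, mul_add, integral_exp_log hδ, integral_mul_const, hexp]
    have e : δ * (1 / δ * c) = c := by field_simp
    rw [e]
    rw [show ∀ X : ℝ, X + (-eulerMascheroniConstant - log δ + c) + log δ -
      (c - eulerMascheroniConstant) = X by intro X; ring, abs_mul, abs_of_pos hδ]
    refine (mul_le_mul_of_nonneg_left herr hδ.le).trans (le_of_eq ?_)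
    have e2 : δ * (1 / δ) ^ (1 / 2 : ℝ) = δ ^ (1 / 2 : ℝ) := by
      rw [one_div, inv_rpow hδ.le, ← rpow_neg hδ.le]
      nth_rewrite 1 [← rpow_one δ]
      rw [← rpow_add hδ]; norm_num
    rw [← e2]; ring
  have hlim : Tendsto (fun δ : ℝ => D * Gamma (1 / 2) * δ ^ (1 / 2 : ℝ)) (𝓝[>] 0) (𝓝 0) := by
    have : Tendsto (fun δ : ℝ => D * Gamma (1 / 2) * δ ^ (1 / 2 : ℝ)) (𝓝 0)
        (𝓝 (D * Gamma (1 / 2) * (0 : ℝ) ^ (1 / 2 : ℝ))) :=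
      ((continuous_rpow_const (by norm_num)).tendsto 0).const_mul _
    rw [zero_rpow (by norm_num), mul_zero] at this
    exact this.mono_left nhdsWithin_le_nhds
  rw [tendsto_iff_norm_sub_tendsto_zero]
  refine squeeze_zero' (Eventually.of_forall fun _ => norm_nonneg _) ?_ hlim
  filter_upwards [self_mem_nhdsWithin] with δ hδ
  exact key δ hδ

/-! ### The prime zeta function near `1`, from the Euler product -/

/-- The contribution `∑_{k ≥ 2} p^(-k(1+δ)) / k` of the proper powers of the prime `p` to
`log ζ(1+δ)`, in closed form. At `δ = 0` this is the summand in the definition of `mertensC1`. -/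
noncomputable def eulerRem (δ : ℝ) (p : ℕ) : ℝ :=
  -log (1 - (p : ℝ) ^ (-(1 + δ))) - (p : ℝ) ^ (-(1 + δ))

/-- In particular `p^(-1-δ) ≤ 1/2`, which keeps the logarithms in `eulerRem` away from `0`. -/
lemma prime_rpow_le {δ : ℝ} (hδ : 0 ≤ δ) {p : ℕ} (hp : p.Prime) :
    0 < (p : ℝ) ^ (-(1 + δ)) ∧ (p : ℝ) ^ (-(1 + δ)) ≤ (p : ℝ)⁻¹ ∧ (p : ℝ)⁻¹ ≤ 1 / 2 := by
  have h2 : (2 : ℝ) ≤ p := by exact_mod_cast hp.two_le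
  refine ⟨rpow_pos_of_pos (by linarith) _, ?_, ?_⟩
  · rw [← rpow_neg_one]
    exact rpow_le_rpow_of_exponent_le (by linarith) (by linarith)
  · rw [one_div]; exact inv_anti₀ (by norm_num) h2

/-- A summable bound that is uniform in `δ ≥ 0`. -/
lemma abs_eulerRem_le {δ : ℝ} (hδ : 0 ≤ δ) {p : ℕ} (hp : p.Prime) :
    |eulerRem δ p| ≤ 2 * (p : ℝ) ^ (-2 : ℝ) := by
  obtain ⟨h0, h1, h2⟩ := prime_rpow_le hδ hp
  set y := (p : ℝ) ^ (-(1 + δ)) with hy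
  have h := abs_log_sub_add_sum_range_le (x := y) (by rw [abs_of_pos h0]; linarith) 1
  have e : |eulerRem δ p| = |∑ i ∈ Finset.range 1, y ^ (i + 1) / ((i : ℝ) + 1) + log (1 - y)| := by
    rw [← abs_neg]
    congr 1
    rw [eulerRem, ← hy, Finset.sum_range_one]
    norm_num
  rw [e]
  refine h.trans ?_
  rw [abs_of_pos h0, div_le_iff₀ (by linarith)]
  have e2 : (p : ℝ) ^ (-2 : ℝ) = (p : ℝ)⁻¹ ^ 2 := by
    rw [rpow_neg (by positivity), inv_pow]; norm_num
  rw [e2]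
  have h3 : y ^ 2 ≤ (p : ℝ)⁻¹ ^ 2 := by gcongr
  have h4 : 0 ≤ (p : ℝ)⁻¹ ^ 2 := by positivity
  norm_num
  norm_num at h3 h4
  nlinarith

lemma summable_bound : Summable (fun p : Nat.Primes => 2 * (p : ℝ) ^ (-2 : ℝ)) :=
  (Nat.Primes.summable_rpow.2 (by norm_num)).mul_left 2

lemma tendsto_eulerRem : Tendsto (fun δ : ℝ => ∑' p : Nat.Primes, eulerRem δ p) (𝓝[>] 0)
    (𝓝 (∑' p : Nat.Primes, eulerRem 0 p)) := by
  refine tendsto_tsum_of_dominated_convergence summable_bound (fun p => ?_) ?_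
  · refine Tendsto.mono_left ?_ nhdsWithin_le_nhds
    have hp : (0 : ℝ) < p := by exact_mod_cast p.prop.pos
    have h := prime_rpow_le (le_refl (0 : ℝ)) p.prop
    refine ContinuousAt.tendsto (f := fun δ => eulerRem δ p) ?_
    unfold eulerRem
    have h1 : ContinuousAt (fun δ : ℝ => (p : ℝ) ^ (-(1 + δ))) 0 :=
      ContinuousAt.rpow (by fun_prop) (by fun_prop) (Or.inl hp.ne')
    have h3 : (1 : ℝ) - (p : ℝ) ^ (-(1 + 0) : ℝ) ≠ 0 :=
      (sub_pos.2 ((h.2.1.trans h.2.2).trans_lt (by norm_num))).ne'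
    exact ((continuousAt_const.sub h1).log h3).neg.sub h1
  · filter_upwards [self_mem_nhdsWithin] with δ hδ p
    exact abs_eulerRem_le (le_of_lt hδ) p.prop

/-- The expression on the left is `log (δ ζ(1+δ))`, by the Euler product; it tends to `log 1` because
`ζ` has a simple pole at `1` with residue `1`. -/
lemma tendsto_log_zeta : Tendsto (fun δ : ℝ => ∑' p : Nat.Primes, (p : ℝ) ^ (-(1 + δ)) + log δ +
    ∑' p : Nat.Primes, eulerRem δ p) (𝓝[>] 0) (𝓝 0) := by
  have hz : Tendsto (fun δ : ℝ => ((1 + δ : ℝ) : ℂ)) (𝓝[>] 0) (𝓝[≠] 1) := by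
    refine tendsto_nhdsWithin_iff.2 ⟨?_, ?_⟩
    · refine Tendsto.mono_left ?_ nhdsWithin_le_nhds
      have : Continuous (fun δ : ℝ => ((1 + δ : ℝ) : ℂ)) := by fun_prop
      simpa using this.tendsto 0
    · filter_upwards [self_mem_nhdsWithin] with δ hδ
      have hδ : 0 < δ := hδ
      simp only [Set.mem_compl_iff, Set.mem_singleton_iff]
      norm_cast
      linarith
  have h1 := riemannZeta_residue_one.comp hz
  have h2 := (Complex.continuous_re.tendsto 1).comp h1
  rw [Complex.one_re] at h2
  have h3 := (continuousAt_log one_ne_zero).tendsto.comp h2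
  rw [log_one] at h3
  refine h3.congr' ?_
  filter_upwards [self_mem_nhdsWithin] with δ hδ
  have hδ : 0 < δ := hδ
  have hzeta := riemannZeta_eulerProduct_exp_log (s := ((1 + δ : ℝ) : ℂ))
    (by rw [Complex.ofReal_re]; linarith)
  have hT : ∑' p : Nat.Primes, -Complex.log (1 - (p : ℂ) ^ (-((1 + δ : ℝ) : ℂ))) =
      ((∑' p : Nat.Primes, -log (1 - (p : ℝ) ^ (-(1 + δ))) : ℝ) : ℂ) := by
    rw [Complex.ofReal_tsum]
    refine tsum_congr fun p => ?_
    obtain ⟨h0, h1, h2⟩ := prime_rpow_le hδ.le p.prop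
    rw [Complex.ofReal_neg, Complex.ofReal_log (by linarith), Complex.ofReal_sub,
      Complex.ofReal_cpow (by positivity)]
    simp
  have hsum : ∑' p : Nat.Primes, -log (1 - (p : ℝ) ^ (-(1 + δ))) =
      ∑' p : Nat.Primes, (p : ℝ) ^ (-(1 + δ)) + ∑' p : Nat.Primes, eulerRem δ p := by
    rw [← Summable.tsum_add (Nat.Primes.summable_rpow.2 (by linarith))
      (Summable.of_norm_bounded summable_bound fun p => abs_eulerRem_le hδ.le p.prop)]
    refine tsum_congr fun p => ?_
    unfold eulerRem; ring
  simp only [Function.comp_apply]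
  rw [← hzeta, hT, hsum, ← Complex.ofReal_exp, ← Complex.ofReal_one, ← Complex.ofReal_sub,
    ← Complex.ofReal_mul, Complex.ofReal_re, log_mul (by linarith) (exp_pos _).ne', log_exp,
    show 1 + δ - 1 = δ by ring]
  ring

end

/-! ### Identification of the constant -/

lemma mertensC1_eq : mertensC1 = eulerMascheroniConstant - ∑' p : Nat.Primes, eulerRem 0 p := by
  unfold mertensC1 eulerRem
  congr 2
  ext p
  simp [rpow_neg_one]

theorem mertens_second_theorem :
    ∃ C : ℝ, ∀ x : ℝ, 3 ≤ x →
      |(∑ p ∈ (Finset.Iic ⌊x⌋₊).filter Nat.Prime, 1 / (p : ℝ)) -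
          (Real.log (Real.log x) + mertensC1)| ≤ C / Real.log x := by
  obtain ⟨c, C, hC0, hC⟩ := exists_mertens_const
  have hc : c = mertensC1 := by
    have h1 := (tendsto_tsum_primes_add_log hC0 hC).add tendsto_eulerRem
    have h2 := tendsto_nhds_unique h1 tendsto_log_zeta
    rw [mertensC1_eq]
    linarith
  refine ⟨C, fun x hx => ?_⟩
  have h := hC x (by linarith)
  rw [hc] at h
  have e : ∑ p ∈ (Finset.Iic ⌊x⌋₊).filter Nat.Prime, 1 / (p : ℝ) =
      ∑ k ∈ Finset.Icc 0 ⌊x⌋₊, primeRecip k := by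
    rw [Finset.sum_filter]
    rfl
  rw [e]
  exact h
end

section
/- The second derivative of the reciprocal gamma function 1/Γ at the point 1 equals γ² − π²/6. -/
/-!
Write `g = 1/Γ`. Since `g x = x * g (x + 1)`, Euler's reflection formula says
`x * g (1 + x) * g (1 - x) = sin (π x) / π` for every real `x`, the poles of `Γ` included.
The third derivative of the left side at `0` is three times the second derivative of
`g (1 + x) * g (1 - x)`, that is `3 * (2 * g'' 1 - 2 * (g' 1) ^ 2)` as `g 1 = 1`, and that of the
right side is `-π ^ 2`. As `g' 1 = -Γ' 1 = γ`, this determines `g'' 1`.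
-/

/-- On the real line `1/Γ` is the real part of an entire function. -/
lemma contDiff_inv_Gamma {n : WithTop ℕ∞} : ContDiff ℝ n (fun x : ℝ => (Real.Gamma x)⁻¹) := by
  have h : ContDiff ℂ n (fun s : ℂ => (Complex.Gamma s)⁻¹) :=
    Complex.differentiable_one_div_Gamma.contDiff
  have h2 : ContDiff ℝ n (fun x : ℝ => ((Complex.Gamma x)⁻¹).re) := h.real_of_complex
  convert h2 using 2 with x
  rw [Complex.Gamma_ofReal, ← Complex.ofReal_inv, Complex.ofReal_re]

/-- The reflection formula for `1/Γ`. With the junk value `Γ = 0` at the poles, it holds without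
exceptional points. -/
lemma inv_Gamma_reflection (x : ℝ) :
    x * ((Real.Gamma (1 + x))⁻¹ * (Real.Gamma (1 - x))⁻¹) = Real.sin (Real.pi * x) / Real.pi := by
  rcases eq_or_ne x 0 with rfl | hx
  · simp
  · rw [← inv_div, ← Real.Gamma_mul_Gamma_one_sub, add_comm 1 x, Real.Gamma_add_one hx]
    simp only [mul_inv]
    field_simp

theorem iteratedDeriv_two_one_div_Gamma_one :
    iteratedDeriv 2 (fun x : ℝ => (Real.Gamma x)⁻¹) 1 =
      Real.eulerMascheroniConstant ^ 2 - Real.pi ^ 2 / 6 := by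
  have hg1 : HasDerivAt (fun x : ℝ => (Real.Gamma x)⁻¹) Real.eulerMascheroniConstant 1 := by
    have h := Real.hasDerivAt_Gamma_one.inv (by simp)
    exact h.congr_deriv (by simp)
  have hval : (fun x : ℝ => (Real.Gamma x)⁻¹) 1 = 1 := by simp
  have hrefl := inv_Gamma_reflection
  have hsmooth := contDiff_inv_Gamma (n := 3)
  generalize hgdef : (fun x : ℝ => (Real.Gamma x)⁻¹) = g at *
  have hrefl : ∀ x : ℝ, x * (g (1 + x) * g (1 - x)) = Real.sin (Real.pi * x) / Real.pi := by
    intro x; rw [← hgdef]; exact hrefl x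
  -- The successive derivatives of `g`, then those of `G x = g (1 + x) * g (1 - x)`.
  have hd : ∀ k < 3, ∀ x, HasDerivAt (iteratedDeriv k g) (iteratedDeriv (k + 1) g x) x := by
    intro k hk x
    rw [iteratedDeriv_succ]
    exact (hsmooth.differentiable_iteratedDeriv k (by exact_mod_cast hk) x).hasDerivAt
  set g₁ := iteratedDeriv 1 g
  set g₂ := iteratedDeriv 2 g
  set g₃ := iteratedDeriv 3 g
  have d0 : ∀ x, HasDerivAt g (g₁ x) x := fun x => by
    have h := hd 0 (by norm_num) x
    rwa [iteratedDeriv_zero] at h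
  have d1 : ∀ x, HasDerivAt g₁ (g₂ x) x := hd 1 (by norm_num)
  have d2 : ∀ x, HasDerivAt g₂ (g₃ x) x := hd 2 (by norm_num)
  have hplus : ∀ {f f' : ℝ → ℝ}, (∀ x, HasDerivAt f (f' x) x) →
      ∀ x, HasDerivAt (fun x => f (1 + x)) (f' (1 + x)) x :=
    fun h x => (h (1 + x)).comp_const_add 1 x
  have hminus : ∀ {f f' : ℝ → ℝ}, (∀ x, HasDerivAt f (f' x) x) →
      ∀ x, HasDerivAt (fun x => f (1 - x)) (-f' (1 - x)) x :=
    fun h x => (h (1 - x)).comp_const_sub 1 x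
  obtain ⟨G₁, hG₁⟩ : ∃ G₁ : ℝ → ℝ, G₁ = fun x => g₁ (1 + x) * g (1 - x) - g (1 + x) * g₁ (1 - x) :=
    ⟨_, rfl⟩
  obtain ⟨G₂, hG₂⟩ : ∃ G₂ : ℝ → ℝ, G₂ = fun x =>
      g₂ (1 + x) * g (1 - x) - 2 * (g₁ (1 + x) * g₁ (1 - x)) + g (1 + x) * g₂ (1 - x) := ⟨_, rfl⟩
  have D0 : ∀ x, HasDerivAt (fun x => g (1 + x) * g (1 - x)) (G₁ x) x := fun x => by
    refine ((hplus d0 x).mul (hminus d0 x)).congr_deriv ?_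
    simp only [hG₁]; ring
  have D1 : ∀ x, HasDerivAt G₁ (G₂ x) x := fun x => by
    rw [hG₁]
    refine (((hplus d1 x).mul (hminus d0 x)).sub ((hplus d0 x).mul (hminus d1 x))).congr_deriv ?_
    simp only [hG₂]; ring
  have D2 : DifferentiableAt ℝ G₂ 0 := by
    rw [hG₂]
    exact ((((hplus d2 0).mul (hminus d0 0)).sub
      (((hplus d1 0).mul (hminus d1 0)).const_mul 2)).add
      ((hplus d0 0).mul (hminus d2 0))).differentiableAt
  have hpi := Real.pi_ne_zero
  have hlin : ∀ x : ℝ, HasDerivAt (fun x => Real.pi * x) Real.pi x := fun x => by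
    simpa using (hasDerivAt_id x).const_mul Real.pi
  -- Differentiate `x * G x = sin (π x) / π` three times, the last time only at `0`.
  have E1 : ∀ x, g (1 + x) * g (1 - x) + x * G₁ x = Real.cos (Real.pi * x) := fun x => by
    have hL := (hasDerivAt_id' x).mul (D0 x)
    have hR := (hlin x).sin.div_const Real.pi
    have hL' := hR.congr_of_eventuallyEq (Filter.Eventually.of_forall hrefl)
    have := hL.unique hL'
    rw [mul_div_assoc, div_self hpi, mul_one, one_mul] at this
    exact this
  have E2 : ∀ x, 2 * G₁ x + x * G₂ x = -(Real.pi * Real.sin (Real.pi * x)) := fun x => by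
    have hL := (D0 x).add ((hasDerivAt_id' x).mul (D1 x))
    have hL' := (hlin x).cos.congr_of_eventuallyEq (Filter.Eventually.of_forall E1)
    have := hL.unique hL'
    linarith
  have E3 : 3 * G₂ 0 = -Real.pi ^ 2 := by
    have hL := ((D1 0).const_mul 2).add ((hasDerivAt_id' (0 : ℝ)).mul D2.hasDerivAt)
    have hR := ((hlin 0).sin.const_mul Real.pi).neg
    have hL' := hR.congr_of_eventuallyEq (Filter.Eventually.of_forall E2)
    have := hL.unique hL'
    simp at this
    linarith
  have hγ : g₁ 1 = Real.eulerMascheroniConstant := (d0 1).unique hg1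
  simp only [hG₂, add_zero, sub_zero, hγ, hval] at E3
  linarith
end
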